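/- Let C be an absolutely irreducible plane algebraic curve of degree 4 over F_q with simple tangency. Then there exist constants c, ε > 0 such that, after possibly replacing F_q by a finite extension, the set P := C(F_q) of F_q-points of C has cq + O(√q) elements, spans at least ε q^2 lines containing exactly 4 points of P (4-rich lines), and contains no five collinear points. -/

import Mathlib

open MvPolynomial Filter

set_option linter.unusedSectionVars false

namespace IncidenceProb

variable {K : Type} [Field K] {ι κ : Type} [Fintype ι] [Fintype κ]

/-- The common zero set in `K^ι` of a family of polynomials. -/
def zeroLocus (S : Set (MvPolynomial ι K)) : Set (ι → K) :=
  {x | ∀ p ∈ S, eval x p = 0}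

/-- The ideal of all polynomials vanishing on a subset of `K^ι`. -/
def vanishingIdeal (V : Set (ι → K)) : Ideal (MvPolynomial ι K) where
  carrier := {p | ∀ x ∈ V, eval x p = 0}
  add_mem' := by
    intro a b ha hb x hx
    simp only [Set.mem_setOf_eq] at ha hb ⊢
    simp [map_add, ha x hx, hb x hx]
  zero_mem' := by intro x hx; simp
  smul_mem' := by
    intro c p hp x hx
    simp only [Set.mem_setOf_eq] at hp ⊢
    simp [smul_eq_mul, hp x hx]

lemma mem_vanishingIdeal {V : Set (ι → K)} {p : MvPolynomial ι K} :
    p ∈ vanishingIdeal V ↔ ∀ x ∈ V, eval x p = 0 := Iff.rfl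

/-- A subset of `K^ι` is an (affine) algebraic set if it is the zero locus of a
family of polynomials. -/
def IsAlgebraicSet (V : Set (ι → K)) : Prop :=
  ∃ S : Set (MvPolynomial ι K), V = zeroLocus S

/-- The coordinate ring of a subset of affine space. -/
abbrev coordRing (V : Set (ι → K)) : Type :=
  MvPolynomial ι K ⧸ vanishingIdeal V

/-- The Zariski topology on affine space `K^ι`: the open sets are generated by the
complements of hypersurfaces. -/
def zariskiTopology (K ι : Type) [Field K] : TopologicalSpace (ι → K) :=
  TopologicalSpace.generateFrom
    {U | ∃ p : MvPolynomial ι K, U = {x | eval x p ≠ 0}}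

/-- Irreducibility of a subset of affine space with respect to the Zariski topology. -/
def IsIrreducibleSet (V : Set (ι → K)) : Prop :=
  letI := zariskiTopology K ι
  IsIrreducible V

/-- The irreducible components of a subset of affine space: the maximal irreducible
subsets (with respect to the Zariski topology). -/
def irreducibleComponentsOf (V : Set (ι → K)) : Set (Set (ι → K)) :=
  letI := zariskiTopology K ι
  {Z | Maximal (fun T => T ⊆ V ∧ IsIrreducible T) Z}

end IncidenceProb

namespace IncidenceProb

/-- The projective plane over `K`. -/
abbrev P2 (K : Type) [Field K] : Type := Projectivization K (Fin 3 → K)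

variable {K : Type} [Field K]

/-- A point of the projective plane lies on the curve cut out by the homogeneous
polynomial `Q`. -/
def OnCurve (Q : MvPolynomial (Fin 3) K) (x : P2 K) : Prop :=
  MvPolynomial.eval x.rep Q = 0

/-- Incidence between a point `L` of the dual projective plane (i.e. a line) and a
point `x` of the projective plane. -/
def Incid (L x : P2 K) : Prop :=
  ∑ i, L.rep i * x.rep i = 0

/-- The probability that a random line of `ℙ²(K)` meets the plane curve `{Q = 0}` in
exactly `k` points: the number of such lines divided by `q² + q + 1`, the total number
of lines of `ℙ²(K)` (where `q = |K|`). -/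
noncomputable def probLine (K : Type) [Field K] [Fintype K]
    (Q : MvPolynomial (Fin 3) K) (k : ℕ) : ℝ :=
  (Nat.card {L : P2 K // Nat.card {x : P2 K // OnCurve Q x ∧ Incid L x} = k} : ℝ) /
    ((Fintype.card K : ℝ) ^ 2 + (Fintype.card K : ℝ) + 1)

/-- Simple tangency for the plane curve of degree `d` cut out by `Q` (to be applied over
an algebraically closed field): there is a line meeting the curve in exactly `d - 1`
points, all of them smooth points of the curve, which is transversal at all of them
except exactly one, where it is tangent.  (At a smooth point, the line `a` is tangent to
the curve exactly when the gradient of `Q` there is proportional to `a`; the tangency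
point then has intersection multiplicity `2`, since the total intersection multiplicity
is `d`.) -/
def SimpleTangencyPlane (d : ℕ) (Q : MvPolynomial (Fin 3) K) : Prop :=
  ∃ a : Fin 3 → K, a ≠ 0 ∧
    Nat.card {x : P2 K // OnCurve Q x ∧ (∑ i, a i * x.rep i = 0)} = d - 1 ∧
    (∀ x : P2 K, OnCurve Q x → (∑ i, a i * x.rep i = 0) →
      (fun r => MvPolynomial.eval x.rep (MvPolynomial.pderiv r Q)) ≠ 0) ∧
    ∃ x₀ : P2 K, (OnCurve Q x₀ ∧ (∑ i, a i * x₀.rep i = 0)) ∧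
      (∃ c : K, (fun r => MvPolynomial.eval x₀.rep (MvPolynomial.pderiv r Q)) = c • a) ∧
      ∀ x : P2 K, OnCurve Q x → (∑ i, a i * x.rep i = 0) →
        (∃ c : K, (fun r => MvPolynomial.eval x.rep (MvPolynomial.pderiv r Q)) = c • a) →
        x = x₀

end IncidenceProb


open MvPolynomial Filter
set_option linter.unusedSectionVars false
set_option linter.style.haveILetI false

namespace QC
open scoped Polynomial

structure Filt (k A : Type*) [Field k] [CommRing A] [Algebra k A] where
  V : ℕ → Submodule k A
  D : ℕ
  c : ℕ
  mono : Monotone V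
  exh : ∀ a, ∃ n, a ∈ V n
  mul : ∀ {m n a b}, a ∈ V m → b ∈ V n → a * b ∈ V (m + n + c)
  fd : ∀ n, FiniteDimensional k (V n)
  rank : ∀ n, Module.finrank k (V n) = D * (n + 1)

section FC
variable {k A : Type*} [Field k] [CommRing A] [Algebra k A] [IsDomain A] (S : Filt k A)

lemma fc {R : Type*} [AddCommGroup R] [Module k R] [FiniteDimensional k R]
    (π : A →ₗ[k] R) (hπ : Function.Surjective π) {m : ℕ} {h : A} (hh : h ∈ S.V m)
    (h0 : h ≠ 0) (hk : ∀ a, π (h * a) = 0) : Module.finrank k R ≤ S.D * (m + S.c) := by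
  let f : ℕ →o Submodule k R := ⟨fun n => (S.V n).map π, fun a b hab => Submodule.map_mono (S.mono hab)⟩
  obtain ⟨n, hn⟩ := (monotone_stabilizes_iff_noetherian (R := k) (M := R)).2 inferInstance f
  have htop : ∀ n' ≥ n, ∀ r : R, ∃ a ∈ S.V n', π a = r := by
    intro n' hn' r
    obtain ⟨a, rfl⟩ := hπ r
    obtain ⟨j, hj⟩ := S.exh a
    have h1 : π a ∈ f (max j n) := ⟨a, S.mono (le_max_left _ _) hj, rfl⟩
    rw [← hn _ (le_max_right _ _), hn n' hn'] at h1
    exact h1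
  obtain ⟨j, hj⟩ : ∃ j, n ≤ m + j + S.c := ⟨n, by omega⟩
  have := S.fd
  let π' : S.V (m + j + S.c) →ₗ[k] R := π.domRestrict _
  have hs : Function.Surjective π' := by
    intro r
    obtain ⟨a, ha, hr⟩ := htop _ hj r
    exact ⟨⟨a, ha⟩, hr⟩
  let μ : S.V j →ₗ[k] LinearMap.ker π' :=
    LinearMap.codRestrict _ (LinearMap.codRestrict _ ((LinearMap.mulLeft k h).domRestrict (S.V j))
      (fun a => S.mul hh a.2)) (fun a => by
        simp only [LinearMap.mem_ker, π', LinearMap.domRestrict_apply]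
        exact hk a)
  have hμ : Function.Injective μ := by
    intro a b hab
    have := congrArg (fun z : LinearMap.ker π' => ((z : S.V (m + j + S.c)) : A)) hab
    exact Subtype.ext (mul_left_cancel₀ h0 this)
  have h1 := LinearMap.finrank_le_finrank_of_injective hμ
  have h2 := LinearMap.finrank_range_add_finrank_ker π'
  rw [LinearMap.range_eq_top.2 hs, finrank_top] at h2
  rw [S.rank] at h1 h2
  have : S.D * (m + j + S.c + 1) = S.D * (m + S.c) + S.D * (j + 1) := by ring
  omega

lemma dedekind_surj {ι' : Type*} [Fintype ι'] (ψ : ι' → (A →ₐ[k] k)) (hψ : Function.Injective ψ) :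
    Function.Surjective (LinearMap.pi (fun i => (ψ i).toLinearMap) : A →ₗ[k] (ι' → k)) := by
  classical
  rw [← LinearMap.range_eq_top]
  by_contra hne
  obtain ⟨f, hf0, hf⟩ := Submodule.exists_le_ker_of_lt_top _ (lt_top_iff_ne_top.2 hne)
  have hli := (linearIndependent_monoidHom A k).comp (fun i => ((ψ i : A →ₐ[k] k) : A →* k))
    (fun i j hij => hψ (AlgHom.ext fun a => DFunLike.congr_fun hij a))
  rw [Fintype.linearIndependent_iff] at hli
  have h0 := hli (fun i => f (Pi.single i 1)) (by
    ext a
    have h1 : f (fun i => ψ i a) = 0 := hf ⟨a, rfl⟩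
    rw [LinearMap.pi_apply_eq_sum_univ f] at h1
    have h2 : ∀ i : ι', (fun j => if i = j then (1 : k) else 0) = Pi.single i 1 := by
      intro i; ext j; simp [Pi.single_apply, eq_comm]
    simp only [h2] at h1
    simpa [mul_comm] using h1)
  apply hf0
  ext i
  simpa using h0 i

lemma fc_points {ι' : Type*} [Fintype ι'] (ψ : ι' → (A →ₐ[k] k)) (hψ : Function.Injective ψ)
    {m : ℕ} {h : A} (hh : h ∈ S.V m) (h0 : h ≠ 0) (hk : ∀ i, ψ i h = 0) :
    Fintype.card ι' ≤ S.D * (m + S.c) := by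
  have := fc S _ (dedekind_surj ψ hψ) hh h0 (by intro a; ext i; simp [hk])
  simpa using this

lemma fc_order (e : A →ₐ[k] PowerSeries k) (x : A) (hx : e x = PowerSeries.X) {m r : ℕ} {h : A}
    (hh : h ∈ S.V m) (h0 : h ≠ 0) (hk : PowerSeries.X ^ r ∣ e h) : r ≤ S.D * (m + S.c) := by
  have := fc S (LinearMap.pi (fun i : Fin r => (PowerSeries.coeff (R := k) (i : ℕ)).comp e.toLinearMap)
    : A →ₗ[k] (Fin r → k)) ?_ hh h0 ?_
  · simpa using this
  · intro w
    refine ⟨∑ i, w i • x ^ (i : ℕ), ?_⟩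
    ext j
    simp [hx, PowerSeries.coeff_X_pow, Fin.val_inj]
  · intro a
    ext i
    have h1 : PowerSeries.X ^ r ∣ e (h * a) := by rw [map_mul]; exact hk.mul_right _
    rw [PowerSeries.X_pow_dvd_iff] at h1
    simpa using h1 i i.2

lemma factor_family {k : Type*} [Field k] {M : Type*} [Fintype M] (g : M → PowerSeries k)
    (hg : ∃ i, g i ≠ 0) : ∃ (s : ℕ) (u : M → PowerSeries k), (∀ i, g i = PowerSeries.X ^ s * u i) ∧
      ∃ i, PowerSeries.constantCoeff (u i) ≠ 0 := by
  classical
  obtain ⟨j, hj⟩ := hg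
  obtain ⟨i0, -, hi0⟩ := Finset.exists_min_image Finset.univ (fun i => (g i).order) ⟨j, Finset.mem_univ _⟩
  have hne : g i0 ≠ 0 := by
    intro h
    have := hi0 j (Finset.mem_univ _)
    rw [h, PowerSeries.order_zero, top_le_iff, PowerSeries.order_eq_top] at this
    exact hj this
  obtain ⟨s, hs⟩ := ENat.ne_top_iff_exists.1 (mt PowerSeries.order_eq_top.1 hne)
  have hd : ∀ i, PowerSeries.X ^ s ∣ g i := by
    intro i
    rw [PowerSeries.X_pow_dvd_iff]
    intro n hn
    apply PowerSeries.coeff_of_lt_order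
    refine lt_of_lt_of_le ?_ (hi0 i (Finset.mem_univ _))
    rw [← hs]; exact_mod_cast hn
  choose u hu using hd
  refine ⟨s, u, hu, i0, fun h => ?_⟩
  obtain ⟨w, hw⟩ := PowerSeries.X_dvd_iff.2 h
  have : (g i0).coeff s = 0 := by
    rw [hu, PowerSeries.coeff_X_pow_mul', if_pos le_rfl]; simpa using h
  exact PowerSeries.coeff_order hne (by rw [← hs]; simpa using this)

lemma stepanov (p : ℕ) [Fact p.Prime] [CharP k p] (e : A →ₐ[k] PowerSeries k) (x : A)
    (hx : e x = PowerSeries.X) {a b : ℕ}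
    (φ : A →ₐ[k] A)
    (hφ : ∀ n, ∀ g ∈ S.V n, ∃ h ∈ S.V n, φ g = h ^ (p ^ a * p ^ b) ∧ (h = 0 → g = 0))
    {ι' : Type*} [Fintype ι'] (ψ : ι' → (A →ₐ[k] k)) (hψ : Function.Injective ψ)
    (W : ℕ → Submodule k (ι' → k)) (r : ℕ) (hW : ∀ n, Module.finrank k (W n) ≤ S.D * r * (n + 1))
    (hWm : ∀ {m n f g}, f ∈ S.V m → g ∈ S.V n → (fun i => ψ i f * ψ i (φ g)) ∈ W (m + n + S.c))
    (l n : ℕ) (h1 : S.D * (l + S.c) < p ^ b)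
    (h2 : S.D * r * (p ^ a * (l + S.c) + n + S.c + 1) < S.D * (l + 1) * (S.D * (n + 1))) :
    Fintype.card ι' ≤ S.D * (l + p ^ b * (n + S.c) + 2 * S.c) := by
  classical
  have := S.fd
  have : CharP A p := charP_of_injective_algebraMap (algebraMap k A).injective p
  have : CharP (PowerSeries k) p :=
    charP_of_injective_algebraMap (algebraMap k (PowerSeries k)).injective p
  have hpow : ∀ {m f} (t : ℕ), f ∈ S.V m → 0 < t → f ^ t ∈ S.V (t * (m + S.c)) := by
    intro m f t hf ht
    obtain ⟨t, rfl⟩ : ∃ t', t = t' + 1 := ⟨t - 1, by omega⟩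
    clear ht
    induction t with
    | zero => simpa using S.mono (by simp) hf
    | succ t ih =>
      have := S.mul ih hf
      rw [← pow_succ] at this
      convert this using 2
      ring
  let bs := Module.finBasis k (S.V l)
  have hM : Module.finrank k (S.V l) = S.D * (l + 1) := S.rank l
  set M := Module.finrank k (S.V l)
  have hpp : ∀ t, 0 < p ^ t := fun t => pow_pos (Fact.out : p.Prime).pos t
  -- the evaluation map
  let Φ : (Fin M → S.V n) →ₗ[k] W (p ^ a * (l + S.c) + n + S.c) :=
    LinearMap.codRestrict _
      (∑ j : Fin M, LinearMap.pi (fun i => (ψ i ((bs j : A) ^ (p ^ a))) •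
        ((ψ i).toLinearMap.comp (φ.toLinearMap.comp ((S.V n).subtype.comp (LinearMap.proj j))))))
      (fun g => by
        rw [LinearMap.sum_apply]
        refine Submodule.sum_mem _ fun j _ => ?_
        exact hWm (hpow _ (bs j).2 (hpp a)) (g j).2)
  have hΦ : ∀ g i, (Φ g : ι' → k) i = ∑ j, ψ i ((bs j : A) ^ (p ^ a)) * ψ i (φ (g j)) := by
    intro g i
    simp [Φ, LinearMap.sum_apply, Finset.sum_apply]
  have hker : LinearMap.ker Φ ≠ ⊥ := by
    apply LinearMap.ker_ne_bot_of_finrank_lt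
    rw [Module.finrank_pi_fintype]
    simp only [S.rank, Finset.sum_const, Finset.card_univ, Fintype.card_fin, smul_eq_mul]
    rw [hM]
    exact lt_of_le_of_lt (hW _) h2
  obtain ⟨g, hg, hg0⟩ := (Submodule.ne_bot_iff _).1 hker
  have hg1 : ∀ i, ∑ j, ψ i ((bs j : A) ^ (p ^ a)) * ψ i (φ (g j)) = 0 := by
    intro i
    rw [← hΦ, LinearMap.mem_ker.1 hg]; rfl
  choose h hhV hhe hh0 using fun j => hφ n (g j) (g j).2
  set H := ∑ j, (bs j : A) * (h j) ^ (p ^ b) with hH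
  have hHV : H ∈ S.V (l + p ^ b * (n + S.c) + S.c) := by
    refine Submodule.sum_mem _ fun j _ => S.mul (bs j).2 (hpow _ (hhV j) (hpp b))
  have hHk : ∀ i, ψ i H = 0 := by
    intro i
    have : ψ i H ^ (p ^ a) = 0 := by
      rw [← map_pow, hH, sum_pow_char_pow, map_sum]
      rw [← hg1 i]
      refine Finset.sum_congr rfl fun j _ => ?_
      rw [hhe, mul_pow, map_mul, ← pow_mul, mul_comm (p ^ b)]
    exact pow_eq_zero_iff (hpp a).ne' |>.1 this
  have hH0 : H ≠ 0 := by
    intro hHz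
    have hinj : ∀ y, e y = 0 → y = 0 := by
      intro y hy
      by_contra hy0
      obtain ⟨m, hm⟩ := S.exh y
      have := fc_order S e x hx (r := S.D * (m + S.c) + 1) hm hy0 (by rw [hy]; exact dvd_zero _)
      omega
    have hne : ∃ j, e (h j) ≠ 0 := by
      by_contra hcon
      push Not at hcon
      exact hg0 (funext fun j => Subtype.ext (hh0 j (hinj _ (hcon j))))
    obtain ⟨s, u, hu, i0, hi0⟩ := factor_family _ hne
    have h3 : ∑ j, e (bs j : A) * (u j) ^ (p ^ b) = 0 := by
      have h4 : (PowerSeries.X ^ s) ^ (p ^ b) * ∑ j, e (bs j : A) * (u j) ^ (p ^ b) = 0 := by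
        rw [← map_zero e, ← hHz, hH, map_sum, Finset.mul_sum]
        refine Finset.sum_congr rfl fun j _ => ?_
        rw [map_mul, map_pow, hu, mul_pow]; ring
      refine (mul_eq_zero.1 h4).resolve_left (pow_ne_zero _ (pow_ne_zero _ PowerSeries.X_ne_zero))
    set G := ∑ j, (PowerSeries.constantCoeff (u j)) ^ (p ^ b) • bs j with hG
    have hG0 : (G : A) ≠ 0 := by
      intro hGz
      have := Fintype.linearIndependent_iff.1 bs.linearIndependent _ (Subtype.ext hGz) i0
      exact hi0 (pow_eq_zero_iff (hpp b).ne' |>.1 this)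
    have hd : PowerSeries.X ^ (p ^ b) ∣ e (G : A) := by
      have hw : ∀ j, ∃ w : PowerSeries k, u j = algebraMap k _ (PowerSeries.constantCoeff (u j)) + PowerSeries.X * w := by
        intro j
        obtain ⟨w, hw⟩ := PowerSeries.X_dvd_iff.2 (show PowerSeries.constantCoeff
          (u j - algebraMap k _ (PowerSeries.constantCoeff (u j))) = 0 by
            simp [PowerSeries.algebraMap_apply])
        exact ⟨w, by rw [← hw]; ring⟩
      choose w hw using hw
      have h5 : e (G : A) = - (PowerSeries.X ^ (p ^ b) * ∑ j, e (bs j : A) * (w j) ^ (p ^ b)) := by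
        rw [eq_neg_iff_add_eq_zero, ← h3, hG, Submodule.coe_sum, map_sum, Finset.mul_sum,
          ← Finset.sum_add_distrib]
        refine Finset.sum_congr rfl fun j _ => ?_
        rw [Submodule.coe_smul, map_smul, Algebra.smul_def]
        conv_rhs => rw [hw j, add_pow_char_pow, mul_pow, ← map_pow]
        ring
      rw [h5]
      exact (dvd_mul_right _ _).neg_right
    have := fc_order S e x hx G.2 hG0 hd
    omega
  refine (fc_points S ψ hψ hHV hH0 hHk).trans (le_of_eq ?_)
  ring
end FC
end QC

open MvPolynomial Filter
namespace QC

lemma numerics (D c r p : ℕ) (hD : 1 ≤ D) (hp : 1 ≤ p) : ∃ C : ℕ, ∀ P P' : ℕ, P ≤ P' → P' ≤ p * P → C ≤ P' →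
    ∃ l n : ℕ, D * (l + c) < P' ∧
      D * r * (P * (l + c) + n + c + 1) < D * (l + 1) * (D * (n + 1)) ∧
      D * (l + P' * (n + c) + 2 * c) ≤ r * (P * P') + C * P' := by
  obtain ⟨E, hE⟩ : ∃ E, E = c * r + r ^ 2 + 1 := ⟨_, rfl⟩
  obtain ⟨B, hB⟩ : ∃ B, B = r * (E + c + 1) + (c + 1) * D * E := ⟨_, rfl⟩
  obtain ⟨C, hC⟩ : ∃ C, C = p * (B + 1) + D * (c + 2) + 1 + D * (E + c) + 2 * D * c := ⟨_, rfl⟩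
  refine ⟨C, fun P P' h1 h2 h3 => ?_⟩
  have hPB : B + 1 ≤ P := by
    by_contra hlt
    have : p * P < p * (B + 1) := Nat.mul_lt_mul_of_pos_left (by omega) (by omega)
    omega
  obtain ⟨u, v, hv, hu⟩ : ∃ u v, v < D ∧ P' = D * u + v :=
    ⟨P' / D, P' % D, Nat.mod_lt _ (by omega), (Nat.div_add_mod _ _).symm⟩
  obtain ⟨w, z, hz, hw⟩ : ∃ w z, z < D ∧ r * P = D * w + z :=
    ⟨r * P / D, r * P % D, Nat.mod_lt _ (by omega), (Nat.div_add_mod _ _).symm⟩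
  have huc : c + 1 ≤ u := by
    by_contra hlt
    have : D * u ≤ D * c := Nat.mul_le_mul_left _ (by omega)
    have : D * (c + 2) = D * c + D + D := by ring
    omega
  obtain ⟨l, rfl⟩ : ∃ l, u = l + c + 1 := ⟨u - c - 1, by omega⟩
  have hwr : w ≤ r * P := by
    have : 1 * w ≤ D * w := Nat.mul_le_mul_right _ hD
    omega
  have hP'1 : 1 ≤ P' := by omega
  refine ⟨l, w + E, ?_, ?_, ?_⟩
  · nlinarith
  · have key : r * (P * (l + c) + (w + E) + c + 1) < (l + 1) * (D * (w + E + 1)) := by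
      have e1 : r * P + D * E + 1 ≤ D * (w + E + 1) := by nlinarith
      have e2 : P * E ≤ ((l + 1) * D) * E + (c + 1) * D * E := by
        have : P ≤ (l + 1) * D + (c + 1) * D := by nlinarith
        calc P * E ≤ ((l + 1) * D + (c + 1) * D) * E := Nat.mul_le_mul_right _ this
          _ = _ := by ring
      have e3 : (l + 1) * (r * P + D * E + 1) ≤ (l + 1) * (D * (w + E + 1)) :=
        Nat.mul_le_mul_left _ e1
      have e4 : r * w ≤ r * (r * P) := Nat.mul_le_mul_left _ hwr
      have e5 : P * E = P * c * r + P * r ^ 2 + P := by rw [hE]; ring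
      have e6 : 0 ≤ r * P := Nat.zero_le _
      nlinarith
    calc D * r * (P * (l + c) + (w + E) + c + 1) = D * (r * (P * (l + c) + (w + E) + c + 1)) := by ring
      _ < D * ((l + 1) * (D * (w + E + 1))) := Nat.mul_lt_mul_of_pos_left key (by omega)
      _ = _ := by ring
  · have e1 : D * l ≤ P' := by nlinarith
    have e2 : D * w * P' ≤ r * P * P' := Nat.mul_le_mul_right _ (by omega)
    have e3 : (1 + D * (E + c) + 2 * D * c) * P' ≤ C * P' := Nat.mul_le_mul_right _ (by omega)
    have e4 : 2 * D * c * 1 ≤ 2 * D * c * P' := Nat.mul_le_mul_left _ hP'1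
    nlinarith

end QC

open MvPolynomial Filter
set_option linter.unusedSectionVars false
namespace QC
open scoped Polynomial

section ring
variable {k : Type*} [Field k] (f : k[X][X])

noncomputable def mkL : k[X][X] →ₗ[k] AdjoinRoot f :=
  (AdjoinRoot.mkₐ f).toLinearMap.restrictScalars k

lemma mkL_apply (G : k[X][X]) : mkL f G = AdjoinRoot.mk f G := rfl

noncomputable def BL (d n : ℕ) : (Fin d → Polynomial.degreeLT k (n + 1)) →ₗ[k] k[X][X] :=
  ∑ j : Fin d, ((Polynomial.monomial (R := k[X]) (j : ℕ)).restrictScalars k).comp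
    ((Polynomial.degreeLT k (n + 1)).subtype.comp (LinearMap.proj j))

lemma BL_apply (d n : ℕ) (g) : BL (k := k) d n g = ∑ j : Fin d, Polynomial.monomial (j : ℕ) (g j : k[X]) := by
  simp [BL]

lemma BL_coeff (d n : ℕ) (g) (i : ℕ) :
    (BL (k := k) d n g).coeff i = if h : i < d then (g ⟨i, h⟩ : k[X]) else 0 := by
  rw [BL_apply, Polynomial.finsetSum_coeff]
  simp only [Polynomial.coeff_monomial]
  split_ifs with h
  · rw [Finset.sum_eq_single ⟨i, h⟩] <;> simp
    intro b hb hb'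
    exact absurd (Fin.ext hb') hb
  · apply Finset.sum_eq_zero
    intro j _
    rw [if_neg]
    intro h'; exact h (h' ▸ j.2)

noncomputable def VV (n : ℕ) : Submodule k (AdjoinRoot f) :=
  LinearMap.range ((mkL f).comp (BL f.natDegree n))

variable {f}
lemma degLT_iff {n : ℕ} {g : k[X]} : g ∈ Polynomial.degreeLT k (n + 1) ↔ g.natDegree ≤ n := by
  rw [Polynomial.degreeLT_succ_eq_degreeLE, Polynomial.mem_degreeLE, Polynomial.natDegree_le_iff_degree_le]

lemma mem_VV (hd : 0 < f.natDegree) {n : ℕ} {a : AdjoinRoot f} : a ∈ VV f n ↔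
    ∃ G : k[X][X], G.natDegree < f.natDegree ∧ (∀ i, (G.coeff i).natDegree ≤ n) ∧ AdjoinRoot.mk f G = a := by
  constructor
  · rintro ⟨g, rfl⟩
    refine ⟨BL f.natDegree n g, ?_, ?_, rfl⟩
    · rw [Nat.lt_iff_le_pred hd, Polynomial.natDegree_le_iff_coeff_eq_zero]
      intro i hi
      rw [BL_coeff, dif_neg (by grind)]
    · intro i
      rw [BL_coeff]
      split_ifs with h
      · exact degLT_iff.1 (g ⟨i, h⟩).2
      · simp
  · rintro ⟨G, h1, h2, rfl⟩
    refine ⟨fun j => ⟨G.coeff j, degLT_iff.2 (h2 _)⟩, ?_⟩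
    rw [LinearMap.comp_apply, mkL_apply]
    congr 1
    ext1 i
    rw [BL_coeff]
    split_ifs with h
    · rfl
    · rw [Polynomial.coeff_eq_zero_of_natDegree_lt (by omega)]

lemma VV_inj (hf : f.Monic) (hd : 0 < f.natDegree) (n : ℕ) :
    Function.Injective ((mkL f).comp (BL f.natDegree n)) := by
  rw [← LinearMap.ker_eq_bot, LinearMap.ker_eq_bot']
  intro g hg
  have h0 : BL f.natDegree n g = 0 := by
    by_contra hne
    refine AdjoinRoot.mk_ne_zero_of_natDegree_lt hf hne ?_ hg
    rw [Nat.lt_iff_le_pred hd, Polynomial.natDegree_le_iff_coeff_eq_zero]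
    intro i hi
    rw [BL_coeff, dif_neg (by grind)]
  ext1 j
  have := BL_coeff f.natDegree n g j
  rw [h0, dif_pos j.2] at this
  exact Subtype.ext this.symm

lemma VV_rank (hf : f.Monic) (hd : 0 < f.natDegree) (n : ℕ) :
    Module.finrank k (VV f n) = f.natDegree * (n + 1) := by
  rw [VV, LinearMap.finrank_range_of_inj (VV_inj hf hd n), Module.finrank_pi_fintype]
  simp [LinearEquiv.finrank_eq (Polynomial.degreeLTEquiv k (n + 1))]

instance VV_fd (n : ℕ) : FiniteDimensional k (VV f n) := by
  have := Module.Finite.equiv (Polynomial.degreeLTEquiv k (n + 1)).symm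
  unfold VV; infer_instance

lemma VV_mono (hd : 0 < f.natDegree) : Monotone (VV f) := by
  intro m n hmn a ha
  rw [mem_VV hd] at ha ⊢
  obtain ⟨G, h1, h2, h3⟩ := ha
  exact ⟨G, h1, fun i => (h2 i).trans hmn, h3⟩

lemma VV_exh (hf : f.Monic) (hd : 0 < f.natDegree) (a : AdjoinRoot f) : ∃ n, a ∈ VV f n := by
  obtain ⟨G, rfl⟩ := AdjoinRoot.mk_surjective a
  refine ⟨∑ i ∈ (G %ₘ f).support, ((G %ₘ f).coeff i).natDegree, (mem_VV hd).2 ⟨G %ₘ f, ?_, ?_, ?_⟩⟩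
  · exact Polynomial.natDegree_modByMonic_lt _ hf (by rintro rfl; simp at hd)
  · intro i
    by_cases hi : i ∈ (G %ₘ f).support
    · exact Finset.single_le_sum (f := fun i => ((G %ₘ f).coeff i).natDegree) (fun _ _ => Nat.zero_le _) hi
    · rw [Polynomial.notMem_support_iff.1 hi]; simp
  · exact AdjoinRoot.mk_leftInverse hf (AdjoinRoot.mk f G) ▸ by
      rw [AdjoinRoot.modByMonicHom_mk]

lemma of_mul_VV (hd : 0 < f.natDegree) {n t : ℕ} {a : AdjoinRoot f} (ha : a ∈ VV f n) {g : k[X]}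
    (hg : g.natDegree ≤ t) : AdjoinRoot.of f g * a ∈ VV f (n + t) := by
  rw [mem_VV hd] at ha ⊢
  obtain ⟨G, h1, h2, rfl⟩ := ha
  refine ⟨Polynomial.C g * G, ?_, ?_, by simp⟩
  · exact (Polynomial.natDegree_C_mul_le _ _).trans_lt h1
  · intro i
    rw [Polynomial.coeff_C_mul]
    refine Polynomial.natDegree_mul_le.trans ?_
    have := h2 i; omega

lemma rootpow_VV (hd : 0 < f.natDegree) {j : ℕ} (hj : j < f.natDegree) :
    AdjoinRoot.root f ^ j ∈ VV f 0 := by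
  rw [mem_VV hd]
  refine ⟨Polynomial.X ^ j, by simpa using hj, ?_, by simp⟩
  intro i
  rw [Polynomial.coeff_X_pow]; split_ifs <;> simp

lemma mk_eq_sum (G : k[X][X]) {D : ℕ} (h : G.natDegree < D) :
    AdjoinRoot.mk f G = ∑ i ∈ Finset.range D, AdjoinRoot.of f (G.coeff i) * AdjoinRoot.root f ^ i := by
  conv_lhs => rw [G.as_sum_range' D h]
  simp [← Polynomial.C_mul_X_pow_eq_monomial]

lemma rootpow_d_VV (hf : f.Monic) (hd : 0 < f.natDegree) {e : ℕ} (he : ∀ i, (f.coeff i).natDegree ≤ e) :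
    AdjoinRoot.root f ^ f.natDegree ∈ VV f e := by
  have h := mk_eq_sum (f := f) f (Nat.lt_succ_self _)
  rw [AdjoinRoot.mk_self, Finset.sum_range_succ, hf.coeff_natDegree, map_one, one_mul] at h
  rw [eq_neg_iff_add_eq_zero.2 ((add_comm _ _).trans h.symm)]
  refine Submodule.neg_mem _ (Submodule.sum_mem _ fun i hi => ?_)
  simpa using of_mul_VV hd (rootpow_VV hd (Finset.mem_range.1 hi)) (he i)

lemma root_mul_VV (hf : f.Monic) (hd : 0 < f.natDegree) {e : ℕ} (he : ∀ i, (f.coeff i).natDegree ≤ e)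
    {n : ℕ} {a : AdjoinRoot f} (ha : a ∈ VV f n) : AdjoinRoot.root f * a ∈ VV f (n + e) := by
  obtain ⟨G, h1, h2, rfl⟩ := (mem_VV hd).1 ha
  rw [mk_eq_sum G h1, Finset.mul_sum]
  refine Submodule.sum_mem _ fun i hi => ?_
  have : AdjoinRoot.root f * (AdjoinRoot.of f (G.coeff i) * AdjoinRoot.root f ^ i) =
    AdjoinRoot.of f (G.coeff i) * AdjoinRoot.root f ^ (i + 1) := by ring
  rw [this, add_comm n e]
  refine of_mul_VV hd ?_ (h2 i)
  rcases Nat.lt_or_ge (i + 1) f.natDegree with h | h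
  · exact VV_mono hd (Nat.zero_le _) (rootpow_VV hd h)
  · have : i + 1 = f.natDegree := by have := Finset.mem_range.1 hi; omega
    rw [this]; exact rootpow_d_VV hf hd he

lemma rootpow_mul_VV (hf : f.Monic) (hd : 0 < f.natDegree) {e : ℕ} (he : ∀ i, (f.coeff i).natDegree ≤ e)
    {n : ℕ} {a : AdjoinRoot f} (ha : a ∈ VV f n) (j : ℕ) :
    AdjoinRoot.root f ^ j * a ∈ VV f (n + j * e) := by
  induction j with
  | zero => simpa using ha
  | succ j ih =>
    have := root_mul_VV hf hd he ih
    rw [← mul_assoc, ← pow_succ'] at this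
    convert this using 2
    ring

lemma VV_mul (hf : f.Monic) (hd : 0 < f.natDegree) {e : ℕ} (he : ∀ i, (f.coeff i).natDegree ≤ e)
    {m n : ℕ} {a b : AdjoinRoot f} (ha : a ∈ VV f m) (hb : b ∈ VV f n) :
    a * b ∈ VV f (m + n + f.natDegree * e) := by
  obtain ⟨G, h1, h2, rfl⟩ := (mem_VV hd).1 ha
  rw [mk_eq_sum G h1, Finset.sum_mul]
  refine Submodule.sum_mem _ fun i hi => ?_
  have := of_mul_VV hd (rootpow_mul_VV hf hd he hb i) (h2 i)
  rw [← mul_assoc] at this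
  refine VV_mono hd ?_ this
  have : i * e ≤ f.natDegree * e := Nat.mul_le_mul_right _ (Finset.mem_range.1 hi).le
  omega

noncomputable def FF (hf : f.Monic) (hd : 0 < f.natDegree) {e : ℕ}
    (he : ∀ i, (f.coeff i).natDegree ≤ e) : Filt k (AdjoinRoot f) where
  V := VV f
  D := f.natDegree
  c := (f.natDegree + 1) * e
  mono := VV_mono hd
  exh := VV_exh hf hd
  mul := fun ha hb => VV_mono hd (by nlinarith) (VV_mul hf hd he ha hb)
  fd := fun n => inferInstance
  rank := VV_rank hf hd

noncomputable def pt {x y : k} (h : f.evalEval x y = 0) : AdjoinRoot f →ₐ[k] k :=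
  { AdjoinRoot.evalEval h with
    commutes' := fun r => by
      change AdjoinRoot.evalEval h (AdjoinRoot.of f (Polynomial.C r)) = r
      rw [← AdjoinRoot.mk_C, AdjoinRoot.evalEval_mk]; simp }

lemma pt_mk {x y : k} (h : f.evalEval x y = 0) (G : k[X][X]) :
    pt h (AdjoinRoot.mk f G) = G.evalEval x y := AdjoinRoot.evalEval_mk h G
lemma pt_of {x y : k} (h : f.evalEval x y = 0) (g : k[X]) :
    pt h (AdjoinRoot.of f g) = g.eval x := by
  rw [← AdjoinRoot.mk_C, pt_mk, Polynomial.evalEval_C]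
lemma pt_root {x y : k} (h : f.evalEval x y = 0) :
    pt h (AdjoinRoot.root f) = y := by
  rw [← AdjoinRoot.mk_X, pt_mk]; simp

lemma pt_inj {x y x' y' : k} (h : f.evalEval x y = 0) (h' : f.evalEval x' y' = 0) (hp : pt h = pt h') :
    x = x' ∧ y = y' := by
  constructor
  · simpa [pt_of] using DFunLike.congr_fun hp (AdjoinRoot.of f Polynomial.X)
  · simpa [pt_root] using DFunLike.congr_fun hp (AdjoinRoot.root f)

lemma zeros_card (hf : f.Monic) (hpr : Prime f) (hd : 0 < f.natDegree) {e : ℕ}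
    (he : ∀ i, (f.coeff i).natDegree ≤ e) {G : k[X][X]} (hG : G.natDegree < f.natDegree)
    (hG0 : G ≠ 0) {m : ℕ} (hm : ∀ i, (G.coeff i).natDegree ≤ m) (T : Finset (k × k))
    (hT : ∀ z ∈ T, f.evalEval z.1 z.2 = 0 ∧ G.evalEval z.1 z.2 = 0) :
    T.card ≤ f.natDegree * (m + (f.natDegree + 1) * e) := by
  have := AdjoinRoot.isDomain_of_prime hpr
  have := fc_points (FF hf hd he) (ι' := T) (fun z => pt (hT z z.2).1) ?_ (m := m)
    (h := AdjoinRoot.mk f G) ((mem_VV hd).2 ⟨G, hG, hm, rfl⟩)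
    (AdjoinRoot.mk_ne_zero_of_natDegree_lt hf hG0 hG) ?_
  · simpa [FF] using this
  · intro z z' hz
    have := pt_inj _ _ hz
    exact Subtype.ext (Prod.ext this.1 this.2)
  · intro z
    rw [pt_mk]; exact (hT z z.2).2

lemma zeros_finite (hf : f.Monic) (hpr : Prime f) (hd : 0 < f.natDegree) {G : k[X][X]}
    (hG : ¬ f ∣ G) : {z : k × k | f.evalEval z.1 z.2 = 0 ∧ G.evalEval z.1 z.2 = 0}.Finite := by
  have := AdjoinRoot.isDomain_of_prime hpr
  obtain ⟨e, he⟩ : ∃ e, ∀ i, (f.coeff i).natDegree ≤ e := by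
    refine ⟨∑ i ∈ f.support, (f.coeff i).natDegree, fun i => ?_⟩
    by_cases hi : i ∈ f.support
    · exact Finset.single_le_sum (f := fun i => (f.coeff i).natDegree) (fun _ _ => Nat.zero_le _) hi
    · rw [Polynomial.notMem_support_iff.1 hi]; simp
  obtain ⟨m, hm⟩ := VV_exh hf hd (AdjoinRoot.mk f G)
  by_contra hinf
  obtain ⟨T, hT, hc⟩ := Set.Infinite.exists_subset_card_eq hinf
    (f.natDegree * (m + (f.natDegree + 1) * e) + 1)
  have := fc_points (FF hf hd he) (ι' := T) (fun z => pt (hT z.2).1) ?_ (m := m)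
    (h := AdjoinRoot.mk f G) hm (by rwa [Ne, AdjoinRoot.mk_eq_zero]) ?_
  · simp [FF, hc] at this
  · intro z z' hz
    have := pt_inj _ _ hz
    exact Subtype.ext (Prod.ext this.1 this.2)
  · intro z
    rw [pt_mk]; exact (hT z.2).2

lemma exists_e {x0 y0 : k} (hf : f.Monic) (h0 : f.evalEval x0 y0 = 0)
    (h1 : f.derivative.evalEval x0 y0 ≠ 0) :
    ∃ (e : AdjoinRoot f →ₐ[k] PowerSeries k) (x : AdjoinRoot f), e x = PowerSeries.X := by
  let i : k[X] →ₐ[k] PowerSeries k := Polynomial.aeval (algebraMap k (PowerSeries k) x0 + PowerSeries.X)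
  have hi : ∀ g : k[X], PowerSeries.constantCoeff (i g) = g.eval x0 := by
    intro g
    have : (PowerSeries.constantCoeff (R := k)).comp (i : k[X] →+* PowerSeries k) = Polynomial.evalRingHom x0 := by
      ext <;> simp [i]
    exact DFunLike.congr_fun this g
  have hi2 : ∀ G : k[X][X], PowerSeries.constantCoeff ((G.map (i : k[X] →+* PowerSeries k)).eval
      (algebraMap k (PowerSeries k) y0)) = G.evalEval x0 y0 := by
    intro G
    have : ((PowerSeries.constantCoeff (R := k)).comp (Polynomial.evalRingHom (algebraMap k (PowerSeries k) y0))).comp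
      (Polynomial.mapRingHom (i : k[X] →+* PowerSeries k)) = Polynomial.evalEvalRingHom x0 y0 := by
      ext <;> simp [i]
    exact DFunLike.congr_fun this G
  have hunit : ∀ u : PowerSeries k, PowerSeries.constantCoeff u ≠ 0 → IsUnit u := by
    intro u hu
    rw [PowerSeries.isUnit_iff_constantCoeff]; exact hu.isUnit
  obtain ⟨a, ha, -⟩ := (inferInstance : HenselianRing (PowerSeries k) (Ideal.span {PowerSeries.X})).is_henselian
    (f.map (i : k[X] →+* PowerSeries k)) (hf.map _) (algebraMap k _ y0)
    (by
      rw [Ideal.mem_span_singleton, PowerSeries.X_dvd_iff, hi2, h0])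
    (by
      apply IsUnit.map
      apply hunit
      rw [Polynomial.derivative_map, hi2]
      exact h1)
  refine ⟨AdjoinRoot.liftAlgHom _ i a ?_, AdjoinRoot.of f (Polynomial.X - Polynomial.C x0), ?_⟩
  · rw [Polynomial.IsRoot.def, Polynomial.eval_map] at ha
    exact ha
  · rw [AdjoinRoot.liftAlgHom_of]
    simp [i]
end ring
end QC

open MvPolynomial Filter
set_option linter.unusedSectionVars false
namespace QC
open scoped Polynomial

section planar
variable {k : Type*} [Field k] [IsAlgClosed k] {f : k[X][X]}

lemma exists_y (hf : f.Monic) (hd : 0 < f.natDegree) (x : k) : ∃ y, f.evalEval x y = 0 := by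
  have h : (f.map (Polynomial.evalRingHom x)).degree ≠ 0 := by
    rw [hf.degree_map]
    intro h0
    rw [Polynomial.natDegree_eq_of_degree_eq_some h0] at hd
    exact lt_irrefl _ hd
  obtain ⟨y, hy⟩ := IsAlgClosed.exists_root _ h
  exact ⟨y, by rwa [← Polynomial.map_evalRingHom_eval]⟩

lemma der_lt (hd : 0 < f.natDegree) : f.derivative.natDegree < f.natDegree :=
  Polynomial.natDegree_derivative_lt hd.ne'

lemma sepPoint (hf : f.Monic) (hpr : Prime f) (hd : 0 < f.natDegree) (hder : f.derivative ≠ 0) :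
    ∃ x0 y0, f.evalEval x0 y0 = 0 ∧ f.derivative.evalEval x0 y0 ≠ 0 := by
  by_contra hcon
  push Not at hcon
  have hfin := zeros_finite hf hpr hd (G := f.derivative)
    (fun h => AdjoinRoot.mk_ne_zero_of_natDegree_lt hf hder (der_lt hd) (AdjoinRoot.mk_eq_zero.2 h))
  refine Set.infinite_univ (α := k) ((hfin.image Prod.fst).subset ?_)
  intro x _
  obtain ⟨y, hy⟩ := exists_y hf hd x
  exact ⟨(x, y), ⟨hy, hcon x y hy⟩, rfl⟩

variable {p : ℕ} [Fact p.Prime] [CharP k p] {K : Type*} [Field K] [Fintype K] (i : K →+* k)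
  {f0 : K[X][X]}

lemma frobK {q : ℕ} (hK : Fintype.card K = q) (x : K) : i x ^ q = i x := by
  rw [← map_pow, ← hK, FiniteField.pow_card]

lemma mem_of_frob {q : ℕ} (hK : Fintype.card K = q) {y : k} (hy : y ^ q = y) : ∃ x, i x = y := by
  classical
  have hq : 1 < q := hK ▸ Fintype.one_lt_card
  by_contra hcon
  push Not at hcon
  have hne : (Polynomial.X ^ q - Polynomial.X : k[X]) ≠ 0 := FiniteField.X_pow_card_sub_X_ne_zero k hq
  have h1 : insert y (Finset.univ.image i) ⊆ (Polynomial.X ^ q - Polynomial.X : k[X]).roots.toFinset := by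
    intro z hz
    rw [Multiset.mem_toFinset, Polynomial.mem_roots hne]
    rcases Finset.mem_insert.1 hz with rfl | hz
    · simp [hy]
    · obtain ⟨x, -, rfl⟩ := Finset.mem_image.1 hz
      simp [frobK i hK]
  have h2 := Finset.card_le_card h1
  rw [Finset.card_insert_of_notMem (by simpa using hcon), Finset.card_image_of_injective _ i.injective,
    Finset.card_univ, hK] at h2
  have h3 := Multiset.toFinset_card_le (Polynomial.X ^ q - Polynomial.X : k[X]).roots
  have h4 := Polynomial.card_roots' (Polynomial.X ^ q - Polynomial.X : k[X])
  rw [FiniteField.X_pow_card_sub_X_natDegree_eq k hq] at h4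
  omega

variable (p) in
lemma exists_phi {s : ℕ} (hK : Fintype.card K = p ^ s) (hfm : f = f0.map (Polynomial.mapRingHom i)) :
    ∃ φ : AdjoinRoot f →ₐ[k] AdjoinRoot f, (∀ g, φ (AdjoinRoot.of f g) =
      AdjoinRoot.of f (Polynomial.expand k (p ^ s) g)) ∧
      φ (AdjoinRoot.root f) = AdjoinRoot.root f ^ (p ^ s) := by
  by_cases htriv : Nontrivial (AdjoinRoot f)
  swap
  · rw [not_nontrivial_iff_subsingleton] at htriv
    exact ⟨AlgHom.id _ _, fun g => Subsingleton.elim _ _, Subsingleton.elim _ _⟩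
  have : CharP (AdjoinRoot f) p := charP_of_injective_algebraMap (algebraMap k (AdjoinRoot f)).injective p
  refine ⟨AdjoinRoot.liftAlgHom f ((AdjoinRoot.ofAlgHom k f).comp (Polynomial.expand k (p ^ s)))
    (AdjoinRoot.root f ^ (p ^ s)) ?_, fun g => ?_, ?_⟩
  · have hc : ((((AdjoinRoot.ofAlgHom k f).comp (Polynomial.expand k (p ^ s)) : k[X] →ₐ[k] _) : k[X] →+* AdjoinRoot f).comp
        (Polynomial.mapRingHom i)) = ((iterateFrobenius (AdjoinRoot f) p s).comp
          ((AdjoinRoot.of f).comp (Polynomial.mapRingHom i))) := by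
      ext x
      · simp only [RingHom.comp_apply, Polynomial.coe_mapRingHom, Polynomial.map_C,
          AlgHom.comp_apply, Polynomial.expand_C, iterateFrobenius_def, RingHom.coe_coe]
        rw [← map_pow, ← map_pow, frobK i hK]
        rfl
      · simp only [RingHom.comp_apply, Polynomial.coe_mapRingHom, Polynomial.map_X,
          AlgHom.comp_apply, Polynomial.expand_X, iterateFrobenius_def, RingHom.coe_coe]
        rw [← map_pow]
        rfl
    have h0 : Polynomial.eval₂ ((AdjoinRoot.of f).comp (Polynomial.mapRingHom i)) (AdjoinRoot.root f) f0 = 0 := by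
      rw [← Polynomial.eval₂_map, ← hfm]
      exact AdjoinRoot.eval₂_root f
    refine (congrArg (Polynomial.eval₂ _ _) hfm).trans ?_
    rw [Polynomial.eval₂_map, hc, ← iterateFrobenius_def, ← Polynomial.hom_eval₂, h0, map_zero]
  · rw [AdjoinRoot.liftAlgHom_of]; rfl
  · rw [AdjoinRoot.liftAlgHom_root]

variable (p) in
lemma phi_pow {s : ℕ} [IsDomain (AdjoinRoot f)] (hd : 0 < f.natDegree) (φ : AdjoinRoot f →ₐ[k] AdjoinRoot f)
    (h1 : ∀ g, φ (AdjoinRoot.of f g) = AdjoinRoot.of f (Polynomial.expand k (p ^ s) g))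
    (h2 : φ (AdjoinRoot.root f) = AdjoinRoot.root f ^ (p ^ s)) (hf : f.Monic)
    (n : ℕ) (g) (hg : g ∈ VV f n) : ∃ h ∈ VV f n, φ g = h ^ (p ^ s) ∧ (h = 0 → g = 0) := by
  have : CharP (AdjoinRoot f) p := charP_of_injective_algebraMap (algebraMap k (AdjoinRoot f)).injective p
  obtain ⟨G, hG1, hG2, rfl⟩ := (mem_VV hd).1 hg
  let σ : k ≃+* k := iterateFrobeniusEquiv k p s
  have key : ((φ : AdjoinRoot f →+* AdjoinRoot f).comp (AdjoinRoot.mk f)) = (iterateFrobenius (AdjoinRoot f) p s).comp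
      ((AdjoinRoot.mk f).comp (Polynomial.mapRingHom (Polynomial.mapRingHom (σ.symm : k →+* k)))) := by
    ext r
    · simp only [RingHom.comp_apply, Polynomial.coe_mapRingHom, Polynomial.map_C, RingHom.coe_coe,
        AdjoinRoot.mk_C, h1, Polynomial.expand_C, iterateFrobenius_def]
      rw [← map_pow, ← map_pow]
      congr 2
      exact (σ.apply_symm_apply r).symm
    · simp only [RingHom.comp_apply, Polynomial.coe_mapRingHom, Polynomial.map_C, RingHom.coe_coe,
        AdjoinRoot.mk_C, h1, Polynomial.expand_X, iterateFrobenius_def, Polynomial.map_X, map_pow]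
    · simp only [RingHom.comp_apply, Polynomial.coe_mapRingHom, RingHom.coe_coe,
        AdjoinRoot.mk_X, h2, iterateFrobenius_def, Polynomial.map_X]
  have hinj : Function.Injective (Polynomial.mapRingHom (σ.symm : k →+* k)) :=
    Polynomial.map_injective _ (RingHom.injective _)
  refine ⟨AdjoinRoot.mk f (G.map (Polynomial.mapRingHom (σ.symm : k →+* k))), (mem_VV hd).2 ⟨_, ?_, ?_, rfl⟩,
    DFunLike.congr_fun key G, fun h0 => ?_⟩
  · rwa [Polynomial.natDegree_map_eq_of_injective hinj]
  · intro j
    rw [Polynomial.coeff_map, Polynomial.coe_mapRingHom]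
    exact Polynomial.natDegree_map_le.trans (hG2 j)
  · have h3 : G.map (Polynomial.mapRingHom (σ.symm : k →+* k)) = 0 := by
      by_contra hne
      refine AdjoinRoot.mk_ne_zero_of_natDegree_lt hf hne ?_ h0
      rwa [Polynomial.natDegree_map_eq_of_injective hinj]
    rw [(Polynomial.map_eq_zero_iff hinj).1 h3, map_zero]

lemma pt_phi {s : ℕ} {φ : AdjoinRoot f →ₐ[k] AdjoinRoot f}
    (h1 : ∀ g, φ (AdjoinRoot.of f g) = AdjoinRoot.of f (Polynomial.expand k s g))
    (h2 : φ (AdjoinRoot.root f) = AdjoinRoot.root f ^ s) {x y : k} (h : f.evalEval x y = 0)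
    (G : k[X][X]) : pt h (φ (AdjoinRoot.mk f G)) = G.evalEval (x ^ s) (y ^ s) := by
  have key : ((pt h : AdjoinRoot f →+* k).comp ((φ : AdjoinRoot f →+* AdjoinRoot f).comp (AdjoinRoot.mk f))) =
      Polynomial.evalEvalRingHom (x ^ s) (y ^ s) := by
    ext r
    · simp [h1, pt_of]
    · simp [h1, pt_of]
    · simp [h2, pt_root]
  exact DFunLike.congr_fun key G
end planar
end QC

open MvPolynomial Filter
set_option linter.unusedSectionVars false
namespace QC
open scoped Polynomial

section planar
variable {k : Type*} [Field k] [IsAlgClosed k] {f : k[X][X]}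
variable {p : ℕ} [Fact p.Prime] [CharP k p] {K : Type*} [Field K] [Fintype K] (i : K →+* k)
  {f0 : K[X][X]}

variable (p) in
lemma upper1 (hfm : f = f0.map (Polynomial.mapRingHom i)) (hf : f.Monic) (hpr : Prime f) (hd : 0 < f.natDegree)
    (hder : f.derivative ≠ 0) {e : ℕ} (he : ∀ j, (f.coeff j).natDegree ≤ e) {a b C : ℕ}
    (hK : Fintype.card K = p ^ a * p ^ b)
    (hC : ∃ l n : ℕ, f.natDegree * (l + (f.natDegree + 1) * e) < p ^ b ∧
      f.natDegree * 1 * (p ^ a * (l + (f.natDegree + 1) * e) + n + (f.natDegree + 1) * e + 1)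
        < f.natDegree * (l + 1) * (f.natDegree * (n + 1)) ∧
      f.natDegree * (l + p ^ b * (n + (f.natDegree + 1) * e) + 2 * ((f.natDegree + 1) * e))
        ≤ 1 * (p ^ a * p ^ b) + C * p ^ b)
    (T : Finset (K × K)) (hT : ∀ z ∈ T, f0.evalEval z.1 z.2 = 0) :
    T.card ≤ p ^ a * p ^ b + C * p ^ b := by
  have := AdjoinRoot.isDomain_of_prime hpr
  obtain ⟨x0, y0, hx0, hy0⟩ := sepPoint hf hpr hd hder
  obtain ⟨ε, x, hx⟩ := exists_e hf hx0 hy0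
  have hK' : Fintype.card K = p ^ (a + b) := by rw [hK, pow_add]
  obtain ⟨φ, h1, h2⟩ := exists_phi p i hK' hfm
  obtain ⟨l, n, e1, e2, e3⟩ := hC
  have hT' : ∀ z ∈ T, f.evalEval (i z.1) (i z.2) = 0 := fun z hz => by
    rw [hfm, Polynomial.map_mapRingHom_evalEval, hT z hz, map_zero]
  have hev : ∀ (z : T) (g : AdjoinRoot f), pt (hT' z z.2) (φ g) = pt (hT' z z.2) g := by
    intro z g
    obtain ⟨G, rfl⟩ := AdjoinRoot.mk_surjective g
    rw [pt_phi h1 h2, pt_mk, frobK i hK', frobK i hK']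
  have := stepanov (FF hf hd he) p ε x hx (a := a) (b := b) φ ?_ (ι' := T) (fun z => pt (hT' z z.2)) ?_
    (fun n => (VV f n).map (LinearMap.pi (fun z : T => (pt (hT' z z.2)).toLinearMap))) 1 ?_ ?_ l n e1 e2
  · rw [Fintype.card_coe] at this
    rw [one_mul] at e3
    exact this.trans e3
  · intro n g hg
    rw [← pow_add]
    exact phi_pow p hd φ h1 h2 hf n g hg
  · intro z z' hz
    have := pt_inj _ _ hz
    exact Subtype.ext (Prod.ext (i.injective this.1) (i.injective this.2))
  · intro n
    refine (Submodule.finrank_map_le _ _).trans (le_of_eq ?_)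
    rw [VV_rank hf hd, mul_one]; rfl
  · intro m n u v hu hv
    refine ⟨u * v, (FF hf hd he).mul hu hv, ?_⟩
    ext z
    simp [hev]

noncomputable def TT (f : k[X][X]) (s : ℕ) : AdjoinRoot f :=
  ∑ j ∈ Finset.range (f.natDegree + 1), if s < j then
    AdjoinRoot.of f (f.coeff j) * AdjoinRoot.root f ^ (j - 1 - s) else 0

lemma TT_mem (hd : 0 < f.natDegree) {e : ℕ} (he : ∀ j, (f.coeff j).natDegree ≤ e) (s : ℕ) :
    TT f s ∈ VV f e := by
  refine Submodule.sum_mem _ fun j hj => ?_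
  split_ifs with h
  · have := Finset.mem_range.1 hj
    simpa using of_mul_VV hd (rootpow_VV hd (j := j - 1 - s) (by omega)) (he j)
  · exact Submodule.zero_mem _

lemma TT_rel (hf : f.Monic) {d' : ℕ} (hd : f.natDegree = d' + 1) {x y z : k} (h : f.evalEval x y = 0)
    (hz : f.evalEval x z = 0) (hyz : z ≠ y) :
    z ^ d' = - ∑ s ∈ Finset.range d', pt h (TT f s) * z ^ s := by
  have hev : ∀ w, f.evalEval x w = ∑ j ∈ Finset.range (f.natDegree + 1), (f.coeff j).eval x * w ^ j := by
    intro w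
    conv_lhs => rw [f.as_sum_range' _ (Nat.lt_succ_self _)]
    rw [← Polynomial.coe_evalEvalRingHom, map_sum]
    simp [← Polynomial.C_mul_X_pow_eq_monomial]
  have h1 : (∑ j ∈ Finset.range (f.natDegree + 1), (f.coeff j).eval x *
      ∑ s ∈ Finset.range j, z ^ s * y ^ (j - 1 - s)) * (z - y) = 0 := by
    rw [Finset.sum_mul]
    simp_rw [mul_assoc, geom_sum₂_mul, mul_sub, Finset.sum_sub_distrib]
    rw [← hev, ← hev, h, hz, sub_zero]
  have h2 := (mul_eq_zero.1 h1).resolve_right (sub_ne_zero.2 hyz)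
  have h3 : ∑ s ∈ Finset.range (d' + 1), pt h (TT f s) * z ^ s = 0 := by
    rw [← h2]
    simp only [TT, map_sum, Finset.sum_mul, apply_ite (pt h), map_zero, ite_mul, zero_mul, map_mul, map_pow,
      pt_of, pt_root]
    rw [Finset.sum_comm]
    refine Finset.sum_congr rfl fun j hj => ?_
    rw [← Finset.sum_filter, Finset.mul_sum]
    have : (Finset.range (d' + 1)).filter (fun s => s < j) = Finset.range j := by
      have := Finset.mem_range.1 hj
      ext s; simp; omega
    rw [this]
    refine Finset.sum_congr rfl fun s _ => ?_
    ring
  rw [Finset.sum_range_succ] at h3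
  have h4 : TT f d' = 1 := by
    rw [TT, hd, Finset.sum_range_succ, Finset.sum_eq_zero]
    · have := hf.coeff_natDegree
      rw [hd] at this
      simp [this]
    · intro j hj
      rw [if_neg]
      have := Finset.mem_range.1 hj
      omega
  rw [h4, map_one, one_mul] at h3
  exact eq_neg_of_add_eq_zero_right h3

variable (p) in
lemma upper2 (hfm : f = f0.map (Polynomial.mapRingHom i)) (hf : f.Monic) (hpr : Prime f) {d' : ℕ}
    (hd' : f.natDegree = d' + 1)
    (hder : f.derivative ≠ 0) {e : ℕ} (he : ∀ j, (f.coeff j).natDegree ≤ e) {a b C : ℕ}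
    (hK : Fintype.card K = p ^ a * p ^ b)
    (hC : ∃ l n : ℕ, f.natDegree * (l + (f.natDegree + 1) * e) < p ^ b ∧
      f.natDegree * d' * (p ^ a * (l + (f.natDegree + 1) * e) + n + (f.natDegree + 1) * e + 1)
        < f.natDegree * (l + 1) * (f.natDegree * (n + 1)) ∧
      f.natDegree * (l + p ^ b * (n + (f.natDegree + 1) * e) + 2 * ((f.natDegree + 1) * e))
        ≤ d' * (p ^ a * p ^ b) + C * p ^ b)
    (T : Finset (K × k)) (hT : ∀ z ∈ T, f.evalEval (i z.1) z.2 = 0)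
    (hT2 : ∀ z ∈ T, z.2 ^ (p ^ a * p ^ b) ≠ z.2) :
    T.card ≤ d' * (p ^ a * p ^ b) + C * p ^ b := by
  have := AdjoinRoot.isDomain_of_prime hpr
  have hd : 0 < f.natDegree := by omega
  obtain ⟨x0, y0, hx0, hy0⟩ := sepPoint hf hpr hd hder
  obtain ⟨ε, x, hx⟩ := exists_e hf hx0 hy0
  have hK' : Fintype.card K = p ^ (a + b) := by rw [hK, pow_add]
  obtain ⟨φ, h1, h2⟩ := exists_phi p i hK' hfm
  obtain ⟨l, n, e1, e2, e3⟩ := hC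
  have hev : ∀ (z : T) (G : k[X][X]), pt (hT z z.2) (φ (AdjoinRoot.mk f G)) =
      G.evalEval (i z.1.1) (z.1.2 ^ (p ^ (a + b))) := by
    intro z G
    rw [pt_phi h1 h2, frobK i hK']
  have hz0 : ∀ z : T, f.evalEval (i z.1.1) (z.1.2 ^ (p ^ (a + b))) = 0 := by
    intro z
    rw [← hev, AdjoinRoot.mk_self, map_zero, map_zero]
  let Λ : ∀ n, (Fin d' → VV f n) →ₗ[k] (T → k) := fun n => LinearMap.pi fun z =>
    ∑ s : Fin d', (z.1.2 ^ (p ^ (a + b))) ^ (s : ℕ) •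
      ((pt (hT z z.2)).toLinearMap.comp ((VV f n).subtype.comp (LinearMap.proj s)))
  have hΛ : ∀ n g z, Λ n g z = ∑ s : Fin d', (z.1.2 ^ (p ^ (a + b))) ^ (s : ℕ) * pt (hT z z.2) (g s) := by
    intro n g z
    simp only [Λ, LinearMap.pi_apply, LinearMap.sum_apply, LinearMap.smul_apply]
    rfl
  have := stepanov (FF hf hd he) p ε x hx (a := a) (b := b) φ ?_ (ι' := T) (fun z => pt (hT z z.2)) ?_
    (fun n => LinearMap.range (Λ n)) d' ?_ ?_ l n e1 e2
  · rw [Fintype.card_coe] at this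
    exact this.trans e3
  · intro n g hg
    rw [← pow_add]
    exact phi_pow p hd φ h1 h2 hf n g hg
  · intro z z' hz
    have := pt_inj _ _ hz
    exact Subtype.ext (Prod.ext (i.injective this.1) this.2)
  · intro n
    refine (LinearMap.finrank_range_le _).trans (le_of_eq ?_)
    rw [Module.finrank_pi_fintype]
    simp only [VV_rank hf hd, Finset.sum_const, Finset.card_univ, Fintype.card_fin, smul_eq_mul]
    change _ = f.natDegree * d' * (n + 1)
    ring
  · intro m n u v hu hv
    obtain ⟨G, hG1, hG2, rfl⟩ := (mem_VV hd).1 hv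
    change u ∈ VV f m at hu
    have hm1 : ∀ j, AdjoinRoot.of f (G.coeff j) * u ∈ VV f (m + n) := fun j => of_mul_VV hd hu (hG2 j)
    have hc : (FF hf hd he).c = f.natDegree * e + e := by change (f.natDegree + 1) * e = _; ring
    have hm2 : ∀ s : Fin d', AdjoinRoot.of f (G.coeff s) * u - AdjoinRoot.of f (G.coeff d') * u * TT f s ∈
        VV f (m + n + (FF hf hd he).c) := by
      intro s
      refine Submodule.sub_mem _ (VV_mono hd (by omega) (hm1 s)) ?_
      exact VV_mono hd (by rw [hc]; omega) (VV_mul hf hd he (hm1 d') (TT_mem hd he s))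
    refine ⟨fun s => ⟨_, hm2 s⟩, ?_⟩
    ext z
    rw [hΛ, hev]
    have hrel := TT_rel hf hd' (hT z z.2) (hz0 z) (by rw [pow_add]; exact hT2 z z.2)
    generalize z.1.2 ^ (p ^ (a + b)) = Z at *
    have hG : G.evalEval (i z.1.1) Z = ∑ j ∈ Finset.range (d' + 1), (G.coeff j).eval (i z.1.1) * Z ^ j := by
      conv_lhs => rw [G.as_sum_range' (d' + 1) (hd' ▸ hG1)]
      rw [← Polynomial.coe_evalEvalRingHom, map_sum]
      simp [← Polynomial.C_mul_X_pow_eq_monomial]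
    rw [hG, Finset.sum_range_succ, hrel, Fin.sum_univ_eq_sum_range
      (fun s => Z ^ s * pt (hT z z.2) (AdjoinRoot.of f (G.coeff s) * u - AdjoinRoot.of f (G.coeff d') * u * TT f s))]
    rw [mul_add, mul_neg, mul_neg, Finset.mul_sum, Finset.mul_sum, Finset.mul_sum, ← sub_eq_add_neg,
      ← Finset.sum_sub_distrib]
    refine Finset.sum_congr rfl fun s _ => ?_
    simp only [map_sub, map_mul, pt_of]
    ring
end planar
end QC

open MvPolynomial Filter
set_option linter.unusedSectionVars false
namespace QC
open scoped Polynomial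

section planar
variable {k : Type*} [Field k] [IsAlgClosed k] {f : k[X][X]}

lemma roots_card_good (hf : f.Monic) (x : k) (hx : ∀ y, f.evalEval x y = 0 → f.derivative.evalEval x y ≠ 0)
    [DecidableEq k] :
    (f.map (Polynomial.evalRingHom x)).roots.toFinset.card = f.natDegree := by
  have hm : (f.map (Polynomial.evalRingHom x)).Monic := hf.map _
  rw [Multiset.toFinset_card_of_nodup, IsAlgClosed.card_roots_eq_natDegree, hf.natDegree_map]
  rw [Multiset.nodup_iff_count_le_one]
  intro y
  rw [Polynomial.count_roots]
  by_contra h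
  push Not at h
  rw [Polynomial.one_lt_rootMultiplicity_iff_isRoot hm.ne_zero, Polynomial.IsRoot.def, Polynomial.IsRoot.def,
    Polynomial.derivative_map, Polynomial.map_evalRingHom_eval, Polynomial.map_evalRingHom_eval] at h
  exact hx y h.1 h.2

variable (k) in
theorem planar (p : ℕ) [Fact p.Prime] [CharP k p] (d e : ℕ) (hd : 2 ≤ d) : ∃ C : ℕ,
    ∀ (K : Type) [Field K] [Fintype K] (i : K →+* k) (f0 : K[X][X]) (a b : ℕ),
      Fintype.card K = p ^ a * p ^ b → a ≤ b → b ≤ a + 1 → C ≤ p ^ b → f0.Monic → f0.natDegree = d →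
      (∀ j, (f0.coeff j).natDegree ≤ e) → Prime (f0.map (Polynomial.mapRingHom i)) →
      (f0.map (Polynomial.mapRingHom i)).derivative ≠ 0 →
      Nat.card {z : K × K // f0.evalEval z.1 z.2 = 0} ≤ p ^ a * p ^ b + C * p ^ b ∧
      p ^ a * p ^ b ≤ Nat.card {z : K × K // f0.evalEval z.1 z.2 = 0} + C * p ^ b := by
  classical
  have hp : 1 ≤ p := (Fact.out : p.Prime).one_lt.le
  obtain ⟨d', rfl⟩ : ∃ d', d = d' + 1 := ⟨d - 1, by omega⟩
  obtain ⟨C1, hC1⟩ := numerics (d' + 1) ((d' + 1 + 1) * e) 1 p (by omega) hp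
  obtain ⟨C2, hC2⟩ := numerics (d' + 1) ((d' + 1 + 1) * e) d' p (by omega) hp
  obtain ⟨β, hβ⟩ : ∃ β, β = (d' + 1) * (e + (d' + 1 + 1) * e) := ⟨_, rfl⟩
  refine ⟨C1 + C2 + (d' + 1) * β, ?_⟩
  intro K _ _ i f0 a b hK hab hba hCb hmon hdeg he hpr hder
  obtain ⟨f, hfm⟩ : ∃ f, f = f0.map (Polynomial.mapRingHom i) := ⟨_, rfl⟩
  have hf : f.Monic := hfm ▸ hmon.map _
  have hfd : f.natDegree = d' + 1 := by rw [hfm, hmon.natDegree_map, hdeg]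
  have hfd0 : 0 < f.natDegree := by omega
  have hfe : ∀ j, (f.coeff j).natDegree ≤ e := by
    intro j
    rw [hfm, Polynomial.coeff_map, Polynomial.coe_mapRingHom]
    exact Polynomial.natDegree_map_le.trans (he j)
  rw [← hfm] at hpr hder
  have hPP : p ^ a ≤ p ^ b := Nat.pow_le_pow_right hp hab
  have hPP' : p ^ b ≤ p * p ^ a := by rw [← pow_succ']; exact Nat.pow_le_pow_right hp hba
  have u1 := upper1 p i hfm hf hpr hfd0 hder hfe hK (C := C1)
    (by rw [hfd]; exact hC1 _ _ hPP hPP' (by omega))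
  have u2 := upper2 p i hfm hf hpr hfd hder hfe hK (C := C2)
    (by rw [hfd]; exact hC2 _ _ hPP hPP' (by omega))
  set q := p ^ a * p ^ b with hq
  set S1 : Finset (K × K) := Finset.univ.filter (fun z => f0.evalEval z.1 z.2 = 0) with hS1
  have hS1c : Nat.card {z : K × K // f0.evalEval z.1 z.2 = 0} = S1.card := by
    rw [Nat.card_eq_fintype_card, Fintype.card_subtype]
  rw [hS1c]
  have hS1u := u1 S1 (by simp [hS1])
  -- all points
  let R : K → Finset k := fun x => (f.map (Polynomial.evalRingHom (i x))).roots.toFinset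
  have hR : ∀ x y, y ∈ R x ↔ f.evalEval (i x) y = 0 := by
    intro x y
    simp only [R]
    rw [Multiset.mem_toFinset, Polynomial.mem_roots (hf.map _).ne_zero, Polynomial.IsRoot.def,
      Polynomial.map_evalRingHom_eval]
  let bad : Finset K := Finset.univ.filter (fun x => ∃ y, f.evalEval (i x) y = 0 ∧ f.derivative.evalEval (i x) y = 0)
  have hbad : bad.card ≤ β := by
    have : ∀ x : K, ∃ y : k, x ∈ bad → f.evalEval (i x) y = 0 ∧ f.derivative.evalEval (i x) y = 0 := by
      intro x
      by_cases hx : x ∈ bad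
      · obtain ⟨y, hy⟩ := (Finset.mem_filter.1 hx).2
        exact ⟨y, fun _ => hy⟩
      · exact ⟨0, fun h => absurd h hx⟩
    choose y hy using this
    have h1 := zeros_card hf hpr hfd0 hfe (der_lt hfd0) hder (m := e) ?_ (bad.image fun x => (i x, y x)) ?_
    · rw [Finset.card_image_of_injective _ (fun x x' h => i.injective (Prod.ext_iff.1 h).1), hfd, ← hβ] at h1
      exact h1
    · intro j
      rw [Polynomial.coeff_derivative]
      refine Polynomial.natDegree_mul_le.trans ?_
      have : ((j : k[X]) + 1).natDegree = 0 := by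
        rw [← Nat.cast_one, ← Nat.cast_add, Polynomial.natDegree_natCast]
      rw [this]; exact hfe _
    · intro z hz
      obtain ⟨x, hx, rfl⟩ := Finset.mem_image.1 hz
      exact hy x hx
  set A : Finset (Σ _ : K, k) := Finset.univ.sigma R with hA
  have hAc : (d' + 1) * q ≤ A.card + (d' + 1) * β := by
    rw [hA, Finset.card_sigma]
    have h1 : ∑ x ∈ Finset.univ.filter (fun x => x ∉ bad), (R x).card ≤ ∑ x, (R x).card :=
      Finset.sum_le_sum_of_subset (Finset.filter_subset _ _)
    have h2 : ∑ x ∈ Finset.univ.filter (fun x => x ∉ bad), (R x).card =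
        ∑ x ∈ Finset.univ.filter (fun x => x ∉ bad), (d' + 1) := by
      refine Finset.sum_congr rfl fun x hx => ?_
      rw [← hfd]
      refine roots_card_good hf (i x) fun y hy hy' => ?_
      exact (Finset.mem_filter.1 hx).2 (Finset.mem_filter.2 ⟨Finset.mem_univ _, y, hy, hy'⟩)
    rw [Finset.sum_const, smul_eq_mul] at h2
    have h3 : bad.card + (Finset.univ.filter (fun x => x ∉ bad)).card = q := by
      have := Finset.card_filter_add_card_filter_not (s := (Finset.univ : Finset K)) (fun x => x ∈ bad)
      rw [Finset.card_univ, hK, Finset.filter_mem_eq_inter, Finset.univ_inter] at this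
      exact this
    have h4 : (d' + 1) * bad.card ≤ (d' + 1) * β := Nat.mul_le_mul_left _ hbad
    have h5 : (d' + 1) * (bad.card + (Finset.univ.filter (fun x => x ∉ bad)).card) = (d' + 1) * q := by rw [h3]
    rw [mul_add] at h5
    rw [mul_comm] at h2
    omega
  have hsplit := Finset.card_filter_add_card_filter_not (s := A) (fun z => z.2 ^ q = z.2)
  have hA1 : (A.filter (fun z => z.2 ^ q = z.2)).card ≤ S1.card := by
    have hsub : (A.filter (fun z => z.2 ^ q = z.2)) ⊆ S1.image (fun z => (⟨z.1, i z.2⟩ : Σ _ : K, k)) := by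
      rintro ⟨x, y⟩ hz
      obtain ⟨hz1, hz2⟩ := Finset.mem_filter.1 hz
      obtain ⟨w, rfl⟩ := mem_of_frob i hK hz2
      refine Finset.mem_image.2 ⟨(x, w), ?_, rfl⟩
      have := (hR x _).1 (Finset.mem_sigma.1 hz1).2
      rw [hfm, Polynomial.map_mapRingHom_evalEval] at this
      simpa [hS1] using this
    exact (Finset.card_le_card hsub).trans Finset.card_image_le
  have hA2 : (A.filter (fun z => ¬ z.2 ^ q = z.2)).card ≤ d' * q + C2 * p ^ b := by
    have h1 := u2 ((A.filter (fun z => ¬ z.2 ^ q = z.2)).image fun z => (z.1, z.2)) ?_ ?_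
    · rwa [Finset.card_image_of_injective] at h1
      rintro ⟨x, y⟩ ⟨x', y'⟩ h
      simp only [Prod.mk.injEq] at h
      obtain ⟨rfl, rfl⟩ := h
      rfl
    · intro z hz
      obtain ⟨w, hw, rfl⟩ := Finset.mem_image.1 hz
      exact (hR _ _).1 (Finset.mem_sigma.1 (Finset.mem_filter.1 hw).1).2
    · intro z hz
      obtain ⟨w, hw, rfl⟩ := Finset.mem_image.1 hz
      exact (Finset.mem_filter.1 hw).2
  have hb1 : 1 ≤ p ^ b := Nat.one_le_pow _ _ hp
  have hbb : (d' + 1) * β * 1 ≤ (d' + 1) * β * p ^ b := Nat.mul_le_mul_left _ hb1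
  constructor <;> nlinarith
end planar
end QC

open MvPolynomial Filter
set_option linter.unusedSectionVars false
namespace QC
open scoped Polynomial

section vec
variable {R : Type*} [CommRing R]

def dot (a x : Fin 3 → R) : R := ∑ i, a i * x i

def cr (u w : Fin 3 → R) : Fin 3 → R :=
  ![u 1 * w 2 - u 2 * w 1, u 2 * w 0 - u 0 * w 2, u 0 * w 1 - u 1 * w 0]

lemma dot3 (a x : Fin 3 → R) : dot a x = a 0 * x 0 + a 1 * x 1 + a 2 * x 2 := by
  simp [dot, Fin.sum_univ_three]

def d3 (t u w : Fin 3 → R) : R := dot t (cr u w)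

lemma d3_eq (t u w : Fin 3 → R) : d3 t u w = t 0 * (u 1 * w 2 - u 2 * w 1) + t 1 * (u 2 * w 0 - u 0 * w 2)
    + t 2 * (u 0 * w 1 - u 1 * w 0) := by
  simp [d3, dot3, cr]

lemma decomp (t u w x : Fin 3 → R) (j : Fin 3) :
    d3 t u w * x j = dot (cr u w) x * t j + dot (cr w t) x * u j + dot (cr t u) x * w j := by
  fin_cases j <;> simp [d3_eq, dot3, cr] <;> ring

lemma map_d3 {S : Type*} [CommRing S] (i : R →+* S) (t u w : Fin 3 → R) :
    d3 (i ∘ t) (i ∘ u) (i ∘ w) = i (d3 t u w) := by simp [d3_eq]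

lemma map_dot {S : Type*} [CommRing S] (i : R →+* S) (t u : Fin 3 → R) :
    dot (i ∘ t) (i ∘ u) = i (dot t u) := by simp [dot3]

lemma map_cr {S : Type*} [CommRing S] (i : R →+* S) (t u : Fin 3 → R) :
    cr (i ∘ t) (i ∘ u) = i ∘ cr t u := by
  ext j; fin_cases j <;> simp [cr]

noncomputable def LQh (v e e' : Fin 3 → R) : MvPolynomial (Fin 3) R →+* R[X][X] :=
  MvPolynomial.eval₂Hom (Polynomial.C.comp Polynomial.C)
    (fun i => Polynomial.C (Polynomial.C (v i)) * Polynomial.X +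
      Polynomial.C (Polynomial.C (e i) + Polynomial.X * Polynomial.C (e' i)))

lemma LQh_C (v e e' : Fin 3 → R) (c : R) : LQh v e e' (MvPolynomial.C c) = Polynomial.C (Polynomial.C c) := by
  simp [LQh]

lemma LQh_X (v e e' : Fin 3 → R) (i) : LQh v e e' (MvPolynomial.X i) =
    Polynomial.C (Polynomial.C (v i)) * Polynomial.X +
      Polynomial.C (Polynomial.C (e i) + Polynomial.X * Polynomial.C (e' i)) := by
  simp [LQh]

lemma LQh_evalEval (v e e' : Fin 3 → R) (x y : R) (Q : MvPolynomial (Fin 3) R) :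
    (LQh v e e' Q).evalEval x y = MvPolynomial.eval (fun i => y * v i + e i + x * e' i) Q := by
  have : (Polynomial.evalEvalRingHom x y).comp (LQh v e e') =
      MvPolynomial.eval (fun i => y * v i + e i + x * e' i) := by
    apply MvPolynomial.ringHom_ext
    · intro r; simp [LQh_C]
    · intro i; simp [LQh_X]; ring
  exact DFunLike.congr_fun this Q

lemma LQh_map {S : Type*} [CommRing S] (i : R →+* S) (v e e' : Fin 3 → R) (Q : MvPolynomial (Fin 3) R) :
    (LQh v e e' Q).map (Polynomial.mapRingHom i) = LQh (i ∘ v) (i ∘ e) (i ∘ e') (MvPolynomial.map i Q) := by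
  have : (Polynomial.mapRingHom (Polynomial.mapRingHom i)).comp (LQh v e e') =
      (LQh (i ∘ v) (i ∘ e) (i ∘ e')).comp (MvPolynomial.map i) := by
    apply MvPolynomial.ringHom_ext
    · intro r; simp [LQh_C]
    · intro j; simp [LQh_X]
  exact DFunLike.congr_fun this Q

/-- total degree at most n, with top coefficient of the pure power of the outer variable -/
def TD (n : ℕ) (G : R[X][X]) (c : R) : Prop :=
  (∀ j l, n < j + l → (G.coeff j).coeff l = 0) ∧ (G.coeff n).coeff 0 = c

lemma TD.natDegree {n : ℕ} {G : R[X][X]} {c : R} (h : TD n G c) : G.natDegree ≤ n := by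
  rw [Polynomial.natDegree_le_iff_coeff_eq_zero]
  intro j hj
  ext l
  simpa using h.1 j l (by omega)

lemma TD.coeff_natDegree {n : ℕ} {G : R[X][X]} {c : R} (h : TD n G c) (j : ℕ) :
    (G.coeff j).natDegree ≤ n - j := by
  rw [Polynomial.natDegree_le_iff_coeff_eq_zero]
  intro l hl
  exact h.1 j l (by omega)

lemma TD.top {n : ℕ} {G : R[X][X]} {c : R} (h : TD n G c) : G.coeff n = Polynomial.C c := by
  have := h.coeff_natDegree n
  rw [Nat.sub_self] at this
  rw [Polynomial.eq_C_of_natDegree_le_zero this, h.2]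

lemma TD.mul {m n : ℕ} {G H : R[X][X]} {c c' : R} (hG : TD m G c) (hH : TD n H c') :
    TD (m + n) (G * H) (c * c') := by
  constructor
  · intro j l hjl
    rw [Polynomial.coeff_mul, Polynomial.finsetSum_coeff]
    refine Finset.sum_eq_zero fun a ha => ?_
    rw [Polynomial.coeff_mul]
    refine Finset.sum_eq_zero fun b hb => ?_
    rw [Finset.HasAntidiagonal.mem_antidiagonal] at ha hb
    rcases Nat.lt_or_ge m (a.1 + b.1) with h | h
    · rw [hG.1 _ _ h, zero_mul]
    · rw [hH.1 _ _ (by omega), mul_zero]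
  · rw [Polynomial.coeff_mul_add_eq_of_natDegree_le hG.natDegree hH.natDegree, Polynomial.mul_coeff_zero,
      hG.2, hH.2]

lemma TD.pow {m : ℕ} {G : R[X][X]} {c : R} (hG : TD m G c) (n : ℕ) : TD (n * m) (G ^ n) (c ^ n) := by
  induction n with
  | zero =>
    simp only [zero_mul, pow_zero]
    refine ⟨fun j l h => ?_, by simp⟩
    rw [Polynomial.coeff_one]
    split_ifs with h0
    · rw [Polynomial.coeff_one, if_neg (by omega)]
    · simp
  | succ n ih =>
    rw [pow_succ, pow_succ, add_mul, one_mul]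
    exact ih.mul hG

lemma TD_lin (v e e' : R) : TD 1 (Polynomial.C (Polynomial.C v) * Polynomial.X +
      Polynomial.C (Polynomial.C e + Polynomial.X * Polynomial.C e')) v := by
  constructor
  · intro j l h
    rcases j with _ | _ | j
    · simp [Polynomial.coeff_X, Polynomial.coeff_C, show ¬ (1 = l) by omega, show ¬ (l = 0) by omega]
    · simp [Polynomial.coeff_C, show ¬ (l = 0) by omega]
    · simp [Polynomial.coeff_X, Polynomial.coeff_C]
  · simp [Polynomial.coeff_C]

lemma TD_LQ {Q : MvPolynomial (Fin 3) R} {n : ℕ} (hQ : Q.IsHomogeneous n) (v e e' : Fin 3 → R) :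
    TD n (LQh v e e' Q) (MvPolynomial.eval v Q) := by
  have key : ∀ d ∈ Q.support, TD n (LQh v e e' (MvPolynomial.monomial d (Q.coeff d)))
      (MvPolynomial.eval v (MvPolynomial.monomial d (Q.coeff d))) := by
    intro d hd
    have hdeg : d 0 + d 1 + d 2 = n := by
      have := hQ (MvPolynomial.mem_support_iff.1 hd)
      rw [Finsupp.weight_apply, Finsupp.sum_fintype _ _ (by simp)] at this
      simpa [Fin.sum_univ_three] using this
    rw [MvPolynomial.monomial_eq, Finsupp.prod_fintype _ _ (by simp)]
    simp only [map_mul, map_prod, map_pow, LQh_C, MvPolynomial.eval_C, MvPolynomial.eval_X, Fin.prod_univ_three,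
      LQh_X]
    have h0 : TD 0 (Polynomial.C (Polynomial.C (Q.coeff d))) (Q.coeff d) := by
      refine ⟨fun j l h => ?_, by simp⟩
      rw [Polynomial.coeff_C]
      split_ifs with hj
      · rw [Polynomial.coeff_C, if_neg (by omega)]
      · simp
    have := h0.mul ((((TD_lin (v 0) (e 0) (e' 0)).pow (d 0)).mul ((TD_lin (v 1) (e 1) (e' 1)).pow (d 1))).mul
      ((TD_lin (v 2) (e 2) (e' 2)).pow (d 2)))
    convert this using 1
    omega
  rw [MvPolynomial.as_sum Q, map_sum, map_sum]
  constructor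
  · intro j l h
    rw [Polynomial.finsetSum_coeff, Polynomial.finsetSum_coeff]
    exact Finset.sum_eq_zero fun d hd => (key d hd).1 j l h
  · rw [Polynomial.finsetSum_coeff, Polynomial.finsetSum_coeff]
    exact Finset.sum_congr rfl fun d hd => (key d hd).2

lemma eval_smul_hom {Q : MvPolynomial (Fin 3) R} {n : ℕ} (hQ : Q.IsHomogeneous n) (c : R) (v : Fin 3 → R) :
    MvPolynomial.eval (c • v) Q = c ^ n * MvPolynomial.eval v Q := by
  rw [MvPolynomial.eval_eq', MvPolynomial.eval_eq', Finset.mul_sum]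
  refine Finset.sum_congr rfl fun d hd => ?_
  have hdeg : d 0 + d 1 + d 2 = n := by
    have := hQ (MvPolynomial.mem_support_iff.1 hd)
    rw [Finsupp.weight_apply, Finsupp.sum_fintype _ _ (by simp)] at this
    simpa [Fin.sum_univ_three] using this
  simp only [Fin.prod_univ_three, Pi.smul_apply, smul_eq_mul, mul_pow]
  rw [← hdeg]
  ring
end vec

section prime
variable {k : Type*} [Field k] [Infinite k]

lemma homogenize (v e e' : Fin 3 → k) (h : d3 v e e' ≠ 0) (g : k[X][X]) :
    ∃ (G : MvPolynomial (Fin 3) k) (n : ℕ), LQh v e e' G = g ∧ ∀ w x y t, t ≠ 0 →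
      (∀ i, w i = t * (y * v i + e i + x * e' i)) → MvPolynomial.eval w G = t ^ n * g.evalEval x y := by
  -- linear forms
  let lf : (Fin 3 → k) → MvPolynomial (Fin 3) k := fun a =>
    MvPolynomial.C (d3 v e e')⁻¹ * ∑ i, MvPolynomial.C (a i) * MvPolynomial.X i
  have hlf : ∀ a, LQh v e e' (lf a) = Polynomial.C (Polynomial.C ((d3 v e e')⁻¹ * dot a v)) * Polynomial.X +
      Polynomial.C (Polynomial.C ((d3 v e e')⁻¹ * dot a e) + Polynomial.X * Polynomial.C ((d3 v e e')⁻¹ * dot a e')) := by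
    intro a
    simp only [lf, map_mul, map_sum, LQh_C, LQh_X, Fin.sum_univ_three, dot3, map_add]
    ring
  have hlf2 : ∀ a w, MvPolynomial.eval w (lf a) = (d3 v e e')⁻¹ * dot a w := by
    intro a w
    simp [lf, dot]
  have hdot : ∀ a w x y t, (∀ i, w i = t * (y * v i + e i + x * e' i)) →
      dot a w = t * (y * dot a v + dot a e + x * dot a e') := by
    intro a w x y t hw
    simp only [dot3, hw]; ring
  have f1 : dot (cr e e') v = d3 v e e' := by simp only [dot3, d3_eq]; simp [cr]; ring
  have f2 : dot (cr e e') e = 0 := by simp only [dot3]; simp [cr]; ring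
  have f3 : dot (cr e e') e' = 0 := by simp only [dot3]; simp [cr]; ring
  have g1 : dot (cr e' v) v = 0 := by simp only [dot3]; simp [cr]; ring
  have g2 : dot (cr e' v) e = d3 v e e' := by simp only [dot3, d3_eq]; simp [cr]; ring
  have g3 : dot (cr e' v) e' = 0 := by simp only [dot3]; simp [cr]; ring
  have h1 : dot (cr v e) v = 0 := by simp only [dot3]; simp [cr]; ring
  have h2 : dot (cr v e) e = 0 := by simp only [dot3]; simp [cr]; ring
  have h3 : dot (cr v e) e' = d3 v e e' := by simp only [dot3, d3_eq]; simp [cr]; ring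
  let P : k[X][X] → Prop := fun g => ∃ (G : MvPolynomial (Fin 3) k) (n : ℕ), LQh v e e' G = g ∧ ∀ w x y t, t ≠ 0 →
      (∀ i, w i = t * (y * v i + e i + x * e' i)) → MvPolynomial.eval w G = t ^ n * g.evalEval x y
  have Pmul : ∀ g g', P g → P g' → P (g * g') := by
    rintro g g' ⟨G, n, rfl, hG⟩ ⟨G', n', rfl, hG'⟩
    refine ⟨G * G', n + n', map_mul _ _ _, fun w x y t ht hw => ?_⟩
    rw [map_mul, hG w x y t ht hw, hG' w x y t ht hw, Polynomial.evalEval_mul]; ring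
  have Padd : ∀ g g', P g → P g' → P (g + g') := by
    rintro g g' ⟨G, n, rfl, hG⟩ ⟨G', n', rfl, hG'⟩
    have he : LQh v e e' (lf (cr e' v)) = 1 := by
      rw [hlf, g1, g2, g3]; simp [h]
    refine ⟨G * lf (cr e' v) ^ n' + G' * lf (cr e' v) ^ n, n + n', ?_, fun w x y t ht hw => ?_⟩
    · simp [he]
    · simp only [map_add, map_mul, map_pow, hG w x y t ht hw, hG' w x y t ht hw, Polynomial.evalEval_add,
        hlf2, hdot _ w x y t hw, g1, g2, g3]
      have hs : (d3 v e e')⁻¹ * (t * (y * 0 + d3 v e e' + x * 0)) = t := by field_simp; ring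
      rw [hs]
      ring
  have PX : P Polynomial.X := by
    refine ⟨lf (cr e e'), 1, ?_, fun w x y t ht hw => ?_⟩
    · rw [hlf, f1, f2, f3]; simp [h]
    · rw [hlf2, hdot _ w x y t hw, f1, f2, f3]
      simp; field_simp
  have PCX : P (Polynomial.C Polynomial.X) := by
    refine ⟨lf (cr v e), 1, ?_, fun w x y t ht hw => ?_⟩
    · rw [hlf, h1, h2, h3]; simp [h]
    · rw [hlf2, hdot _ w x y t hw, h1, h2, h3, Polynomial.evalEval_C, Polynomial.eval_X]
      simp; field_simp
  have PCC : ∀ c, P (Polynomial.C (Polynomial.C c)) := by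
    intro c
    exact ⟨MvPolynomial.C c, 0, LQh_C _ _ _ _, fun w x y t ht hw => by simp⟩
  have Ppow : ∀ g n, P g → P (g ^ n) := by
    intro g n hg
    induction n with
    | zero => simpa using PCC 1
    | succ n ih => rw [pow_succ]; exact Pmul _ _ ih hg
  have PC : ∀ c : k[X], P (Polynomial.C c) := by
    intro c
    induction c using Polynomial.induction_on' with
    | add a b ha hb => rw [Polynomial.C_add]; exact Padd _ _ ha hb
    | monomial n a =>
      rw [← Polynomial.C_mul_X_pow_eq_monomial, Polynomial.C_mul, Polynomial.C_pow]
      exact Pmul _ _ (PCC a) (Ppow _ _ PCX)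
  change P g
  induction g using Polynomial.induction_on' with
  | add a b ha hb => exact Padd _ _ ha hb
  | monomial n a =>
    rw [← Polynomial.C_mul_X_pow_eq_monomial]
    exact Pmul _ _ (PC a) (Ppow _ _ PX)

lemma LQ_prime {Q : MvPolynomial (Fin 3) k} (hQ : Irreducible Q) {n : ℕ} (hh : Q.IsHomogeneous n)
    (v e e' : Fin 3 → k) (h : d3 v e e' ≠ 0) (hu : ¬ IsUnit (LQh v e e' Q)) (h0 : LQh v e e' Q ≠ 0) :
    Prime (LQh v e e' Q) := by
  have hQp := hQ.prime
  refine ⟨h0, hu, ?_⟩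
  rintro g g' ⟨u, hgu⟩
  obtain ⟨G, a, rfl, hG⟩ := homogenize v e e' h g
  obtain ⟨G', b, rfl, hG'⟩ := homogenize v e e' h g'
  obtain ⟨U, c, rfl, hU⟩ := homogenize v e e' h u
  -- the linear form
  let L : MvPolynomial (Fin 3) k := MvPolynomial.C (d3 v e e')⁻¹ * ∑ i, MvPolynomial.C (cr e' v i) * MvPolynomial.X i
  have hL : ∀ w, MvPolynomial.eval w L = (d3 v e e')⁻¹ * dot (cr e' v) w := by intro w; simp [L, dot]
  have hL1 : LQh v e e' L = 1 := by
    have g1 : dot (cr e' v) v = 0 := by simp only [dot3]; simp [cr]; ring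
    have g2 : dot (cr e' v) e = d3 v e e' := by simp only [dot3, d3_eq]; simp [cr]; ring
    have g3 : dot (cr e' v) e' = 0 := by simp only [dot3]; simp [cr]; ring
    have hlf : ∀ a : Fin 3 → k, LQh v e e' (MvPolynomial.C (d3 v e e')⁻¹ * ∑ i, MvPolynomial.C (a i) * MvPolynomial.X i)
      = Polynomial.C (Polynomial.C ((d3 v e e')⁻¹ * dot a v)) * Polynomial.X +
      Polynomial.C (Polynomial.C ((d3 v e e')⁻¹ * dot a e) + Polynomial.X * Polynomial.C ((d3 v e e')⁻¹ * dot a e')) := by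
      intro a
      simp only [map_mul, LQh_C, LQh_X, Fin.sum_univ_three, dot3, map_add]
      ring
    simp only [L]
    rw [hlf, g1, g2, g3]; simp [h]
  have hpoly : L ^ (n + c + 1) * (G * G') = L ^ (a + b + 1) * (Q * U) := by
    apply MvPolynomial.funext
    intro w
    simp only [map_mul, map_pow]
    by_cases ht : MvPolynomial.eval w L = 0
    · rw [ht]; simp
    · set t := MvPolynomial.eval w L with htd
      have ht1 : t * d3 v e e' = dot (cr e' v) w := by rw [htd, hL]; field_simp
      have hw : ∀ i, w i = t * ((dot (cr e e') w / (t * d3 v e e')) * v i + e i +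
          (dot (cr v e) w / (t * d3 v e e')) * e' i) := by
        intro i
        have := decomp v e e' w i
        rw [← ht1] at this
        field_simp
        linear_combination this
      rw [hG w _ _ t ht hw, hG' w _ _ t ht hw, hU w _ _ t ht hw]
      have hQw : MvPolynomial.eval w Q = t ^ n * (LQh v e e' Q).evalEval
          (dot (cr v e) w / (t * d3 v e e')) (dot (cr e e') w / (t * d3 v e e')) := by
        rw [LQh_evalEval, ← eval_smul_hom hh]
        congr 1
        congr 1
        ext i
        simpa using hw i
      rw [hQw]
      have := congrArg (Polynomial.evalEval (dot (cr v e) w / (t * d3 v e e')) (dot (cr e e') w / (t * d3 v e e'))) hgu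
      rw [Polynomial.evalEval_mul, Polynomial.evalEval_mul] at this
      linear_combination t ^ (n + c + 1 + a + b) * this
  have hdvd : Q ∣ L ^ (n + c + 1) * (G * G') := by
    rw [hpoly]; exact (dvd_mul_right _ _).mul_left _
  rcases hQp.dvd_or_dvd hdvd with h1 | h1
  · exfalso
    have := map_dvd (LQh v e e') (hQp.dvd_of_dvd_pow h1)
    rw [hL1] at this
    exact hu (isUnit_of_dvd_one this)
  · rcases hQp.dvd_or_dvd h1 with h2 | h2
    · left; exact map_dvd _ h2
    · right; exact map_dvd _ h2
end prime
end QC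

open MvPolynomial Filter
set_option linter.unusedSectionVars false
namespace QC
open scoped Polynomial
open IncidenceProb

section p2
variable {K : Type} [Field K]

lemma onCurve_mk {Q : MvPolynomial (Fin 3) K} {n : ℕ} (hQ : Q.IsHomogeneous n) (w : Fin 3 → K) (hw : w ≠ 0) :
    OnCurve Q (Projectivization.mk K w hw) ↔ MvPolynomial.eval w Q = 0 := by
  obtain ⟨a, ha⟩ := Projectivization.exists_smul_eq_mk_rep K w hw
  unfold OnCurve
  rw [← ha, Units.smul_def, eval_smul_hom hQ]
  simp

lemma dot_mk (a w : Fin 3 → K) (hw : w ≠ 0) :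
    (∑ i, a i * (Projectivization.mk K w hw).rep i = 0) ↔ dot a w = 0 := by
  obtain ⟨b, hb⟩ := Projectivization.exists_smul_eq_mk_rep K w hw
  rw [← hb]
  have : ∑ i, a i * (b • w) i = (b : K) * dot a w := by
    rw [dot, Finset.mul_sum]
    exact Finset.sum_congr rfl fun i _ => by simp [Units.smul_def]; ring
  rw [this]; simp

lemma incid_mk (a w : Fin 3 → K) (ha : a ≠ 0) (hw : w ≠ 0) :
    Incid (Projectivization.mk K a ha) (Projectivization.mk K w hw) ↔ dot a w = 0 := by
  unfold Incid
  rw [dot_mk]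
  obtain ⟨b, hb⟩ := Projectivization.exists_smul_eq_mk_rep K a ha
  rw [← hb]
  have : dot (b • a) w = (b : K) * dot a w := by
    rw [dot, dot, Finset.mul_sum]
    exact Finset.sum_congr rfl fun i _ => by simp [Units.smul_def]; ring
  rw [this]; simp

lemma span_of_dot {u w x : Fin 3 → K} (hc : cr u w ≠ 0) (hx : dot (cr u w) x = 0) :
    ∃ α β : K, x = fun i => α * u i + β * w i := by
  obtain ⟨j, hj⟩ := Function.ne_iff.1 hc
  have ht : d3 (Pi.single j 1) u w ≠ 0 := by
    rw [d3, dot, Finset.sum_eq_single j]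
    · simpa using hj
    · intro b _ hb; simp [Pi.single_apply, hb]
    · simp
  set t : Fin 3 → K := Pi.single j 1
  refine ⟨dot (cr w t) x / d3 t u w, dot (cr t u) x / d3 t u w, ?_⟩
  ext l
  have := decomp t u w x l
  rw [hx] at this
  field_simp
  linear_combination this

lemma cr_dot_left (u w : Fin 3 → K) : dot (cr u w) u = 0 := by simp only [dot3]; simp [cr]; ring
lemma cr_dot_right (u w : Fin 3 → K) : dot (cr u w) w = 0 := by simp only [dot3]; simp [cr]; ring

lemma cr_comb (u w : Fin 3 → K) (a b c d : K) : cr (fun i => a * u i + b * w i) (fun i => c * u i + d * w i) =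
    (a * d - b * c) • cr u w := by
  ext j; fin_cases j <;> simp [cr] <;> ring

lemma ne_zero_left {u w : Fin 3 → K} (hc : cr u w ≠ 0) : u ≠ 0 := by
  rintro rfl; apply hc; ext j; fin_cases j <;> simp [cr]

lemma ne_zero_right {u w : Fin 3 → K} (hc : cr u w ≠ 0) : w ≠ 0 := by
  rintro rfl; apply hc; ext j; fin_cases j <;> simp [cr]

lemma mk_eq_iff_cr {u w : Fin 3 → K} (hu : u ≠ 0) (hw : w ≠ 0) :
    Projectivization.mk K u hu = Projectivization.mk K w hw ↔ cr u w = 0 := by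
  rw [Projectivization.mk_eq_mk_iff']
  constructor
  · rintro ⟨a, rfl⟩
    ext j; fin_cases j <;> simp [cr] <;> ring
  · intro h
    obtain ⟨j, hj⟩ := Function.ne_iff.1 hw
    simp only [Pi.zero_apply] at hj
    refine ⟨u j / w j, ?_⟩
    have h0 := congrFun h 0
    have h1 := congrFun h 1
    have h2 := congrFun h 2
    simp [cr] at h0 h1 h2
    ext l
    simp only [Pi.smul_apply, smul_eq_mul]
    rw [div_mul_eq_mul_div, div_eq_iff hj]
    fin_cases j <;> fin_cases l <;> simp <;> first | ring1 | linear_combination h0 | linear_combination h1 | linear_combination h2 | linear_combination -h0 | linear_combination -h1 | linear_combination -h2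

lemma line_basis {L : Fin 3 → K} (hL : L ≠ 0) : ∃ (u w : Fin 3 → K) (c : K), c ≠ 0 ∧ cr u w = c • L := by
  obtain ⟨j, hj⟩ := Function.ne_iff.1 hL
  simp only [Pi.zero_apply] at hj
  fin_cases j
  · refine ⟨![-L 1, L 0, 0], ![-L 2, 0, L 0], L 0, hj, ?_⟩
    ext j; fin_cases j <;> simp [cr] <;> ring
  · refine ⟨![0, -L 2, L 1], ![L 1, -L 0, 0], L 1, hj, ?_⟩
    ext j; fin_cases j <;> simp [cr] <;> ring
  · refine ⟨![L 2, 0, -L 0], ![0, L 2, -L 1], L 2, hj, ?_⟩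
    ext j; fin_cases j <;> simp [cr] <;> ring

/-- restriction of Q to the line through v and e + x e' -/
noncomputable def rst (v e e' : Fin 3 → K) (x : K) (Q : MvPolynomial (Fin 3) K) : K[X] :=
  (LQh v e e' Q).map (Polynomial.evalRingHom x)

lemma rst_eval (v e e' : Fin 3 → K) (x y : K) (Q : MvPolynomial (Fin 3) K) :
    (rst v e e' x Q).eval y = MvPolynomial.eval (fun i => y * v i + e i + x * e' i) Q := by
  rw [← LQh_evalEval, rst]
  exact Polynomial.map_evalRingHom_eval x y _

lemma rst_natDegree {Q : MvPolynomial (Fin 3) K} {n : ℕ} (hQ : Q.IsHomogeneous n) (v e e' : Fin 3 → K) (x : K) :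
    (rst v e e' x Q).natDegree ≤ n :=
  Polynomial.natDegree_map_le.trans (TD_LQ hQ v e e').natDegree

lemma rst_coeff {Q : MvPolynomial (Fin 3) K} {n : ℕ} (hQ : Q.IsHomogeneous n) (v e e' : Fin 3 → K) (x : K) :
    (rst v e e' x Q).coeff n = MvPolynomial.eval v Q := by
  rw [rst, Polynomial.coeff_map, (TD_LQ hQ v e e').top]; simp

lemma exists_eval_ne [Infinite K] {Q : MvPolynomial (Fin 3) K} (hQ : Q ≠ 0) : ∃ O, MvPolynomial.eval O Q ≠ 0 := by
  by_contra h
  push Not at h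
  exact hQ (MvPolynomial.funext fun x => by simp [h x])

lemma LQ_natDegree {Q : MvPolynomial (Fin 3) K} {n : ℕ} (hh : Q.IsHomogeneous n) (v e e' : Fin 3 → K)
    (hv : MvPolynomial.eval v Q ≠ 0) : (LQh v e e' Q).natDegree = n := by
  apply le_antisymm (TD_LQ hh v e e').natDegree
  apply Polynomial.le_natDegree_of_ne_zero
  rw [(TD_LQ hh v e e').top]
  simpa using hv

lemma LQ_prime' [Infinite K] {Q : MvPolynomial (Fin 3) K} (hQ : Irreducible Q) {n : ℕ} (hn : 0 < n)
    (hh : Q.IsHomogeneous n) (v e e' : Fin 3 → K) (h : d3 v e e' ≠ 0) (hv : MvPolynomial.eval v Q ≠ 0) :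
    Prime (LQh v e e' Q) := by
  have hd := LQ_natDegree hh v e e' hv
  apply LQ_prime hQ hh v e e' h
  · intro hu
    have := Polynomial.natDegree_eq_zero_of_isUnit hu
    omega
  · intro h0
    rw [h0] at hd
    simp at hd; omega

lemma no_line [Infinite K] {Q : MvPolynomial (Fin 3) K} (hQ : Irreducible Q) (hh : Q.IsHomogeneous 4)
    {u w : Fin 3 → K} (hc : cr u w ≠ 0) (h : ∀ x y : K, MvPolynomial.eval (fun i => y * u i + x * w i) Q = 0) : False := by
  obtain ⟨O, hO⟩ := exists_eval_ne hQ.ne_zero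
  have hd : d3 O u w ≠ 0 := by
    intro hd
    have hx : dot (cr u w) O = 0 := by
      rw [← hd, d3, dot3, dot3]; ring
    obtain ⟨α, β, rfl⟩ := span_of_dot hc hx
    exact hO (h _ _)
  have hp := LQ_prime' hQ (by norm_num) hh O u w hd hO
  have hdeg := LQ_natDegree hh O u w hO
  have h0 : (LQh O u w Q).coeff 0 = 0 := by
    apply Polynomial.funext
    intro x
    have := LQh_evalEval O u w x 0 Q
    rw [Polynomial.evalEval, Polynomial.C_0, ← Polynomial.coeff_zero_eq_eval_zero] at this
    rw [this]
    simpa using h x 1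
  obtain ⟨g, hg⟩ := Polynomial.X_dvd_iff.2 h0
  rcases hp.irreducible.isUnit_or_isUnit hg with h1 | h1
  · exact Polynomial.not_isUnit_X h1
  · have h2 := Polynomial.natDegree_eq_zero_of_isUnit h1
    have h3 := Polynomial.natDegree_mul_le (p := Polynomial.X) (q := g)
    rw [← hg, hdeg, h2, Polynomial.natDegree_X] at h3
    omega

lemma no_line' [Infinite K] {Q : MvPolynomial (Fin 3) K} (hQ : Irreducible Q) (hh : Q.IsHomogeneous 4)
    {u w w' : Fin 3 → K} (x : K) (hc : cr u (fun i => w i + x * w' i) ≠ 0) : rst u w w' x Q ≠ 0 := by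
  intro h
  have hu : MvPolynomial.eval u Q = 0 := by rw [← rst_coeff hh u w w' x, h]; simp
  apply no_line hQ hh hc
  intro a y
  by_cases ha : a = 0
  · subst ha
    have := eval_smul_hom hh y u
    rw [hu, mul_zero] at this
    have e1 : (fun i => y * u i + 0 * (w i + x * w' i)) = y • u := by ext i; simp
    rw [e1, this]
  · have h1 := rst_eval u w w' x (y / a) Q
    rw [h, Polynomial.eval_zero] at h1
    have := eval_smul_hom hh a (fun i => y / a * u i + w i + x * w' i)
    rw [← h1, mul_zero] at this
    rw [← this]; congr 1; congr 1; ext i; simp; field_simp; ring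

lemma rst_map {k : Type} [Field k] (i : K →+* k) (v e e' : Fin 3 → K) (x : K) (Q : MvPolynomial (Fin 3) K) :
    (rst v e e' x Q).map i = rst (i ∘ v) (i ∘ e) (i ∘ e') (i x) (MvPolynomial.map i Q) := by
  rw [rst, rst, ← LQh_map, Polynomial.map_map, Polynomial.map_map]
  congr 1
  ext <;> simp

/-- points of the curve on a line -/
lemma line_le {k : Type} [Field k] [Infinite k] (i : K →+* k) {Q : MvPolynomial (Fin 3) K}
    (hQ : Irreducible (MvPolynomial.map i Q)) (hh : Q.IsHomogeneous 4) {a : Fin 3 → K} (ha : a ≠ 0) :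
    {x : P2 K | OnCurve Q x ∧ ∑ i, a i * x.rep i = 0}.Finite ∧
    {x : P2 K | OnCurve Q x ∧ ∑ i, a i * x.rep i = 0}.ncard ≤ 4 := by
  classical
  obtain ⟨u, w, c, hc, hcr⟩ := line_basis ha
  have hcr0 : cr u w ≠ 0 := by rw [hcr]; exact smul_ne_zero hc ha
  have hu0 := ne_zero_left hcr0
  have hne : rst u w 0 0 Q ≠ 0 := by
    intro h
    have := rst_map i u w 0 0 Q
    rw [h, Polynomial.map_zero] at this
    refine no_line' hQ (hh.map i) (i 0) ?_ this.symm
    intro h2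
    have h3 : cr (i ∘ u) (i ∘ w) = 0 := by
      rw [← h2]; congr 1; ext l; simp
    rw [map_cr] at h3
    apply hcr0
    ext l
    have := congrFun h3 l
    simpa using this
  have hw : ∀ y, (fun i => y * u i + 1 * w i) ≠ 0 := by
    intro y h
    apply hcr0
    have := cr_comb u w 1 0 y 1
    simp only [h] at this
    simp at this
    rw [← this]
    ext j; fin_cases j <;> simp [cr]
  let f : K → P2 K := fun y => Projectivization.mk K (fun i => y * u i + 1 * w i) (hw y)
  let T : Finset (P2 K) := ((rst u w 0 0 Q).roots.toFinset.image f) ∪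
    (if MvPolynomial.eval u Q = 0 then {Projectivization.mk K u hu0} else ∅)
  have hsub : {x : P2 K | OnCurve Q x ∧ ∑ i, a i * x.rep i = 0} ⊆ T := by
    rintro x ⟨hx, hl⟩
    induction x using Projectivization.ind with
    | h v hv =>
    rw [onCurve_mk hh] at hx
    rw [dot_mk] at hl
    have hl2 : dot (cr u w) v = 0 := by
      rw [hcr]; simp only [dot3] at hl ⊢
      simp only [Pi.smul_apply, smul_eq_mul]; linear_combination c * hl
    obtain ⟨α, β, rfl⟩ := span_of_dot hcr0 hl2
    simp only [T, Finset.coe_union, Set.mem_union, Finset.mem_coe]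
    by_cases hβ : β = 0
    · right
      subst hβ
      have hα : α ≠ 0 := by
        rintro rfl; apply hv; ext i; simp
      have hsm : (fun i => α * u i + 0 * w i) = α • u := by ext i; simp
      have hQu : MvPolynomial.eval u Q = 0 := by
        rw [hsm, eval_smul_hom hh] at hx
        simpa [hα] using hx
      rw [if_pos hQu, Finset.mem_singleton, mk_eq_iff_cr]
      have := cr_comb u w α 0 1 0
      simpa using this
    · left
      rw [Finset.mem_image]
      refine ⟨α / β, ?_, ?_⟩
      · rw [Multiset.mem_toFinset, Polynomial.mem_roots hne, Polynomial.IsRoot, rst_eval]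
        have : (fun i => α * u i + β * w i) = β • (fun i => α / β * u i + w i + 0 * (0 : Fin 3 → K) i) := by
          ext i; simp; field_simp
        rw [this, eval_smul_hom hh] at hx
        simpa [hβ] using hx
      · simp only [f]
        rw [mk_eq_iff_cr, cr_comb]
        have : α / β * β - 1 * α = 0 := by field_simp; ring
        rw [this]; simp
  have hT : T.card ≤ 4 := by
    refine (Finset.card_union_le _ _).trans ?_
    have h1 : ((rst u w 0 0 Q).roots.toFinset.image f).card ≤ (rst u w 0 0 Q).natDegree :=
      Finset.card_image_le.trans ((Multiset.toFinset_card_le _).trans (Polynomial.card_roots' _))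
    have h2 := rst_natDegree hh u w 0 0
    split_ifs with hQu
    · have h3 : (rst u w 0 0 Q).natDegree ≠ 4 := by
        intro h4
        have h5 := rst_coeff hh u w 0 0
        rw [hQu, ← h4, Polynomial.coeff_natDegree] at h5
        exact hne (Polynomial.leadingCoeff_eq_zero.1 h5)
      rw [Finset.card_singleton]; omega
    · rw [Finset.card_empty]; omega
  refine ⟨T.finite_toSet.subset hsub, ?_⟩
  calc _ ≤ (T : Set (P2 K)).ncard := Set.ncard_le_ncard hsub T.finite_toSet
    _ ≤ 4 := by rw [Set.ncard_coe_finset]; exact hT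

lemma part3 {k : Type} [Field k] [Infinite k] (i : K →+* k) {Q : MvPolynomial (Fin 3) K}
    (hQ : Irreducible (MvPolynomial.map i Q)) (hh : Q.IsHomogeneous 4) (L : P2 K) :
    Nat.card {x : P2 K // OnCurve Q x ∧ Incid L x} ≤ 4 :=
  (line_le i hQ hh (Projectivization.rep_nonzero L)).2
end p2
end QC

open MvPolynomial Filter
set_option linter.unusedSectionVars false
namespace QC
open scoped Polynomial
open IncidenceProb

section chart
variable {K : Type} [Field K]

def cv (v e e' : Fin 3 → K) (z : K × K) : Fin 3 → K := fun i => z.2 * v i + e i + z.1 * e' i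

lemma cv_dot (v e e' : Fin 3 → K) (z : K × K) : dot (cr e' v) (cv v e e' z) = d3 v e e' := by
  simp only [dot3, d3_eq, cv]; simp [cr]; ring

lemma cv_ne (v e e' : Fin 3 → K) (h : d3 v e e' ≠ 0) (z : K × K) : cv v e e' z ≠ 0 := by
  intro h0
  apply h
  rw [← cv_dot v e e' z, h0]; simp [dot3]

lemma cv_inj (v e e' : Fin 3 → K) (h : d3 v e e' ≠ 0) (z z' : K × K)
    (hz : cr (cv v e e' z) (cv v e e' z') = 0) : z = z' := by
  have h1 : dot v (cr (cv v e e' z) (cv v e e' z')) = d3 v e e' * (z'.1 - z.1) := by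
    simp only [dot3, d3_eq]; simp [cr, cv]; ring
  have h2 : dot e' (cr (cv v e e' z) (cv v e e' z')) = d3 v e e' * (z.2 - z'.2) := by
    simp only [dot3, d3_eq]; simp [cr, cv]; ring
  rw [hz] at h1 h2
  simp [dot3, h, sub_eq_zero] at h1 h2
  exact Prod.ext h1.symm h2

lemma chart_cases (v e e' w : Fin 3 → K) (h : d3 v e e' ≠ 0) : dot (cr e' v) w = 0 ∨
    ∃ (t : K) (z : K × K), t ≠ 0 ∧ w = t • cv v e e' z := by
  by_cases hw : dot (cr e' v) w = 0
  · exact Or.inl hw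
  · right
    refine ⟨dot (cr e' v) w / d3 v e e', (dot (cr v e) w / dot (cr e' v) w, dot (cr e e') w / dot (cr e' v) w),
      div_ne_zero hw h, ?_⟩
    ext i
    have := decomp v e e' w i
    simp only [cv, Pi.smul_apply, smul_eq_mul]
    field_simp
    linear_combination this

lemma inf_ne (v e e' : Fin 3 → K) (h : d3 v e e' ≠ 0) : cr e' v ≠ 0 := by
  intro h0
  apply h
  have : d3 v e e' = dot e (cr e' v) := by simp only [dot3, d3_eq]; simp [cr]; ring
  rw [this, h0]; simp [dot3]

lemma count_chart {k : Type} [Field k] [Infinite k] (i : K →+* k) [Finite K] {Q : MvPolynomial (Fin 3) K}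
    (hQ : Irreducible (MvPolynomial.map i Q)) (hh : Q.IsHomogeneous 4) (v e e' : Fin 3 → K) (h : d3 v e e' ≠ 0) :
    Nat.card {z : K × K // MvPolynomial.eval (cv v e e' z) Q = 0} ≤ Nat.card {x : P2 K // OnCurve Q x} ∧
    Nat.card {x : P2 K // OnCurve Q x} ≤ Nat.card {z : K × K // MvPolynomial.eval (cv v e e' z) Q = 0} + 4 := by
  let f : K × K → P2 K := fun z => Projectivization.mk K (cv v e e' z) (cv_ne v e e' h z)
  have hf : Function.Injective f := by
    intro z z' hz
    simp only [f] at hz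
    rw [mk_eq_iff_cr] at hz
    exact cv_inj v e e' h z z' hz
  have hfin : Finite (P2 K) := inferInstance
  let Z : Set (K × K) := {z | MvPolynomial.eval (cv v e e' z) Q = 0}
  let S : Set (P2 K) := {x | OnCurve Q x}
  let T : Set (P2 K) := {x : P2 K | OnCurve Q x ∧ ∑ i, cr e' v i * x.rep i = 0}
  have hT : T.ncard ≤ 4 := (line_le i hQ hh (inf_ne v e e' h)).2
  have h1 : f '' Z ⊆ S := by
    rintro _ ⟨z, hz, rfl⟩
    exact (onCurve_mk hh _ _).2 hz
  have h2 : S ⊆ f '' Z ∪ T := by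
    intro x hx
    induction x using Projectivization.ind with
    | h w hw =>
    rcases chart_cases v e e' w h with h0 | ⟨t, z, ht, rfl⟩
    · right
      exact ⟨hx, (dot_mk _ _ _).2 h0⟩
    · left
      have hx' := (onCurve_mk hh _ _).1 hx
      rw [eval_smul_hom hh] at hx'
      refine ⟨z, by simpa [ht, Z] using hx', ?_⟩
      simp only [f]
      rw [mk_eq_iff_cr]
      ext j; fin_cases j <;> simp [cr] <;> ring
  change Z.ncard ≤ S.ncard ∧ S.ncard ≤ Z.ncard + 4
  have h3 : (f '' Z).ncard = Z.ncard := Set.ncard_image_of_injective Z hf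
  refine ⟨h3 ▸ Set.ncard_le_ncard h1 (Set.toFinite _), ?_⟩
  calc S.ncard ≤ (f '' Z ∪ T).ncard := Set.ncard_le_ncard h2 (Set.toFinite _)
    _ ≤ _ := Set.ncard_union_le _ _
    _ ≤ _ := by omega

noncomputable def mch (v e e' : Fin 3 → K) (Q : MvPolynomial (Fin 3) K) : K[X][X] :=
  Polynomial.C (Polynomial.C (MvPolynomial.eval v Q)⁻¹) * LQh v e e' Q

lemma mch_evalEval (v e e' : Fin 3 → K) (Q : MvPolynomial (Fin 3) K) (x y : K) :
    (mch v e e' Q).evalEval x y = (MvPolynomial.eval v Q)⁻¹ * MvPolynomial.eval (cv v e e' (x, y)) Q := by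
  rw [mch, Polynomial.evalEval_mul, LQh_evalEval]
  simp only [Polynomial.evalEval_C, Polynomial.eval_C]
  rfl

lemma mch_coeff (v e e' : Fin 3 → K) (Q : MvPolynomial (Fin 3) K) (hh : Q.IsHomogeneous 4) (j : ℕ) :
    ((mch v e e' Q).coeff j).natDegree ≤ 4 := by
  rw [mch, Polynomial.coeff_C_mul]
  refine (Polynomial.natDegree_C_mul_le _ _).trans ?_
  exact ((TD_LQ hh v e e').coeff_natDegree j).trans (by omega)

lemma mch_natDegree (v e e' : Fin 3 → K) {Q : MvPolynomial (Fin 3) K} (hh : Q.IsHomogeneous 4)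
    (hv : MvPolynomial.eval v Q ≠ 0) : (mch v e e' Q).natDegree = 4 := by
  rw [mch, Polynomial.natDegree_C_mul (by simpa using hv), LQ_natDegree hh v e e' hv]

lemma mch_monic (v e e' : Fin 3 → K) {Q : MvPolynomial (Fin 3) K} (hh : Q.IsHomogeneous 4)
    (hv : MvPolynomial.eval v Q ≠ 0) : (mch v e e' Q).Monic := by
  rw [Polynomial.Monic, Polynomial.leadingCoeff, mch_natDegree v e e' hh hv, mch, Polynomial.coeff_C_mul,
    (TD_LQ hh v e e').top, ← Polynomial.C_mul]
  simp [hv]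

lemma mch_map {k : Type} [Field k] (i : K →+* k) (v e e' : Fin 3 → K) (Q : MvPolynomial (Fin 3) K) :
    (mch v e e' Q).map (Polynomial.mapRingHom i) = mch (i ∘ v) (i ∘ e) (i ∘ e') (MvPolynomial.map i Q) := by
  rw [mch, mch, Polynomial.map_mul, LQh_map]
  simp [MvPolynomial.eval_map, MvPolynomial.eval₂_comp]

lemma mch_prime [Infinite K] {Q : MvPolynomial (Fin 3) K} (hQ : Irreducible Q)
    (hh : Q.IsHomogeneous 4) (v e e' : Fin 3 → K) (h : d3 v e e' ≠ 0) (hv : MvPolynomial.eval v Q ≠ 0) :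
    Prime (mch v e e' Q) := by
  have := LQ_prime' hQ (by norm_num) hh v e e' h hv
  refine (Associated.prime_iff ?_).1 this
  rw [mch]
  rw [mul_comm]
  refine (associated_mul_unit_right _ _ ?_)
  rw [Polynomial.isUnit_C, Polynomial.isUnit_C]
  simpa using hv

lemma exists_comp {O z : Fin 3 → K} (h : cr O z ≠ 0) : ∃ δ, d3 O z δ ≠ 0 := by
  obtain ⟨j, hj⟩ := Function.ne_iff.1 h
  refine ⟨Pi.single j 1, ?_⟩
  have : d3 O z (Pi.single j 1) = dot (Pi.single j 1) (cr O z) := by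
    simp only [dot3, d3_eq]; simp [cr]; ring
  rw [this, dot, Finset.sum_eq_single j]
  · simpa using hj
  · intro b _ hb; simp [hb]
  · simp

lemma fin_zeros [IsAlgClosed K] {Q : MvPolynomial (Fin 3) K} (hQ : Irreducible Q)
    (hh : Q.IsHomogeneous 4) (H : MvPolynomial (Fin 3) K) (z : Fin 3 → K) (hz0 : z ≠ 0)
    (hz : MvPolynomial.eval z Q = 0) (hH : MvPolynomial.eval z H ≠ 0) :
    {x : P2 K | ∀ w (hw : w ≠ 0), Projectivization.mk K w hw = x →
      MvPolynomial.eval w Q = 0 ∧ MvPolynomial.eval w H = 0}.Finite := by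
  have : Infinite K := IsAlgClosed.instInfinite
  obtain ⟨O, hO⟩ := exists_eval_ne hQ.ne_zero
  have hO0 : O ≠ 0 := by
    rintro rfl
    apply hO
    have := eval_smul_hom hh 0 z
    rw [zero_smul] at this
    simpa using this
  have hcr : cr O z ≠ 0 := by
    intro h
    have h1 := (mk_eq_iff_cr hO0 hz0).2 h
    rw [Projectivization.mk_eq_mk_iff'] at h1
    obtain ⟨a, rfl⟩ := h1
    rw [eval_smul_hom hh, hz] at hO
    simp at hO
  obtain ⟨δ, hd⟩ := exists_comp hcr
  have hfin := zeros_finite (mch_monic O z δ hh hO) (mch_prime hQ hh O z δ hd hO)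
    (by rw [mch_natDegree O z δ hh hO]; norm_num) (G := LQh O z δ H) (by
      rintro ⟨g, hg⟩
      have := congrArg (Polynomial.evalEval 0 0) hg
      rw [LQh_evalEval, Polynomial.evalEval_mul, mch_evalEval] at this
      apply hH
      have e1 : (fun i => 0 * O i + z i + 0 * δ i) = z := by ext i; simp
      have e2 : cv O z δ (0, 0) = z := by ext i; simp [cv]
      rw [e1, e2, hz] at this
      simpa using this)
  have hinf := (line_le (RingHom.id K) (by rw [MvPolynomial.map_id]; exact hQ) hh (inf_ne O z δ hd)).1
  refine ((hfin.image (fun p => Projectivization.mk K (cv O z δ p) (cv_ne O z δ hd p))).union hinf).subset ?_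
  intro x hx
  induction x using Projectivization.ind with
  | h w hw =>
  rcases chart_cases O z δ w hd with h0 | ⟨t, p, ht, rfl⟩
  · right
    refine ⟨(onCurve_mk hh _ _).2 (hx w hw rfl).1, (dot_mk _ _ _).2 h0⟩
  · left
    have heq : Projectivization.mk K (cv O z δ p) (cv_ne O z δ hd p) = Projectivization.mk K (t • cv O z δ p) hw := by
      rw [mk_eq_iff_cr]
      ext j; fin_cases j <;> simp [cr] <;> ring
    refine ⟨p, ?_, heq⟩
    have h1 := hx _ (cv_ne O z δ hd p) heq
    refine ⟨?_, ?_⟩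
    · rw [mch_evalEval, h1.1, mul_zero]
    · rw [LQh_evalEval]; exact h1.2
end chart
end QC

open MvPolynomial Filter
set_option linter.unusedSectionVars false
namespace QC
open scoped Polynomial
open IncidenceProb

lemma chain_rule {R S : Type*} [CommRing R] [CommRing S] (φ : MvPolynomial (Fin 3) R →+* S[X])
    (hC : ∀ r, Polynomial.derivative (φ (MvPolynomial.C r)) = 0) (Q : MvPolynomial (Fin 3) R) :
    Polynomial.derivative (φ Q) =
      ∑ j, φ (MvPolynomial.pderiv j Q) * Polynomial.derivative (φ (MvPolynomial.X j)) := by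
  induction Q using MvPolynomial.induction_on with
  | C a => simp [hC]
  | add p q hp hq => simp only [map_add, hp, hq, add_mul, Finset.sum_add_distrib]
  | mul_X p n hp =>
    rw [map_mul, Polynomial.derivative_mul, hp, Finset.sum_mul]
    simp only [Derivation.leibniz, MvPolynomial.pderiv_X, smul_eq_mul, map_add, map_mul, add_mul,
      Finset.sum_add_distrib]
    rw [add_comm]
    refine congrArg₂ (· + ·) ?_ ?_
    · rw [Finset.sum_eq_single n]
      · simp
      · intro b _ hb
        simp [Pi.single_apply, hb.symm]
      · simp
    · refine Finset.sum_congr rfl fun j _ => by ring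

section vec
variable {R : Type*} [CommRing R]
/-- polar derivative in direction v -/
noncomputable def pol (v : Fin 3 → R) (Q : MvPolynomial (Fin 3) R) : MvPolynomial (Fin 3) R :=
  ∑ r, MvPolynomial.C (v r) * MvPolynomial.pderiv r Q

lemma pol_eval (v w : Fin 3 → R) (Q : MvPolynomial (Fin 3) R) : MvPolynomial.eval w (pol v Q) =
    dot v (fun r => MvPolynomial.eval w (MvPolynomial.pderiv r Q)) := by
  simp [pol, dot]

lemma pol_hom (v : Fin 3 → R) {Q : MvPolynomial (Fin 3) R} {n : ℕ} (hh : Q.IsHomogeneous n) :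
    (pol v Q).IsHomogeneous (n - 1) := by
  apply MvPolynomial.IsHomogeneous.sum
  intro r _
  have := (MvPolynomial.isHomogeneous_C (Fin 3) (v r)).mul (hh.pderiv (i := r))
  rwa [zero_add] at this

lemma LQh_derivative (v e e' : Fin 3 → R) (Q : MvPolynomial (Fin 3) R) :
    Polynomial.derivative (LQh v e e' Q) = LQh v e e' (pol v Q) := by
  rw [chain_rule (LQh v e e') (by intro r; simp [LQh_C])]
  rw [pol, map_sum]
  refine Finset.sum_congr rfl fun j _ => ?_
  rw [map_mul, LQh_C, LQh_X]
  simp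
  ring
end vec

section cnt
lemma LQh_ne {k : Type} [Field k] [Infinite k] {H : MvPolynomial (Fin 3) k} {n : ℕ} (hh : H.IsHomogeneous n)
    (hH : H ≠ 0) (v e e' : Fin 3 → k) (h : d3 v e e' ≠ 0) : LQh v e e' H ≠ 0 := by
  intro h0
  let L : MvPolynomial (Fin 3) k := ∑ i, MvPolynomial.C (cr e' v i) * MvPolynomial.X i
  have hL : ∀ w, MvPolynomial.eval w L = dot (cr e' v) w := by intro w; simp [L, dot]
  have hL0 : L ≠ 0 := by
    intro hL0
    have := hL (cv v e e' (0, 0))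
    rw [hL0, cv_dot] at this
    exact h (by simpa using this.symm)
  obtain ⟨w, hw⟩ := exists_eval_ne (mul_ne_zero hL0 hH)
  rw [map_mul, hL] at hw
  rcases chart_cases v e e' w h with h1 | ⟨t, z, ht, rfl⟩
  · rw [h1, zero_mul] at hw; exact hw rfl
  · rw [eval_smul_hom hh] at hw
    have := LQh_evalEval v e e' z.1 z.2 H
    rw [h0] at this
    apply hw
    change _ * (_ * MvPolynomial.eval (fun i => z.2 * v i + e i + z.1 * e' i) H) = 0
    rw [← this]; simp

lemma curve_count (k : Type) [Field k] [IsAlgClosed k] (p : ℕ) [Fact p.Prime] [CharP k p]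
    (Q : MvPolynomial (Fin 3) k) (hQ : Irreducible Q) (hh : Q.IsHomogeneous 4) (r0 : Fin 3)
    (hr0 : MvPolynomial.pderiv r0 Q ≠ 0) :
    ∃ C : ℕ, ∀ (K : Type) [Field K] [Fintype K] (i : K →+* k) (Q0 : MvPolynomial (Fin 3) K) (a b : ℕ),
      Q0.IsHomogeneous 4 → MvPolynomial.map i Q0 = Q →
      Fintype.card K = p ^ a * p ^ b → a ≤ b → b ≤ a + 1 → C ≤ p ^ b →
      Nat.card {x : P2 K // OnCurve Q0 x} ≤ p ^ a * p ^ b + C * p ^ b ∧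
      p ^ a * p ^ b ≤ Nat.card {x : P2 K // OnCurve Q0 x} + C * p ^ b := by
  have : Infinite k := IsAlgClosed.instInfinite
  obtain ⟨C, hC⟩ := planar k p 4 4 (by norm_num)
  obtain ⟨c, hc⟩ := exists_eval_ne hr0
  let g : Fin 3 → k := fun r => MvPolynomial.eval c (MvPolynomial.pderiv r Q)
  let L : MvPolynomial (Fin 3) k := ∑ i, MvPolynomial.C (g i) * MvPolynomial.X i
  have hL : ∀ w, MvPolynomial.eval w L = dot w g := by
    intro w; simp [L, dot, mul_comm]
  have hL0 : L ≠ 0 := by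
    intro hL0
    have := hL (Pi.single r0 1)
    rw [hL0, dot, Finset.sum_eq_single r0] at this
    · apply hc; simpa [g] using this.symm
    · intro b _ hb; simp [hb]
    · simp
  let W := Q * L
  have hW : W ≠ 0 := mul_ne_zero hQ.ne_zero hL0
  refine ⟨C + W.totalDegree + 4, ?_⟩
  intro K _ _ i Q0 a b hh0 hmap hcard hab hba hCb
  have hp : 0 < p := (Fact.out : p.Prime).pos
  have hcardK : W.totalDegree < Fintype.card K := by
    rw [hcard]
    have := Nat.one_le_pow a p hp
    nlinarith
  obtain ⟨O, hO⟩ : ∃ O : Fin 3 → K, MvPolynomial.eval (i ∘ O) W ≠ 0 := by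
    by_contra hcon
    push Not at hcon
    apply hW
    classical
    refine MvPolynomial.eq_zero_of_eval_zero_at_prod_finset W (fun _ => Finset.univ.image i) ?_ ?_
    · intro j
      rw [Finset.card_image_of_injective _ i.injective, Finset.card_univ]
      exact (MvPolynomial.degreeOf_le_totalDegree _ _).trans_lt hcardK
    · intro x hx
      choose y hy using fun j => Finset.mem_image.1 (hx j)
      have : x = i ∘ y := by ext j; exact (hy j).2.symm
      rw [this]; exact hcon y
  rw [map_mul, hL] at hO
  have hO1 := left_ne_zero_of_mul hO
  have hO2 := right_ne_zero_of_mul hO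
  have hQO : MvPolynomial.eval O Q0 ≠ 0 := by
    intro h
    apply hO1
    rw [← hmap, MvPolynomial.eval_map, ← MvPolynomial.eval₂_comp, h, map_zero]
  have hO0 : O ≠ 0 := by
    rintro rfl
    apply hQO
    have := eval_smul_hom hh0 0 0
    rw [zero_smul] at this
    simpa using this
  obtain ⟨u, w, c', hc', huw⟩ := line_basis hO0
  have hd : ∃ e e', d3 O e e' ≠ 0 := by
    obtain ⟨l, hl⟩ := Function.ne_iff.1 hO0
    simp only [Pi.zero_apply] at hl
    fin_cases l
    · refine ⟨![0, 1, 0], ![0, 0, 1], ?_⟩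
      rw [d3_eq]; simpa using hl
    · refine ⟨![0, 0, 1], ![1, 0, 0], ?_⟩
      rw [d3_eq]; simpa using hl
    · refine ⟨![1, 0, 0], ![0, 1, 0], ?_⟩
      rw [d3_eq]; simpa using hl
  obtain ⟨e, e', hd⟩ := hd
  have hdk : d3 (i ∘ O) (i ∘ e) (i ∘ e') ≠ 0 := by
    rw [map_d3]; simpa using hd
  have hirr : Irreducible (MvPolynomial.map i Q0) := by rw [hmap]; exact hQ
  have hcnt := count_chart i hirr hh0 O e e' hd
  have hpl := hC K i (mch O e e' Q0) a b hcard hab hba (by omega) (mch_monic O e e' hh0 hQO)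
    (mch_natDegree O e e' hh0 hQO) (mch_coeff O e e' Q0 hh0) (by
      rw [mch_map, hmap]
      exact mch_prime hQ hh _ _ _ hdk hO1) (by
      rw [mch_map, hmap, mch, Polynomial.derivative_C_mul, LQh_derivative]
      refine mul_ne_zero (by simpa using hO1) (LQh_ne (pol_hom _ hh) ?_ _ _ _ hdk)
      intro h0
      apply hO2
      have := pol_eval (i ∘ O) c Q
      rw [h0] at this
      simpa using this.symm)
  have heq : Nat.card {z : K × K // (mch O e e' Q0).evalEval z.1 z.2 = 0} =
      Nat.card {z : K × K // MvPolynomial.eval (cv O e e' z) Q0 = 0} := by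
    refine Nat.card_congr (Equiv.subtypeEquivRight fun z => ?_)
    rw [mch_evalEval]
    simp [hQO]
  rw [heq] at hpl
  have hpb : 1 ≤ p ^ b := Nat.one_le_pow b p hp
  constructor
  · nlinarith [hcnt.1, hcnt.2, hpl.1]
  · nlinarith [hcnt.1, hcnt.2, hpl.2]
end cnt
end QC

open MvPolynomial Filter
set_option linter.unusedSectionVars false
namespace QC
open scoped Polynomial

section alg
def sv {R : Type*} [CommRing R] (a b c d : R) : R := 3 * a * d - b * c
def mv {R : Type*} [CommRing R] (a b c d : R) : R :=
  b ^ 3 * d + a * c ^ 3 - 6 * a * b * c * d + 9 * a ^ 2 * d ^ 2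

lemma resF_prime {k : Type*} [Field k] (s m : k[X]) (hD : s ^ 2 - 4 * m ≠ 0)
    (hE : ¬ s ^ 2 - 4 * m ∣ m.derivative ^ 2 - s.derivative * m.derivative * s + s.derivative ^ 2 * m) :
    Prime (Polynomial.X ^ 2 - Polynomial.C s * Polynomial.X + Polynomial.C m : k[X][X]) ∧
    (Polynomial.X ^ 2 - Polynomial.C s * Polynomial.X + Polynomial.C m : k[X][X]).derivative ≠ 0 := by
  set f : k[X][X] := Polynomial.X ^ 2 - Polynomial.C s * Polynomial.X + Polynomial.C m with hf
  have hf' : f = Polynomial.X ^ 2 + (- Polynomial.C s * Polynomial.X + Polynomial.C m) := by rw [hf]; ring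
  have hlin : (- Polynomial.C s * Polynomial.X + Polynomial.C m).degree < 2 := by
    rw [← Polynomial.C_neg]
    exact Polynomial.degree_linear_lt
  have hmon : f.Monic := by
    rw [hf']; exact Polynomial.monic_X_pow_add (by simpa using hlin)
  have hnat : f.natDegree = 2 := by
    rw [hf']
    rw [Polynomial.natDegree_add_eq_left_of_degree_lt (by simpa using hlin), Polynomial.natDegree_X_pow]
  constructor
  · rw [← irreducible_iff_prime, hmon.irreducible_iff_roots_eq_zero_of_degree_le_three (by omega) (by omega)]
    rw [Multiset.eq_zero_iff_forall_notMem]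
    intro T hT
    rw [Polynomial.mem_roots hmon.ne_zero] at hT
    have h1 : T ^ 2 - s * T + m = 0 := by simpa [hf] using hT
    apply hE
    have hm : m = T * (s - T) := by linear_combination h1
    have hs : s.derivative = T.derivative + (s - T).derivative := by simp
    have hm' : m.derivative = T.derivative * (s - T) + T * (s - T).derivative := by
      conv_lhs => rw [hm]
      rw [Polynomial.derivative_mul]
    generalize m.derivative = md at *
    generalize s.derivative = sd at *
    generalize T.derivative = td at *
    generalize (s - T).derivative = ud at *
    refine ⟨-(td * ud), ?_⟩
    rw [hm', hs, hm]; ring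
  · intro h0
    apply hD
    have h1 : f.derivative = Polynomial.C 2 * Polynomial.X - Polynomial.C s := by
      rw [hf]; simp; norm_num; exact (map_ofNat Polynomial.C 2).symm
    rw [h1] at h0
    have a0 := congrArg (fun g => Polynomial.coeff g 0) h0
    have a1 := congrArg (fun g => Polynomial.coeff g 1) h0
    simp [Polynomial.coeff_C] at a0
    simp only [Polynomial.coeff_sub, Polynomial.coeff_C_mul, Polynomial.coeff_X_one, Polynomial.coeff_C,
      Polynomial.coeff_zero] at a1
    simp at a1
    rw [a0]
    have : (4 : k[X]) = 2 * 2 := by norm_num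
    rw [this, a1]; simp

variable {K : Type} [Field K]

lemma three_roots {a b c d y1 y2 : K} (ha : a ≠ 0)
    (hD : sv a b c d ^ 2 - 4 * mv a b c d ≠ 0) (h1 : a * y1 ^ 3 + b * y1 ^ 2 + c * y1 + d = 0)
    (h2 : y2 ^ 2 + (b / a + y1) * y2 + (c / a + y1 * (b / a + y1)) = 0) :
    ∃ y3, (a * y2 ^ 3 + b * y2 ^ 2 + c * y2 + d = 0) ∧ (a * y3 ^ 3 + b * y3 ^ 2 + c * y3 + d = 0) ∧
      y1 ≠ y2 ∧ y1 ≠ y3 ∧ y2 ≠ y3 := by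
  obtain ⟨B, hB⟩ : ∃ B, B = b / a + y1 := ⟨_, rfl⟩
  obtain ⟨G, hG⟩ : ∃ G, G = c / a + y1 * B := ⟨_, rfl⟩
  rw [← hB, ← hG] at h2
  have hb : b = a * (B - y1) := by rw [hB]; field_simp; ring
  have hc : c = a * (G - y1 * B) := by rw [hG]; field_simp; ring
  have hd : d = - a * y1 * G := by rw [hb, hc] at h1; linear_combination h1
  have hDD : sv a b c d ^ 2 - 4 * mv a b c d = a ^ 4 * (y1 ^ 2 + B * y1 + G) ^ 2 * (B ^ 2 - 4 * G) := by
    rw [hb, hc, hd, sv, mv]; ring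
  rw [hDD] at hD
  have hh : y1 ^ 2 + B * y1 + G ≠ 0 := by intro h; apply hD; rw [h]; ring
  have hq : B ^ 2 - 4 * G ≠ 0 := by intro h; apply hD; rw [h]; ring
  refine ⟨-B - y2, ?_, ?_, ?_, ?_, ?_⟩
  · rw [hb, hc, hd]; linear_combination a * (y2 - y1) * h2
  · rw [hb, hc, hd]; linear_combination a * (-B - y2 - y1) * h2
  · rintro rfl; exact hh h2
  · intro h; apply hh; rw [h]; linear_combination h2
  · intro h; apply hq
    have : B = - 2 * y2 := by linear_combination h
    rw [this] at h2 ⊢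
    linear_combination -4 * h2

lemma quad_root {a b c d y1 T : K} (ha : a ≠ 0)
    (hD : sv a b c d ^ 2 - 4 * mv a b c d ≠ 0) (h1 : a * y1 ^ 3 + b * y1 ^ 2 + c * y1 + d = 0)
    (hT : T ^ 2 - sv a b c d * T + mv a b c d = 0) :
    ∃ y2, y2 ^ 2 + (b / a + y1) * y2 + (c / a + y1 * (b / a + y1)) = 0 := by
  obtain ⟨B, hB⟩ : ∃ B, B = b / a + y1 := ⟨_, rfl⟩
  obtain ⟨G, hG⟩ : ∃ G, G = c / a + y1 * B := ⟨_, rfl⟩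
  rw [← hB, ← hG]
  have hb : b = a * (B - y1) := by rw [hB]; field_simp; ring
  have hc : c = a * (G - y1 * B) := by rw [hG]; field_simp; ring
  have hd : d = - a * y1 * G := by rw [hb, hc] at h1; linear_combination h1
  have hDD : sv a b c d ^ 2 - 4 * mv a b c d = a ^ 4 * (y1 ^ 2 + B * y1 + G) ^ 2 * (B ^ 2 - 4 * G) := by
    rw [hb, hc, hd, sv, mv]; ring
  rw [hDD] at hD
  have hh : y1 ^ 2 + B * y1 + G ≠ 0 := by intro h; apply hD; rw [h]; ring
  obtain ⟨y2, hy2⟩ : ∃ y2, T = a ^ 2 * (y2 * (y1 ^ 2 + B * y1 + G) + y1 * (B ^ 2 - G)) := by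
    refine ⟨(T / a ^ 2 - y1 * (B ^ 2 - G)) / (y1 ^ 2 + B * y1 + G), ?_⟩
    rw [div_mul_cancel₀ _ hh]
    field_simp
    ring
  refine ⟨y2, ?_⟩
  have h3 : a ^ 4 * (y1 ^ 2 + B * y1 + G) ^ 2 * (y2 ^ 2 + B * y2 + G) = 0 := by
    rw [← hT, hy2, hb, hc, hd, sv, mv]; ring
  have h4 : a ^ 4 * (y1 ^ 2 + B * y1 + G) ^ 2 ≠ 0 := mul_ne_zero (pow_ne_zero _ ha) (pow_ne_zero _ hh)
  exact (mul_eq_zero.1 h3).resolve_left h4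

lemma sum_roots_ne {a b c d : K} (hab : ¬ (a = 0 ∧ b = 0 ∧ c = 0 ∧ d = 0)) [Fintype K] [DecidableEq K] :
    (Finset.univ.filter fun y : K => a * y ^ 3 + b * y ^ 2 + c * y + d = 0).card ≤ 3 := by
  let g : K[X] := Polynomial.C a * Polynomial.X ^ 3 + Polynomial.C b * Polynomial.X ^ 2 +
    Polynomial.C c * Polynomial.X + Polynomial.C d
  have hg : g ≠ 0 := by
    intro h0
    apply hab
    have e0 := congrArg (fun p => Polynomial.coeff p 0) h0
    have e1 := congrArg (fun p => Polynomial.coeff p 1) h0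
    have e2 := congrArg (fun p => Polynomial.coeff p 2) h0
    have e3 := congrArg (fun p => Polynomial.coeff p 3) h0
    simp [g, Polynomial.coeff_X, Polynomial.coeff_C, Polynomial.coeff_X_pow] at e0 e1 e2 e3
    exact ⟨e3, e2, e1, e0⟩
  have hdeg : g.natDegree ≤ 3 := Polynomial.natDegree_cubic_le
  refine le_trans (Finset.card_le_card (t := g.roots.toFinset) ?_)
    ((Multiset.toFinset_card_le _).trans ((Polynomial.card_roots' _).trans hdeg))
  intro y hy
  rw [Finset.mem_filter] at hy
  rw [Multiset.mem_toFinset, Polynomial.mem_roots hg]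
  simpa [g] using hy.2

lemma quad_le (s m : K) [Fintype K] [DecidableEq K] :
    (Finset.univ.filter fun y : K => y ^ 2 - s * y + m = 0).card ≤ 2 := by
  let g : K[X] := Polynomial.C 1 * Polynomial.X ^ 2 + Polynomial.C (-s) * Polynomial.X + Polynomial.C m
  have hg : g ≠ 0 := by
    intro h0
    have e2 := congrArg (fun p => Polynomial.coeff p 2) h0
    simp [g, Polynomial.coeff_X, Polynomial.coeff_C] at e2
  have hdeg : g.natDegree ≤ 2 := Polynomial.natDegree_quadratic_le
  refine le_trans (Finset.card_le_card (t := g.roots.toFinset) ?_)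
    ((Multiset.toFinset_card_le _).trans ((Polynomial.card_roots' _).trans hdeg))
  intro y hy
  rw [Finset.mem_filter] at hy
  rw [Multiset.mem_toFinset, Polynomial.mem_roots hg]
  have := hy.2
  simp only [g, Polynomial.IsRoot]
  simp
  linear_combination this

lemma cubic_count (a b c d : K) (hab : ¬ (a = 0 ∧ b = 0 ∧ c = 0 ∧ d = 0)) [Fintype K] [DecidableEq K] :
    2 * (Finset.univ.filter fun y : K => a * y ^ 3 + b * y ^ 2 + c * y + d = 0).card +
    (Finset.univ.filter fun y : K => y ^ 2 - sv a b c d * y + mv a b c d = 0).card ≤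
    2 + (if (Finset.univ.filter fun y : K => a * y ^ 3 + b * y ^ 2 + c * y + d = 0).card = 3 then 6 else 0)
    + (if a * (sv a b c d ^ 2 - 4 * mv a b c d) = 0 then 8 else 0) := by
  have hn := sum_roots_ne hab
  have ht := quad_le (sv a b c d) (mv a b c d)
  by_cases h0 : a * (sv a b c d ^ 2 - 4 * mv a b c d) = 0
  · rw [if_pos h0]; omega
  rw [if_neg h0]
  have ha := left_ne_zero_of_mul h0
  have hD := right_ne_zero_of_mul h0
  set S := Finset.univ.filter fun y : K => a * y ^ 3 + b * y ^ 2 + c * y + d = 0 with hS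
  set T := Finset.univ.filter fun y : K => y ^ 2 - sv a b c d * y + mv a b c d = 0 with hT
  by_cases h3 : S.card = 3
  · rw [if_pos h3]; omega
  rw [if_neg h3]
  have key : ∀ y1 y2, y1 ∈ S → y2 ^ 2 + (b / a + y1) * y2 + (c / a + y1 * (b / a + y1)) = 0 → False := by
    intro y1 y2 h1 h2
    have h1' := (Finset.mem_filter.1 h1).2
    obtain ⟨y3, q2, q3, n1, n2, n3⟩ := three_roots ha hD h1' h2
    have : ({y1, y2, y3} : Finset K) ⊆ S := by
      intro y hy
      simp only [Finset.mem_insert, Finset.mem_singleton] at hy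
      rcases hy with rfl | rfl | rfl
      · exact h1
      · exact Finset.mem_filter.2 ⟨Finset.mem_univ _, q2⟩
      · exact Finset.mem_filter.2 ⟨Finset.mem_univ _, q3⟩
    have h4 := Finset.card_le_card this
    rw [Finset.card_eq_three.2 ⟨y1, y2, y3, n1, n2, n3, rfl⟩] at h4
    omega
  rcases S.eq_empty_or_nonempty with hS0 | ⟨y1, h1⟩
  · rw [hS0]; simp; omega
  have hT0 : T = ∅ := by
    rw [Finset.eq_empty_iff_forall_notMem]
    intro t htT
    obtain ⟨y2, hy2⟩ := quad_root ha hD (Finset.mem_filter.1 h1).2 (Finset.mem_filter.1 htT).2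
    exact key y1 y2 h1 hy2
  have hS1 : S.card ≤ 1 := by
    rw [Finset.card_le_one]
    intro u hu w hw
    by_contra hne
    refine key u w hu ?_
    have hu' := (Finset.mem_filter.1 hu).2
    have hw' := (Finset.mem_filter.1 hw).2
    have h5 : (w - u) * (a * (w ^ 2 + (b / a + u) * w + (c / a + u * (b / a + u)))) = 0 := by
      field_simp
      linear_combination hw' - hu'
    rcases mul_eq_zero.1 h5 with h6 | h6
    · exact absurd (sub_eq_zero.1 h6).symm hne
    · exact (mul_eq_zero.1 h6).resolve_left ha
  rw [hT0]; simp; omega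
end alg
end QC

open MvPolynomial Filter
set_option linter.unusedSectionVars false
namespace QC
open scoped Polynomial

section defs
variable {R : Type*} [CommRing R]
noncomputable def SS (f : R[X][X]) : R[X] := sv (f.coeff 3) (f.coeff 2) (f.coeff 1) (f.coeff 0)
noncomputable def MM (f : R[X][X]) : R[X] := mv (f.coeff 3) (f.coeff 2) (f.coeff 1) (f.coeff 0)
noncomputable def DD (f : R[X][X]) : R[X] := f.coeff 3 * (SS f ^ 2 - 4 * MM f)
noncomputable def EE (f : R[X][X]) : R[X] := f.coeff 3 * ((MM f).derivative ^ 2 -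
  (SS f).derivative * (MM f).derivative * SS f + (SS f).derivative ^ 2 * MM f)
def Good (f : R[X][X]) : Prop := DD f ≠ 0 ∧ ¬ DD f ∣ EE f

lemma SS_map {S : Type*} [CommRing S] (i : R →+* S) (f : R[X][X]) :
    SS (f.map (Polynomial.mapRingHom i)) = (SS f).map i := by
  simp [SS, sv, Polynomial.coeff_map]
lemma MM_map {S : Type*} [CommRing S] (i : R →+* S) (f : R[X][X]) :
    MM (f.map (Polynomial.mapRingHom i)) = (MM f).map i := by
  simp [MM, mv, Polynomial.coeff_map]
lemma DD_map {S : Type*} [CommRing S] (i : R →+* S) (f : R[X][X]) :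
    DD (f.map (Polynomial.mapRingHom i)) = (DD f).map i := by
  rw [DD, DD, SS_map, MM_map]
  simp [Polynomial.coeff_map]
lemma EE_map {S : Type*} [CommRing S] (i : R →+* S) (f : R[X][X]) :
    EE (f.map (Polynomial.mapRingHom i)) = (EE f).map i := by
  rw [EE, EE, SS_map, MM_map]
  simp [Polynomial.coeff_map, Polynomial.derivative_map]

lemma nd_mul {p q : R[X]} {m n l : ℕ} (hp : p.natDegree ≤ m) (hq : q.natDegree ≤ n) (h : m + n ≤ l) :
    (p * q).natDegree ≤ l := (Polynomial.natDegree_mul_le_of_le hp hq).trans h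
lemma nd_pow {p : R[X]} {m l : ℕ} (n : ℕ) (hp : p.natDegree ≤ m) (h : n * m ≤ l) :
    (p ^ n).natDegree ≤ l := (Polynomial.natDegree_pow_le_of_le n hp).trans h
lemma nd_add {p q : R[X]} {l : ℕ} (hp : p.natDegree ≤ l) (hq : q.natDegree ≤ l) :
    (p + q).natDegree ≤ l := Polynomial.natDegree_add_le_of_degree_le hp hq
lemma nd_sub {p q : R[X]} {l : ℕ} (hp : p.natDegree ≤ l) (hq : q.natDegree ≤ l) :
    (p - q).natDegree ≤ l := by
  rw [sub_eq_add_neg]; exact nd_add hp (by rwa [Polynomial.natDegree_neg])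
lemma nd_ofNat (n : ℕ) [n.AtLeastTwo] : ((OfNat.ofNat n : R[X])).natDegree ≤ 0 :=
  (Polynomial.natDegree_ofNat n).le

lemma SS_deg {f : R[X][X]} {c : R} (h : TD 4 f c) : (SS f).natDegree ≤ 5 := by
  have h1 := h.coeff_natDegree
  rw [SS, sv]
  refine nd_sub (nd_mul (nd_mul (nd_ofNat 3) (h1 3) le_rfl) (h1 0) (by norm_num)) (nd_mul (h1 2) (h1 1) (by norm_num))

lemma MM_deg {f : R[X][X]} {c : R} (h : TD 4 f c) : (MM f).natDegree ≤ 10 := by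
  have h1 := h.coeff_natDegree
  rw [MM, mv]
  refine nd_add (nd_sub (nd_add (nd_mul (nd_pow 3 (h1 2) le_rfl) (h1 0) (by norm_num))
    (nd_mul (h1 3) (nd_pow 3 (h1 1) le_rfl) (by norm_num)))
    (nd_mul (nd_mul (nd_mul (nd_mul (nd_ofNat 6) (h1 3) le_rfl) (h1 2) le_rfl) (h1 1) le_rfl) (h1 0) (by norm_num)))
    (nd_mul (nd_mul (nd_ofNat 9) (nd_pow 2 (h1 3) le_rfl) le_rfl) (nd_pow 2 (h1 0) le_rfl) (by norm_num))

lemma DD_deg {f : R[X][X]} {c : R} (h : TD 4 f c) : (DD f).natDegree ≤ 20 := by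
  have h1 := h.coeff_natDegree
  rw [DD]
  exact nd_mul (h1 3) (nd_sub (nd_pow 2 (SS_deg h) le_rfl) (nd_mul (nd_ofNat 4) (MM_deg h) (by norm_num))) (by norm_num)

lemma EE_deg {f : R[X][X]} {c : R} (h : TD 4 f c) : (EE f).natDegree ≤ 20 := by
  have h1 := h.coeff_natDegree
  have hs := (Polynomial.natDegree_derivative_le (SS f)).trans (Nat.sub_le_sub_right (SS_deg h) 1)
  have hm := (Polynomial.natDegree_derivative_le (MM f)).trans (Nat.sub_le_sub_right (MM_deg h) 1)
  rw [EE]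
  exact nd_mul (n := 18) (h1 3) (nd_add (nd_sub (nd_pow 2 hm (by norm_num)) (nd_mul (nd_mul hs hm le_rfl) (SS_deg h) (by norm_num)))
    (nd_mul (nd_pow 2 hs le_rfl) (MM_deg h) (by norm_num))) (by norm_num)
end defs

section good
variable {k : Type} [Field k]

lemma LQh_smul_coeff (l : k) (v e e' : Fin 3 → k) (Q : MvPolynomial (Fin 3) k) (j : ℕ) :
    (LQh (l • v) e e' Q).coeff j = (LQh v e e' Q).coeff j * Polynomial.C l ^ j := by
  have : LQh (l • v) e e' = (Polynomial.compRingHom (Polynomial.C (Polynomial.C l) * Polynomial.X)).comp (LQh v e e') := by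
    apply MvPolynomial.ringHom_ext
    · intro r; simp [LQh_C]
    · intro i; simp [LQh_X]; ring
  rw [this, RingHom.comp_apply, Polynomial.coe_compRingHom_apply, Polynomial.comp_C_mul_X_coeff]

lemma Good_smul {l : k} (hl : l ≠ 0) (v e e' : Fin 3 → k) (Q : MvPolynomial (Fin 3) k)
    (h : Good (LQh v e e' Q)) : Good (LQh (l • v) e e' Q) := by
  have h1 : SS (LQh (l • v) e e' Q) = Polynomial.C (l ^ 3) * SS (LQh v e e' Q) := by
    simp only [SS, sv, LQh_smul_coeff, Polynomial.C_pow]; ring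
  have h2 : MM (LQh (l • v) e e' Q) = Polynomial.C (l ^ 6) * MM (LQh v e e' Q) := by
    simp only [MM, mv, LQh_smul_coeff, Polynomial.C_pow]; ring
  have h3 : DD (LQh (l • v) e e' Q) = Polynomial.C (l ^ 9) * DD (LQh v e e' Q) := by
    rw [DD, DD, h1, h2, LQh_smul_coeff]; simp only [Polynomial.C_pow]; ring
  have h4 : EE (LQh (l • v) e e' Q) = Polynomial.C (l ^ 15) * EE (LQh v e e' Q) := by
    rw [EE, EE, h1, h2, LQh_smul_coeff, Polynomial.derivative_C_mul, Polynomial.derivative_C_mul]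
    simp only [Polynomial.C_pow]; ring
  have u9 : IsUnit (Polynomial.C (l ^ 9)) := by rw [Polynomial.isUnit_C]; simpa using hl
  have u15 : IsUnit (Polynomial.C (l ^ 15)) := by rw [Polynomial.isUnit_C]; simpa using hl
  rw [Good, h3, h4]
  refine ⟨mul_ne_zero u9.ne_zero h.1, fun hd => h.2 ?_⟩
  rw [u9.mul_left_dvd] at hd
  rwa [u15.dvd_mul_left] at hd

/-- rows -/
noncomputable def row {R : Type*} [CommRing R] (D E : R[X]) : Option (Fin 21) → R[X]
  | none => E
  | some j => Polynomial.X ^ (j : ℕ) * D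

noncomputable def rmat {R : Type*} [CommRing R] (D E : R[X]) : Matrix (Option (Fin 21)) (Fin 42) R :=
  fun a l => (row D E a).coeff l

lemma row_deg {D E : k[X]} (hD : D.natDegree ≤ 20) (hE : E.natDegree ≤ 20) (a) : (row D E a).natDegree < 42 := by
  rcases a with _ | j
  · change E.natDegree < 42; omega
  · have := j.2
    refine Nat.lt_of_le_of_lt (nd_mul (m := j) (n := 20) (l := 41) (Polynomial.natDegree_X_pow_le _) hD (by omega)) (by omega)

lemma vecMul_rmat {D E : k[X]} (hD : D.natDegree ≤ 20) (hE : E.natDegree ≤ 20) (x : Option (Fin 21) → k) :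
    Matrix.vecMul x (rmat D E) = 0 ↔ ∑ a, Polynomial.C (x a) * row D E a = 0 := by
  constructor
  · intro h
    ext n
    rw [Polynomial.finsetSum_coeff]
    simp only [Polynomial.coeff_C_mul, Polynomial.coeff_zero]
    by_cases hn : n < 42
    · have := congrFun h ⟨n, hn⟩
      simpa [Matrix.vecMul, dotProduct, rmat] using this
    · refine Finset.sum_eq_zero fun a _ => ?_
      rw [Polynomial.coeff_eq_zero_of_natDegree_lt ((row_deg hD hE a).trans_le (by omega)), mul_zero]
  · intro h
    ext l
    have := congrArg (fun p => Polynomial.coeff p l) h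
    simp only [Polynomial.finsetSum_coeff, Polynomial.coeff_C_mul, Polynomial.coeff_zero] at this
    simpa [Matrix.vecMul, dotProduct, rmat] using this

lemma good_indep {D E : k[X]} (hD : D.natDegree ≤ 20) (hE : E.natDegree ≤ 20) (hD0 : D ≠ 0) (hDE : ¬ D ∣ E)
    (x : Option (Fin 21) → k) (hx : Matrix.vecMul x (rmat D E) = 0) : x = 0 := by
  rw [vecMul_rmat hD hE, Fintype.sum_option] at hx
  simp only [row] at hx
  have h1 : ∑ j : Fin 21, Polynomial.C (x (some j)) * (Polynomial.X ^ (j : ℕ) * D) =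
      (∑ j : Fin 21, Polynomial.C (x (some j)) * Polynomial.X ^ (j : ℕ)) * D := by
    rw [Finset.sum_mul]; exact Finset.sum_congr rfl fun j _ => by ring
  rw [h1] at hx
  have hn : x none = 0 := by
    by_contra hn
    apply hDE
    have u : IsUnit (Polynomial.C (x none)) := by rw [Polynomial.isUnit_C]; simpa using hn
    rw [← u.dvd_mul_left]
    exact ⟨-(∑ j : Fin 21, Polynomial.C (x (some j)) * Polynomial.X ^ (j : ℕ)), by linear_combination hx⟩
  rw [hn, Polynomial.C_0, zero_mul, zero_add] at hx
  have h2 := (mul_eq_zero.1 hx).resolve_right hD0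
  ext a
  rcases a with _ | j
  · exact hn
  · have := congrArg (fun p => Polynomial.coeff p j) h2
    simp only [Polynomial.finsetSum_coeff, Polynomial.coeff_C_mul, Polynomial.coeff_zero, Polynomial.coeff_X_pow] at this
    rw [Finset.sum_eq_single j] at this
    · simpa using this
    · intro b _ hb
      rw [if_neg (by intro h; exact hb (Fin.ext h.symm)), mul_zero]
    · simp

lemma bad_dep {D E : k[X]} (hD : D.natDegree ≤ 20) (hE : E.natDegree ≤ 20) (h : ¬ (D ≠ 0 ∧ ¬ D ∣ E)) :
    ∃ x, x ≠ 0 ∧ Matrix.vecMul x (rmat D E) = 0 := by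
  by_cases hD0 : D = 0
  · refine ⟨Pi.single (some 0) 1, by simp, ?_⟩
    rw [vecMul_rmat hD hE, Fintype.sum_option]
    simp [row, hD0]
  · have hdvd : D ∣ E := by tauto
    obtain ⟨g, hg⟩ := hdvd
    have hgd : g.natDegree ≤ 20 := by
      by_cases hg0 : g = 0
      · simp [hg0]
      · have := Polynomial.natDegree_mul hD0 hg0
        rw [← hg] at this; omega
    refine ⟨fun a => a.elim (-1) (fun j => g.coeff j), ?_, ?_⟩
    · intro h0
      have := congrFun h0 none
      simp at this
    · rw [vecMul_rmat hD hE, Fintype.sum_option]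
      have h1 : ∑ j : Fin 21, Polynomial.C (g.coeff j) * (Polynomial.X ^ (j : ℕ) * D) = g * D := by
        conv_rhs => rw [Polynomial.as_sum_range' g 21 (by omega), Finset.sum_mul, ← Fin.sum_univ_eq_sum_range
          (fun j => Polynomial.monomial j (g.coeff j) * D)]
        exact Finset.sum_congr rfl fun j _ => by rw [← Polynomial.C_mul_X_pow_eq_monomial]; ring
      simp only [row, Option.elim]
      rw [h1, hg]; simp; ring

noncomputable def fhat (e e' : Fin 3 → k) (Q : MvPolynomial (Fin 3) k) : (MvPolynomial (Fin 3) k)[X][X] :=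
  LQh (fun i => MvPolynomial.X i) (fun i => MvPolynomial.C (e i))
    (fun i => MvPolynomial.C (e' i)) (MvPolynomial.map MvPolynomial.C Q)

lemma fhat_map (e e' : Fin 3 → k) (Q : MvPolynomial (Fin 3) k) (z : Fin 3 → k) :
    (fhat e e' Q).map (Polynomial.mapRingHom (MvPolynomial.eval z)) = LQh z e e' Q := by
  rw [fhat, LQh_map, MvPolynomial.map_map]
  have h1 : (MvPolynomial.eval z).comp MvPolynomial.C = RingHom.id k := by ext; simp
  have e1 : (⇑(MvPolynomial.eval z) ∘ fun i => (MvPolynomial.X i : MvPolynomial (Fin 3) k)) = z := by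
    funext i; simp
  have e2 : ∀ u : Fin 3 → k, (⇑(MvPolynomial.eval z) ∘ fun i => (MvPolynomial.C (u i) : MvPolynomial (Fin 3) k)) = u := by
    intro u; funext i; simp
  rw [h1, MvPolynomial.map_id, e1, e2, e2]

lemma fhat_rmat (e e' : Fin 3 → k) (Q : MvPolynomial (Fin 3) k) (z : Fin 3 → k) :
    (rmat (DD (fhat e e' Q)) (EE (fhat e e' Q))).map (MvPolynomial.eval z) =
      rmat (DD (LQh z e e' Q)) (EE (LQh z e e' Q)) := by
  rw [← fhat_map, DD_map, EE_map]
  generalize DD (fhat e e' Q) = D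
  generalize EE (fhat e e' Q) = E
  funext a l
  rw [Matrix.map_apply, rmat, rmat, ← Polynomial.coeff_map]
  rcases a with _ | j
  · rfl
  · simp only [row]
    rw [Polynomial.map_mul, Polynomial.map_pow, Polynomial.map_X]

lemma right_inv {m n : Type} [Fintype m] [Fintype n] [DecidableEq m] [DecidableEq n] (M0 : Matrix m n k)
    (h : ∀ x, Matrix.vecMul x M0 = 0 → x = 0) : ∃ N : Matrix n m k, M0 * N = 1 := by
  have hker : LinearMap.ker M0.vecMulLinear = ⊥ := by
    rw [LinearMap.ker_eq_bot']
    intro x hx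
    exact h x hx
  obtain ⟨g, hg⟩ := LinearMap.exists_leftInverse_of_injective _ hker
  refine ⟨Matrix.of fun l => g (Pi.single l 1), ?_⟩
  ext a b
  have h1 : g (Matrix.vecMul (Pi.single a 1) M0) = Pi.single a 1 := DFunLike.congr_fun hg (Pi.single a 1)
  rw [Matrix.single_one_vecMul] at h1
  have h2 : M0.row a = ∑ l, M0 a l • (Pi.single l 1 : n → k) := by
    ext l
    simp [Finset.sum_apply, Pi.single_apply]
  rw [h2, map_sum] at h1
  have h3 := congrFun h1 b
  rw [Finset.sum_apply] at h3
  rw [Matrix.mul_apply, Matrix.one_apply]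
  simp only [map_smul, Pi.smul_apply, smul_eq_mul] at h3
  simp only [Matrix.of_apply]
  rw [h3, Pi.single_apply]
  simp [eq_comm]

lemma det_map_mul {R S : Type*} [CommRing R] [CommRing S] {m n : Type} [Fintype m] [Fintype n] [DecidableEq m]
    (i : R →+* S) (A : Matrix m n R) (B : Matrix n m R) :
    i (A * B).det = (A.map i * B.map i).det := by
  rw [RingHom.map_det, RingHom.mapMatrix_apply, Matrix.map_mul]

lemma exists_H (e e' p0 : Fin 3 → k) {Q : MvPolynomial (Fin 3) k} (hh : Q.IsHomogeneous 4)
    (h0 : Good (LQh p0 e e' Q)) : ∃ H : MvPolynomial (Fin 3) k, MvPolynomial.eval p0 H ≠ 0 ∧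
      ∀ z, ¬ Good (LQh z e e' Q) → MvPolynomial.eval z H = 0 := by
  have hdeg := fun z => TD_LQ hh z e e'
  obtain ⟨N, hN⟩ := right_inv (rmat (DD (LQh p0 e e' Q)) (EE (LQh p0 e e' Q)))
    (good_indep (DD_deg (hdeg p0)) (EE_deg (hdeg p0)) h0.1 h0.2)
  have hNm : ∀ z, (N.map (MvPolynomial.C (σ := Fin 3))).map (MvPolynomial.eval z) = N := by
    intro z; funext a b; rw [Matrix.map_apply, Matrix.map_apply, MvPolynomial.eval_C]
  let A : Matrix (Option (Fin 21)) (Fin 42) (MvPolynomial (Fin 3) k) := rmat (DD (fhat e e' Q)) (EE (fhat e e' Q))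
  let B : Matrix (Fin 42) (Option (Fin 21)) (MvPolynomial (Fin 3) k) := N.map MvPolynomial.C
  refine ⟨(A * B : Matrix (Option (Fin 21)) (Option (Fin 21)) (MvPolynomial (Fin 3) k)).det, ?_, ?_⟩
  · rw [det_map_mul, fhat_rmat, hNm, hN, Matrix.det_one]
    exact one_ne_zero
  · intro z hz
    rw [det_map_mul, fhat_rmat, hNm]
    obtain ⟨x, hx, hx0⟩ := bad_dep (DD_deg (hdeg z)) (EE_deg (hdeg z)) hz
    rw [← Matrix.exists_vecMul_eq_zero_iff]
    refine ⟨x, hx, ?_⟩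
    rw [← Matrix.vecMul_vecMul, hx0, Matrix.zero_vecMul]
end good
end QC

open MvPolynomial Filter
set_option linter.unusedSectionVars false
namespace QC
open scoped Polynomial
open IncidenceProb

section tang
variable {k : Type} [Field k]

lemma not_dvd_tan (f : k[X][X]) (m α β : k) (ha : (f.coeff 3).eval m ≠ 0) (hab : α ≠ β)
    (hb : (f.coeff 2).eval m = -(f.coeff 3).eval m * (2 * α + β))
    (hc : (f.coeff 1).eval m = (f.coeff 3).eval m * (α ^ 2 + 2 * α * β))
    (hd : (f.coeff 0).eval m = -(f.coeff 3).eval m * (α ^ 2 * β))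
    (hg : (f.coeff 3).derivative.eval m * α ^ 3 + (f.coeff 2).derivative.eval m * α ^ 2 +
      (f.coeff 1).derivative.eval m * α + (f.coeff 0).derivative.eval m ≠ 0) : ¬ DD f ∣ EE f := by
  intro h
  have h1 := Polynomial.eval_dvd (x := m) h
  set γ := (f.coeff 3).derivative.eval m * α ^ 3 + (f.coeff 2).derivative.eval m * α ^ 2 +
      (f.coeff 1).derivative.eval m * α + (f.coeff 0).derivative.eval m with hγ
  set a := (f.coeff 3).eval m with ha'
  set T := a ^ 2 * α * (α ^ 2 + α * β + β ^ 2) with hT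
  have hs : (SS f).eval m = 2 * T := by
    simp only [SS, sv, Polynomial.eval_sub, Polynomial.eval_mul, Polynomial.eval_ofNat, hb, hc, hd, ← ha', hT]
    ring
  have hm : (MM f).eval m = T ^ 2 := by
    simp only [MM, mv, Polynomial.eval_sub, Polynomial.eval_add, Polynomial.eval_pow, Polynomial.eval_mul, Polynomial.eval_ofNat, hb, hc, hd, ← ha', hT]
    ring
  have hE : (MM f).derivative.eval m - (SS f).derivative.eval m * T = a ^ 3 * (α - β) ^ 3 * γ := by
    simp only [MM, mv, SS, sv, Polynomial.derivative_sub, Polynomial.derivative_add, Polynomial.derivative_mul,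
      Polynomial.derivative_pow, Polynomial.derivative_ofNat, Polynomial.eval_sub, Polynomial.eval_add, Polynomial.eval_pow, Polynomial.eval_mul,
      Polynomial.eval_ofNat, Polynomial.eval_zero, Polynomial.eval_C, hb, hc, hd, ← ha', hT, hγ]
    push_cast
    ring
  have hD : (DD f).eval m = 0 := by
    simp only [DD, Polynomial.eval_sub, Polynomial.eval_mul, Polynomial.eval_pow, Polynomial.eval_ofNat, hs, hm]; ring
  have hEE : (EE f).eval m = a * (a ^ 3 * (α - β) ^ 3 * γ) ^ 2 := by
    rw [← hE]
    simp only [EE, Polynomial.eval_sub, Polynomial.eval_add, Polynomial.eval_mul, Polynomial.eval_pow, hs, hm]; ring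
  rw [hD, hEE, zero_dvd_iff] at h1
  have : α - β ≠ 0 := sub_ne_zero.2 hab
  simp_all

lemma double_root [IsAlgClosed k] (a b c d : k) (ha : a ≠ 0) (h : sv a b c d ^ 2 - 4 * mv a b c d = 0) :
    ∃ y, a * y ^ 3 + b * y ^ 2 + c * y + d = 0 ∧ 3 * a * y ^ 2 + 2 * b * y + c = 0 := by
  obtain ⟨r, hr⟩ : ∃ r, (Polynomial.C a * Polynomial.X ^ 3 + Polynomial.C b * Polynomial.X ^ 2 + Polynomial.C c * Polynomial.X + Polynomial.C d).IsRoot r :=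
    IsAlgClosed.exists_root _ (by rw [Polynomial.degree_cubic ha]; norm_num)
  obtain ⟨s, hs⟩ : ∃ s, (Polynomial.C a * Polynomial.X ^ 2 + Polynomial.C (a * r + b) * Polynomial.X + Polynomial.C (a * r ^ 2 + b * r + c)).IsRoot s :=
    IsAlgClosed.exists_root _ (by rw [Polynomial.degree_quadratic ha]; norm_num)
  simp only [Polynomial.IsRoot, Polynomial.eval_add, Polynomial.eval_mul, Polynomial.eval_C, Polynomial.eval_pow, Polynomial.eval_X] at hr hs
  -- third root
  obtain ⟨t, ht⟩ : ∃ t, b = - a * (r + s + t) := ⟨-b / a - r - s, by field_simp; ring⟩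
  have hc : c = a * (r * s + s * t + t * r) := by
    linear_combination hs - (s + r) * ht
  have hd : d = - a * (r * s * t) := by
    linear_combination hr - r ^ 2 * ht - r * hc
  subst ht hc hd
  have h2 : a ^ 4 * ((r - s) * (s - t) * (t - r)) ^ 2 = 0 := by
    rw [← h]; simp only [sv, mv]; ring
  have h3 : (r - s) * (s - t) * (t - r) = 0 := by
    have := (mul_eq_zero.1 h2).resolve_left (pow_ne_zero _ ha)
    exact pow_eq_zero_iff (by norm_num) |>.1 this
  rcases mul_eq_zero.1 h3 with h3 | h3
  · rcases mul_eq_zero.1 h3 with h3 | h3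
    · obtain rfl := sub_eq_zero.1 h3
      exact ⟨r, by ring, by ring⟩
    · obtain rfl := sub_eq_zero.1 h3
      exact ⟨s, by ring, by ring⟩
  · obtain rfl := sub_eq_zero.1 h3
    exact ⟨t, by ring, by ring⟩

lemma eval_cubic (g : k[X]) (h : g.natDegree ≤ 4) (h4 : g.coeff 4 = 0) (y : k) :
    g.eval y = g.coeff 3 * y ^ 3 + g.coeff 2 * y ^ 2 + g.coeff 1 * y + g.coeff 0 := by
  rw [Polynomial.eval_eq_sum_range' (Nat.lt_succ_of_le h)]
  simp [Finset.sum_range_succ, h4]; ring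

lemma eval_cubic' (g : k[X]) (h : g.natDegree ≤ 4) (h4 : g.coeff 4 = 0) (y : k) :
    g.derivative.eval y = 3 * g.coeff 3 * y ^ 2 + 2 * g.coeff 2 * y + g.coeff 1 := by
  rw [Polynomial.eval_eq_sum_range' (n := 4) (lt_of_le_of_lt (Polynomial.natDegree_derivative_le g) (by omega))]
  simp [Finset.sum_range_succ, Polynomial.coeff_derivative, h4]; ring

lemma rst_derivative (v e e' : Fin 3 → k) (x : k) (Q : MvPolynomial (Fin 3) k) :
    (rst v e e' x Q).derivative = rst v e e' x (pol v Q) := by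
  rw [rst, rst, ← LQh_derivative, Polynomial.derivative_map]

lemma rst_coeff' (v e e' : Fin 3 → k) (x : k) (Q : MvPolynomial (Fin 3) k) (j : ℕ) :
    (rst v e e' x Q).coeff j = ((LQh v e e' Q).coeff j).eval x := by
  rw [rst, Polynomial.coeff_map]; rfl

lemma gamma_eq (v e e' : Fin 3 → k) {Q : MvPolynomial (Fin 3) k} (hh : Q.IsHomogeneous 4) (hv : MvPolynomial.eval v Q = 0) (m α : k) :
    ((LQh v e e' Q).coeff 3).derivative.eval m * α ^ 3 + ((LQh v e e' Q).coeff 2).derivative.eval m * α ^ 2 +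
      ((LQh v e e' Q).coeff 1).derivative.eval m * α + ((LQh v e e' Q).coeff 0).derivative.eval m =
      MvPolynomial.eval (cv v e e' (m, α)) (pol e' Q) := by
  let φ : MvPolynomial (Fin 3) k →+* k[X] := (Polynomial.evalRingHom (Polynomial.C α)).comp (LQh v e e')
  have hφ : ∀ H, φ H = (LQh v e e' H).eval (Polynomial.C α) := fun H => rfl
  have h1 : (φ Q).derivative = φ (pol e' Q) := by
    rw [chain_rule φ (by intro r; rw [hφ, LQh_C]; simp), pol, map_sum]
    refine Finset.sum_congr rfl fun j _ => ?_
    rw [map_mul, hφ (MvPolynomial.X j), hφ (MvPolynomial.C _), LQh_C, LQh_X]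
    rw [mul_comm]
    congr 1
    simp
  have h2 : (φ (pol e' Q)).eval m = MvPolynomial.eval (cv v e e' (m, α)) (pol e' Q) :=
    LQh_evalEval v e e' m α (pol e' Q)
  rw [← h2, ← h1, hφ, Polynomial.eval_eq_sum_range' (Nat.lt_succ_of_le (TD_LQ hh v e e').natDegree)]
  have h4 : (LQh v e e' Q).coeff 4 = 0 := by rw [(TD_LQ hh v e e').top, hv, Polynomial.C_0]
  simp only [Finset.sum_range_succ, Finset.sum_range_zero, h4, ← Polynomial.C_pow, Polynomial.derivative_add,
    Polynomial.derivative_mul, Polynomial.derivative_C, Polynomial.eval_add, Polynomial.eval_mul, Polynomial.eval_C]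
  simp
  ring

lemma DD_ne [IsAlgClosed k] {Q : MvPolynomial (Fin 3) k} (hQ : Irreducible Q) (hh : Q.IsHomogeneous 4)
    (v e e' : Fin 3 → k) (h : d3 v e e' ≠ 0) (hv : MvPolynomial.eval v Q = 0) (m β : k)
    (ha : ((LQh v e e' Q).coeff 3).eval m ≠ 0)
    (hβ : MvPolynomial.eval (cv v e e' (m, β)) Q = 0) (hβ' : MvPolynomial.eval (cv v e e' (m, β)) (pol v Q) ≠ 0) :
    DD (LQh v e e' Q) ≠ 0 := by
  intro h0
  have ha0 : (LQh v e e' Q).coeff 3 ≠ 0 := by intro h; rw [h] at ha; simp at ha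
  have hD := (mul_eq_zero.1 h0).resolve_left ha0
  have hfin := fin_zeros hQ hh (pol v Q) _ (cv_ne v e e' h (m, β)) hβ hβ'
  have key : ∀ x : k, ((LQh v e e' Q).coeff 3).eval x ≠ 0 → ∃ y, MvPolynomial.eval (cv v e e' (x, y)) Q = 0 ∧
      MvPolynomial.eval (cv v e e' (x, y)) (pol v Q) = 0 := by
    intro x hx
    have h1 := congrArg (Polynomial.eval x) hD
    obtain ⟨y, hy, hy'⟩ := double_root (((LQh v e e' Q).coeff 3).eval x) (((LQh v e e' Q).coeff 2).eval x)
      (((LQh v e e' Q).coeff 1).eval x) (((LQh v e e' Q).coeff 0).eval x) hx (by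
        rw [Polynomial.eval_zero] at h1
        rw [← h1]
        simp only [SS, MM, sv, mv, Polynomial.eval_sub, Polynomial.eval_add, Polynomial.eval_pow, Polynomial.eval_mul, Polynomial.eval_ofNat])
    have h4 : (rst v e e' x Q).coeff 4 = 0 := by rw [rst_coeff hh, hv]
    refine ⟨y, ?_, ?_⟩
    · refine (rst_eval v e e' x y Q).symm.trans ?_
      rw [eval_cubic _ (rst_natDegree hh ..) h4]
      simpa only [rst_coeff'] using hy
    · refine (rst_eval v e e' x y (pol v Q)).symm.trans ?_
      rw [← rst_derivative, eval_cubic' _ (rst_natDegree hh ..) h4]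
      simpa only [rst_coeff'] using hy'
  choose! y hy hy' using key
  have hinf : {x : k | ((LQh v e e' Q).coeff 3).eval x ≠ 0}.Infinite := by
    have : {x : k | ((LQh v e e' Q).coeff 3).eval x ≠ 0} = {x : k | ((LQh v e e' Q).coeff 3).IsRoot x}ᶜ := rfl
    rw [this]
    exact (Polynomial.finite_setOfPred_isRoot ha0).infinite_compl
  refine (hinf.image (f := fun x => Projectivization.mk k (cv v e e' (x, y x)) (cv_ne v e e' h _)) ?_) (hfin.subset ?_)
  · intro x hx x' hx' hxx
    have := cv_inj v e e' h _ _ ((mk_eq_iff_cr (cv_ne v e e' h _) (cv_ne v e e' h _)).1 hxx)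
    exact congrArg Prod.fst this
  · rintro _ ⟨x, hx, rfl⟩
    intro w hw hwx
    obtain ⟨u, hu⟩ := (Projectivization.mk_eq_mk_iff' k _ _ _ _).1 hwx
    rw [← hu, eval_smul_hom hh, eval_smul_hom (pol_hom v hh), hy x hx, hy' x hx]
    simp

lemma good_of_tangent [IsAlgClosed k] {Q : MvPolynomial (Fin 3) k} (hQ : Irreducible Q) (hh : Q.IsHomogeneous 4)
    (v e e' : Fin 3 → k) (h : d3 v e e' ≠ 0) (hv : MvPolynomial.eval v Q = 0) (m α β : k) (hαβ : α ≠ β)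
    (h1 : MvPolynomial.eval (cv v e e' (m, α)) Q = 0) (h2 : MvPolynomial.eval (cv v e e' (m, α)) (pol v Q) = 0)
    (h3 : MvPolynomial.eval (cv v e e' (m, β)) Q = 0) (h4 : MvPolynomial.eval (cv v e e' (m, α)) (pol e' Q) ≠ 0) :
    Good (LQh v e e' Q) := by
  have hg : rst v e e' m Q ≠ 0 := by
    apply no_line' hQ hh
    intro hc
    apply h
    have : d3 v e e' = dot (cr v (fun i => e i + m * e' i)) e' := by
      simp only [dot3, d3_eq]; simp [cr]; ring
    rw [this, hc]; simp [dot3]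
  set g := rst v e e' m Q with hgdef
  have hg4 : g.coeff 4 = 0 := by rw [hgdef, rst_coeff hh, hv]
  have hgd : g.natDegree ≤ 4 := rst_natDegree hh ..
  have e1 := (rst_eval v e e' m α Q).trans h1
  have e2 := (rst_eval v e e' m α (pol v Q)).trans h2
  have e3 := (rst_eval v e e' m β Q).trans h3
  rw [← rst_derivative, ← hgdef, eval_cubic' g hgd hg4] at e2
  rw [← hgdef, eval_cubic g hgd hg4] at e1 e3
  have hsub : β - α ≠ 0 := sub_ne_zero.2 hαβ.symm
  have hb : g.coeff 2 = - g.coeff 3 * (2 * α + β) := by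
    have : (β - α) ^ 2 * (g.coeff 2 + g.coeff 3 * (2 * α + β)) = 0 := by
      linear_combination e3 - e1 - (β - α) * e2
    have := (mul_eq_zero.1 this).resolve_left (pow_ne_zero _ hsub)
    linear_combination this
  have hc : g.coeff 1 = g.coeff 3 * (α ^ 2 + 2 * α * β) := by
    rw [hb] at e2; linear_combination e2
  have hd : g.coeff 0 = - g.coeff 3 * (α ^ 2 * β) := by
    rw [hb, hc] at e1; linear_combination e1
  have ha : g.coeff 3 ≠ 0 := by
    intro ha
    rw [ha] at hb hc hd
    apply hg
    ext j
    rw [Polynomial.coeff_zero]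
    by_cases hj : j ≤ 4
    · interval_cases j
      · simpa using hd
      · simpa using hc
      · simpa using hb
      · exact ha
      · exact hg4
    · exact Polynomial.coeff_eq_zero_of_natDegree_lt (by omega)
  refine ⟨DD_ne hQ hh v e e' h hv m β ?_ h3 ?_, not_dvd_tan _ m α β ?_ hαβ ?_ ?_ ?_ ?_⟩
  · rwa [← rst_coeff']
  · have := rst_eval v e e' m β (pol v Q)
    rw [← rst_derivative, ← hgdef, eval_cubic' g hgd hg4, hb, hc] at this
    have h5 : MvPolynomial.eval (cv v e e' (m, β)) (pol v Q) = g.coeff 3 * (β - α) ^ 2 := by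
      refine this.symm.trans ?_
      ring
    rw [h5]
    exact mul_ne_zero ha (pow_ne_zero _ hsub)
  · rwa [← rst_coeff']
  · simpa only [rst_coeff', hgdef] using hb
  · simpa only [rst_coeff', hgdef] using hc
  · simpa only [rst_coeff', hgdef] using hd
  · rwa [gamma_eq v e e' hh hv]

lemma chart_pt (a p0 e e' u : Fin 3 → k) (h : d3 p0 e e' ≠ 0) (h0 : dot a p0 = 0) (h2 : dot a e' ≠ 0)
    (hu : dot a u = 0) (hc : cr u p0 ≠ 0) :
    ∃ t y : k, t ≠ 0 ∧ u = t • cv p0 e e' (-(dot a e) / dot a e', y) := by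
  rcases chart_cases p0 e e' u h with h1 | ⟨t, ⟨x, y⟩, ht, rfl⟩
  · exfalso
    obtain ⟨x, y, rfl⟩ := span_of_dot (inf_ne p0 e e' h) h1
    have : dot a (fun i => x * e' i + y * p0 i) = x * dot a e' + y * dot a p0 := by simp only [dot3]; ring
    rw [this, h0, mul_zero, add_zero] at hu
    have hx := (mul_eq_zero.1 hu).resolve_right h2
    apply hc
    rw [hx]
    ext j; fin_cases j <;> simp [cr] <;> ring
  · have : dot a (t • cv p0 e e' (x, y)) = t * (y * dot a p0 + dot a e + x * dot a e') := by
      simp only [dot3, cv, Pi.smul_apply, smul_eq_mul]; ring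
    rw [this, h0] at hu
    have hx := (mul_eq_zero.1 hu).resolve_left ht
    refine ⟨t, y, ht, ?_⟩
    have : x = -(dot a e) / dot a e' := by
      rw [eq_div_iff h2]; linear_combination hx
    rw [this]

lemma exists_axes (a p0 : Fin 3 → k) (ha : a ≠ 0) (hp : p0 ≠ 0) (h0 : dot a p0 = 0) :
    ∃ j l : Fin 3, d3 p0 (Pi.single j 1) (Pi.single l 1) ≠ 0 ∧ dot a (Pi.single l 1) ≠ 0 := by
  by_contra hcon
  push Not at hcon
  have h := fun j l => hcon j l
  simp only [d3_eq, dot3] at h h0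
  have h01 := h 0 1
  have h10 := h 1 0
  have h02 := h 0 2
  have h20 := h 2 0
  have h12 := h 1 2
  have h21 := h 2 1
  simp at h01 h10 h02 h20 h12 h21
  have hp' : ¬ (p0 0 = 0 ∧ p0 1 = 0 ∧ p0 2 = 0) := fun ⟨x, y, z⟩ => hp (by ext i; fin_cases i <;> simp [x, y, z])
  have ha' : ¬ (a 0 = 0 ∧ a 1 = 0 ∧ a 2 = 0) := fun ⟨x, y, z⟩ => ha (by ext i; fin_cases i <;> simp [x, y, z])
  by_cases x : p0 0 = 0 <;> by_cases y : p0 1 = 0 <;> by_cases z : p0 2 = 0 <;> simp_all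

lemma tangent_data [IsAlgClosed k] {Q : MvPolynomial (Fin 3) k} (hQ : Irreducible Q) (hh : Q.IsHomogeneous 4)
    (ht : SimpleTangencyPlane 4 Q) : (∃ r0, MvPolynomial.pderiv r0 Q ≠ 0) ∧
    ∃ (p0 : Fin 3 → k) (j l : Fin 3), p0 ≠ 0 ∧ MvPolynomial.eval p0 Q = 0 ∧
      d3 p0 (Pi.single j 1) (Pi.single l 1) ≠ 0 ∧ Good (LQh p0 (Pi.single j 1) (Pi.single l 1) Q) := by
  obtain ⟨a, ha, hcard, hsm, x0, hx0, ⟨c, hc⟩, -⟩ := ht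
  have hgr := hsm x0 hx0.1 hx0.2
  refine ⟨?_, ?_⟩
  · obtain ⟨r, hr⟩ := Function.ne_iff.1 hgr
    exact ⟨r, fun h => hr (by simp [h])⟩
  have hc0 : c ≠ 0 := by rintro rfl; exact hgr (by rw [hc, zero_smul])
  have hS : ∃ x1 x2 : P2 k, x1 ≠ x0 ∧ x2 ≠ x0 ∧ x1 ≠ x2 ∧ (OnCurve Q x1 ∧ ∑ i, a i * x1.rep i = 0) ∧
      (OnCurve Q x2 ∧ ∑ i, a i * x2.rep i = 0) := by
    have h3 : {x : P2 k | OnCurve Q x ∧ ∑ i, a i * x.rep i = 0}.ncard = 3 := hcard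
    obtain ⟨x, y, z, hxy, hxz, hyz, hS⟩ := Set.ncard_eq_three.1 h3
    have hm : ∀ w, (OnCurve Q w ∧ ∑ i, a i * w.rep i = 0) ↔ w = x ∨ w = y ∨ w = z := fun w => by
      have := Set.ext_iff.1 hS w
      simpa using this
    rcases (hm x0).1 hx0 with h | h | h
    · exact ⟨y, z, by rw [h]; exact hxy.symm, by rw [h]; exact hxz.symm, hyz, (hm y).2 (by simp), (hm z).2 (by simp)⟩
    · exact ⟨x, z, by rw [h]; exact hxy, by rw [h]; exact hyz.symm, hxz, (hm x).2 (by simp), (hm z).2 (by simp)⟩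
    · exact ⟨x, y, by rw [h]; exact hxz, by rw [h]; exact hyz, hxy, (hm x).2 (by simp), (hm y).2 (by simp)⟩
  obtain ⟨x1, x2, h10, h20, h12, hx1, hx2⟩ := hS
  have hcr : ∀ x y : P2 k, x ≠ y → cr x.rep y.rep ≠ 0 := by
    intro x y hxy h
    apply hxy
    have := (mk_eq_iff_cr x.rep_nonzero y.rep_nonzero).2 h
    rwa [Projectivization.mk_rep, Projectivization.mk_rep] at this
  obtain ⟨j, l, hd, hal⟩ := exists_axes a x1.rep ha x1.rep_nonzero hx1.2
  refine ⟨x1.rep, j, l, x1.rep_nonzero, hx1.1, hd, ?_⟩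
  generalize hE1 : (Pi.single j 1 : Fin 3 → k) = e at *
  generalize hE2 : (Pi.single l 1 : Fin 3 → k) = e' at *
  obtain ⟨t, α, ht, hα⟩ := chart_pt a x1.rep e e' x0.rep hd hx1.2 hal hx0.2 (hcr _ _ h10.symm)
  obtain ⟨t', β, ht', hβ⟩ := chart_pt a x1.rep e e' x2.rep hd hx1.2 hal hx2.2 (hcr _ _ h12.symm)
  have g1 : ∀ v, MvPolynomial.eval x0.rep (pol v Q) = c * dot a v := by
    intro v
    rw [pol_eval, hc]; simp only [dot3, Pi.smul_apply, smul_eq_mul]; ring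
  refine good_of_tangent hQ hh x1.rep e e' hd hx1.1 (-dot a e / dot a e') α β ?_ ?_ ?_ ?_ ?_
  · rintro rfl
    apply hcr _ _ h20
    rw [hα, hβ]
    ext j; fin_cases j <;> simp [cr] <;> ring
  · have := hx0.1
    rw [OnCurve, hα, eval_smul_hom hh] at this
    exact (mul_eq_zero.1 this).resolve_left (pow_ne_zero _ ht)
  · have := g1 x1.rep
    rw [hα, eval_smul_hom (pol_hom _ hh), show dot a x1.rep = 0 from hx1.2, mul_zero] at this
    exact (mul_eq_zero.1 this).resolve_left (pow_ne_zero _ ht)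
  · have := hx2.1
    rw [OnCurve, hβ, eval_smul_hom hh] at this
    exact (mul_eq_zero.1 this).resolve_left (pow_ne_zero _ ht')
  · intro h
    have := g1 e'
    rw [hα, eval_smul_hom (pol_hom _ hh), h, mul_zero] at this
    exact mul_ne_zero hc0 hal this.symm
end tang
end QC

open MvPolynomial Filter
set_option linter.unusedSectionVars false
namespace QC
open scoped Polynomial
open IncidenceProb

section bad
variable {k : Type} [Field k]

lemma bad_bound [IsAlgClosed k] {Q : MvPolynomial (Fin 3) k} (hQ : Irreducible Q) (hh : Q.IsHomogeneous 4)
    (p0 e e' : Fin 3 → k) (hp0 : p0 ≠ 0) (hp : MvPolynomial.eval p0 Q = 0) (hd : d3 p0 e e' ≠ 0)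
    (hg : Good (LQh p0 e e' Q)) : ∃ B : ℕ, ∀ (K : Type) [Field K] (i : K →+* k)
      (Q0 : MvPolynomial (Fin 3) K), MvPolynomial.map i Q0 = Q →
      {x : P2 K | OnCurve Q0 x ∧ ¬ (d3 (i ∘ x.rep) e e' ≠ 0 ∧ Good (LQh (i ∘ x.rep) e e' Q))}.ncard ≤ B := by
  obtain ⟨H, hH, hHz⟩ := exists_H e e' p0 hh hg
  let L : MvPolynomial (Fin 3) k := ∑ i, MvPolynomial.C (cr e e' i) * MvPolynomial.X i
  have hL : ∀ w, MvPolynomial.eval w L = d3 w e e' := by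
    intro w
    simp [L, d3, dot, mul_comm]
  have hfin := fin_zeros hQ hh (H * L) p0 hp0 hp (by rw [map_mul, hL]; exact mul_ne_zero hH hd)
  refine ⟨_, fun K _ i Q0 hi => Set.ncard_le_ncard_of_injOn
    (fun x : P2 K => Projectivization.mk k (i ∘ x.rep) (by
      intro h
      apply x.rep_nonzero
      ext j
      have := congrFun h j
      simpa using this)) ?_ ?_ hfin⟩
  · rintro x ⟨hx, hbad⟩ w hw hwx
    obtain ⟨u, hu⟩ := (Projectivization.mk_eq_mk_iff' k _ _ _ _).1 hwx
    have hu0 : u ≠ 0 := by rintro rfl; rw [zero_smul] at hu; exact hw hu.symm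
    have h1 : MvPolynomial.eval (i ∘ x.rep) Q = 0 := by
      rw [← hi, MvPolynomial.eval_map, ← MvPolynomial.eval₂_comp, show MvPolynomial.eval x.rep Q0 = 0 from hx, map_zero]
    refine ⟨by rw [← hu, eval_smul_hom hh, h1, mul_zero], ?_⟩
    rw [map_mul, hL]
    by_cases hdx : d3 (i ∘ x.rep) e e' = 0
    · have : d3 w e e' = u * d3 (i ∘ x.rep) e e' := by
        rw [← hu]; simp only [d3_eq, Pi.smul_apply, smul_eq_mul]; ring
      rw [this, hdx]; simp
    · have hng : ¬ Good (LQh (i ∘ x.rep) e e' Q) := fun h => hbad ⟨hdx, h⟩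
      rw [hHz w, zero_mul]
      intro hG
      apply hng
      have : i ∘ x.rep = u⁻¹ • w := by rw [← hu, smul_smul, inv_mul_cancel₀ hu0, one_smul]
      rw [this]
      exact Good_smul (inv_ne_zero hu0) _ _ _ _ hG
  · intro x _ y _ hxy
    have h1 := (mk_eq_iff_cr _ _).1 hxy
    rw [map_cr] at h1
    have h2 : cr x.rep y.rep = 0 := by
      ext j
      have := congrFun h1 j
      simpa using this
    have := (mk_eq_iff_cr x.rep_nonzero y.rep_nonzero).2 h2
    rwa [Projectivization.mk_rep, Projectivization.mk_rep] at this
end bad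

section cnt
lemma card_prod_sum {K : Type} [Fintype K] (P : K → K → Prop) [∀ x y, Decidable (P x y)] :
    Nat.card {z : K × K // P z.1 z.2} = ∑ x, (Finset.univ.filter (P x)).card := by
  rw [Nat.card_eq_fintype_card, Fintype.card_subtype, Finset.card_filter, Fintype.sum_prod_type]
  exact Finset.sum_congr rfl fun x _ => (Finset.card_filter _ _).symm

variable {k : Type} [Field k] [IsAlgClosed k]

/-- number of 3-root parameters -/
noncomputable def x3 {K : Type} [Field K] [Fintype K] (v e e' : Fin 3 → K) (Q0 : MvPolynomial (Fin 3) K) : Finset K :=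
  by classical exact Finset.univ.filter fun x =>
    (Finset.univ.filter fun y : K => MvPolynomial.eval (cv v e e' (x, y)) Q0 = 0).card = 3

lemma count_point (p : ℕ) [Fact p.Prime] [CharP k p] : ∃ C : ℕ,
    ∀ (K : Type) [Field K] [Fintype K] (i : K →+* k) (Q0 : MvPolynomial (Fin 3) K) (a b : ℕ),
      Q0.IsHomogeneous 4 → Irreducible (MvPolynomial.map i Q0) →
      Fintype.card K = p ^ a * p ^ b → a ≤ b → b ≤ a + 1 → C ≤ p ^ b →
      ∀ v e e' : Fin 3 → K, MvPolynomial.eval v Q0 = 0 → d3 v e e' ≠ 0 →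
      Good (LQh (i ∘ v) (i ∘ e) (i ∘ e') (MvPolynomial.map i Q0)) →
      2 * Nat.card {x : P2 K // OnCurve Q0 x} ≤ p ^ a * p ^ b + C * p ^ b + 6 * (x3 v e e' Q0).card + 168 := by
  classical
  obtain ⟨C, hC⟩ := planar k p 2 10 le_rfl
  refine ⟨C, fun K _ _ i Q0 a b hh hQ hcard hab hba hCb v e e' hv hd hg => ?_⟩
  have : Infinite k := IsAlgClosed.instInfinite
  obtain ⟨f, hf⟩ : ∃ f, f = LQh v e e' Q0 := ⟨_, rfl⟩
  have hTD : TD 4 f (MvPolynomial.eval v Q0) := hf ▸ TD_LQ hh v e e'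
  rw [← LQh_map, ← hf] at hg
  have hcv := count_chart i hQ hh v e e' hd
  -- the quadratic
  let F : K[X][X] := Polynomial.X ^ 2 - Polynomial.C (SS f) * Polynomial.X + Polynomial.C (MM f)
  have hF : F = Polynomial.X ^ 2 + (- Polynomial.C (SS f) * Polynomial.X + Polynomial.C (MM f)) := by
    simp only [F]; ring
  have hlin : (- Polynomial.C (SS f) * Polynomial.X + Polynomial.C (MM f)).degree < ((2 : ℕ) : WithBot ℕ) := by
    rw [← Polynomial.C_neg]
    exact Polynomial.degree_linear_le.trans_lt (by norm_num)
  have hmon : F.Monic := by rw [hF]; exact Polynomial.monic_X_pow_add hlin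
  have hnat : F.natDegree = 2 := by 
    rw [hF, Polynomial.natDegree_add_eq_left_of_degree_lt (by simpa using hlin), Polynomial.natDegree_X_pow]
  have hcoef : ∀ j, (F.coeff j).natDegree ≤ 10 := by
    intro j
    simp only [F, Polynomial.coeff_add, Polynomial.coeff_sub, Polynomial.coeff_C_mul, Polynomial.coeff_X_pow,
      Polynomial.coeff_X, Polynomial.coeff_C]
    refine nd_add (nd_sub ?_ (nd_mul (n := 0) ((SS_deg hTD)) ?_ (by norm_num))) ?_
    · split_ifs <;> simp
    · split_ifs <;> simp
    · split_ifs
      · exact MM_deg hTD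
      · simp
  have hres := resF_prime ((SS f).map i) ((MM f).map i) (by
      have := hg.1
      rw [DD, SS_map, MM_map] at this
      exact right_ne_zero_of_mul this) (by
      have := hg.2
      rw [DD, EE, SS_map, MM_map] at this
      exact fun h => this (mul_dvd_mul_left _ h))
  have hFm : F.map (Polynomial.mapRingHom i) = Polynomial.X ^ 2 - Polynomial.C ((SS f).map i) * Polynomial.X +
      Polynomial.C ((MM f).map i) := by simp [F]
  rw [← hFm] at hres
  have hNF := (hC K i F a b hcard hab hba hCb hmon hnat hcoef hres.1 hres.2).2
  have h1 : ∀ x y, F.evalEval x y = y ^ 2 - sv ((f.coeff 3).eval x) ((f.coeff 2).eval x) ((f.coeff 1).eval x) ((f.coeff 0).eval x) * y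
      + mv ((f.coeff 3).eval x) ((f.coeff 2).eval x) ((f.coeff 1).eval x) ((f.coeff 0).eval x) := by
    intro x y
    simp [F, Polynomial.evalEval, SS, MM, sv, mv]
  have h2 : ∀ x y, MvPolynomial.eval (cv v e e' (x, y)) Q0 = (f.coeff 3).eval x * y ^ 3 + (f.coeff 2).eval x * y ^ 2
      + (f.coeff 1).eval x * y + (f.coeff 0).eval x := by
    intro x y
    refine (rst_eval v e e' x y Q0).symm.trans ?_
    rw [eval_cubic _ (rst_natDegree hh ..) (by rw [rst_coeff hh, hv])]
    simp only [rst_coeff', hf]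
  have hne : ∀ x, ¬ ((f.coeff 3).eval x = 0 ∧ (f.coeff 2).eval x = 0 ∧ (f.coeff 1).eval x = 0 ∧ (f.coeff 0).eval x = 0) := by
    rintro x ⟨z3, z2, z1, z0⟩
    have h0 : rst v e e' x Q0 = 0 := by
      ext j
      rw [Polynomial.coeff_zero]
      by_cases hj : j ≤ 4
      · rw [rst_coeff', ← hf]
        interval_cases j
        · exact z0
        · exact z1
        · exact z2
        · exact z3
        · rw [hTD.top, hv]; simp
      · exact Polynomial.coeff_eq_zero_of_natDegree_lt (lt_of_le_of_lt (rst_natDegree hh ..) (by omega))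
    have h0' := rst_map i v e e' x Q0
    rw [h0, Polynomial.map_zero] at h0'
    refine no_line' hQ (hh.map i) (i x) ?_ h0'.symm
    intro hc
    apply hd
    apply i.injective
    rw [map_zero, ← map_d3]
    have : d3 (i ∘ v) (i ∘ e) (i ∘ e') = dot (cr (i ∘ v) (fun j => (i ∘ e) j + i x * (i ∘ e') j)) (i ∘ e') := by
      simp only [dot3, d3_eq]; simp [cr]; ring
    rw [this, hc]; simp [dot3]
  have hsum := Finset.sum_le_sum fun (x : K) (_ : x ∈ Finset.univ) => cubic_count _ _ _ _ (hne x)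
  rw [Finset.sum_add_distrib, Finset.sum_add_distrib, Finset.sum_add_distrib, ← Finset.mul_sum] at hsum
  simp only [← h1, ← h2] at hsum
  rw [← card_prod_sum (fun x y => F.evalEval x y = 0), ← card_prod_sum (fun x y => MvPolynomial.eval (cv v e e' (x, y)) Q0 = 0)] at hsum
  have hs1 : ∑ x : K, (if (Finset.univ.filter fun y : K => MvPolynomial.eval (cv v e e' (x, y)) Q0 = 0).card = 3 then 6 else 0)
      = 6 * (x3 v e e' Q0).card := by
    rw [← Finset.sum_filter, Finset.sum_const, smul_eq_mul, mul_comm, x3]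
  have hs2 : ∑ x : K, (if (f.coeff 3).eval x * (sv ((f.coeff 3).eval x) ((f.coeff 2).eval x) ((f.coeff 1).eval x) ((f.coeff 0).eval x) ^ 2 -
      4 * mv ((f.coeff 3).eval x) ((f.coeff 2).eval x) ((f.coeff 1).eval x) ((f.coeff 0).eval x)) = 0 then 8 else 0) ≤ 160 := by
    rw [← Finset.sum_filter, Finset.sum_const, smul_eq_mul]
    have hD0 : DD f ≠ 0 := by
      intro h
      have := hg.1
      rw [DD_map, h] at this
      simp at this
    have hle : (Finset.univ.filter fun x : K => (f.coeff 3).eval x * (sv ((f.coeff 3).eval x) ((f.coeff 2).eval x) ((f.coeff 1).eval x) ((f.coeff 0).eval x) ^ 2 -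
      4 * mv ((f.coeff 3).eval x) ((f.coeff 2).eval x) ((f.coeff 1).eval x) ((f.coeff 0).eval x)) = 0) ⊆ (DD f).roots.toFinset := by
      intro x hx
      rw [Finset.mem_filter] at hx
      rw [Multiset.mem_toFinset, Polynomial.mem_roots hD0, Polynomial.IsRoot, ← hx.2]
      simp [DD, SS, MM, sv, mv]
    have h20 := (Finset.card_le_card hle).trans ((Multiset.toFinset_card_le _).trans ((Polynomial.card_roots' _).trans (DD_deg hTD)))
    omega
  rw [hs1] at hsum
  have hs3 : ∑ x : K, 2 = 2 * (p ^ a * p ^ b) := by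
    rw [Finset.sum_const, Finset.card_univ, hcard, smul_eq_mul, mul_comm]
  rw [hs3] at hsum
  have hsum' := hsum.trans (Nat.add_le_add_left hs2 _)
  have := hcv.2
  simp only [Prod.mk.eta] at hsum'
  omega
end cnt
end QC

open MvPolynomial Filter
set_option linter.unusedSectionVars false
namespace QC
open scoped Polynomial
open IncidenceProb

section rich
variable {k : Type} [Field k]

lemma finite_P2 (K : Type) [Field K] [Finite K] : Finite (P2 K) := inferInstance

lemma rich_through {K : Type} [Field K] [Fintype K] [Infinite k] (i : K →+* k) {Q0 : MvPolynomial (Fin 3) K}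
    (hQ : Irreducible (MvPolynomial.map i Q0)) (hh : Q0.IsHomogeneous 4) (v e e' : Fin 3 → K) (hv0 : v ≠ 0)
    (hv : MvPolynomial.eval v Q0 = 0) (hd : d3 v e e' ≠ 0) :
    (x3 v e e' Q0).card ≤ Nat.card {L : P2 K // Incid L (Projectivization.mk K v hv0) ∧
      Nat.card {x : P2 K // OnCurve Q0 x ∧ Incid L x} = 4} := by
  classical
  have hcr : ∀ m : K, cr v (fun j => e j + m * e' j) ≠ 0 := by
    intro m hc
    apply hd
    have : d3 v e e' = dot (cr v (fun i => e i + m * e' i)) e' := by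
      simp only [dot3, d3_eq]; simp [cr]; ring
    rw [this, hc]; simp [dot3]
  have hcard : (x3 v e e' Q0).card = ((x3 v e e' Q0 : Finset K) : Set K).ncard := (Set.ncard_coe_finset _).symm
  rw [hcard]
  refine Set.ncard_le_ncard_of_injOn (t := {L : P2 K | Incid L (Projectivization.mk K v hv0) ∧
      Nat.card {x : P2 K // OnCurve Q0 x ∧ Incid L x} = 4}) (fun m => Projectivization.mk K _ (hcr m)) ?_ ?_ (Set.toFinite _)
  · intro m hm
    have hm3 : (Finset.univ.filter fun y : K => MvPolynomial.eval (cv v e e' (m, y)) Q0 = 0).card = 3 := by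
      have := hm
      rw [Finset.mem_coe, x3, Finset.mem_filter] at this
      exact this.2
    refine ⟨(incid_mk _ _ _ _).2 (cr_dot_left _ _), le_antisymm (part3 i hQ hh _) ?_⟩
    let g : K → P2 K := fun y => Projectivization.mk K (cv v e e' (m, y)) (cv_ne v e e' hd _)
    have hgi : Function.Injective g := by
      intro y y' hy
      have := cv_inj v e e' hd _ _ ((mk_eq_iff_cr _ _).1 hy)
      exact congrArg Prod.snd this
    let A : Finset (P2 K) := insert (Projectivization.mk K v hv0)
      ((Finset.univ.filter fun y : K => MvPolynomial.eval (cv v e e' (m, y)) Q0 = 0).image g)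
    have hA : A.card = 4 := by
      rw [Finset.card_insert_of_notMem, Finset.card_image_of_injective _ hgi, hm3]
      intro hmem
      obtain ⟨y, -, hy⟩ := Finset.mem_image.1 hmem
      have h1 := (mk_eq_iff_cr _ _).1 hy.symm
      apply hcr m
      rw [← h1]
      ext j; fin_cases j <;> simp [cr, cv] <;> ring
    rw [← hA, ← Set.ncard_coe_finset]
    refine Set.ncard_le_ncard (t := {x : P2 K | OnCurve Q0 x ∧ Incid (Projectivization.mk K _ (hcr m)) x}) ?_ (Set.toFinite _)
    intro x hx
    rcases Finset.mem_insert.1 (Finset.mem_coe.1 hx) with rfl | hx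
    · exact ⟨(onCurve_mk hh _ _).2 hv, (incid_mk _ _ _ _).2 (cr_dot_left _ _)⟩
    · obtain ⟨y, hy, rfl⟩ := Finset.mem_image.1 hx
      refine ⟨(onCurve_mk hh _ _).2 (Finset.mem_filter.1 hy).2, (incid_mk _ _ _ _).2 ?_⟩
      simp only [dot3]; simp [cr, cv]; ring
  · intro m _ m' _ hmm
    have h1 := (mk_eq_iff_cr _ _).1 hmm
    obtain ⟨j, hj⟩ := Function.ne_iff.1 hv0
    have h2 : cr (cr v (fun j => e j + m * e' j)) (cr v (fun j => e j + m' * e' j)) j = (m' - m) * d3 v e e' * v j := by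
      simp only [d3_eq]
      fin_cases j <;> simp [cr] <;> ring
    rw [h1, Pi.zero_apply, eq_comm, mul_eq_zero, mul_eq_zero] at h2
    rcases h2 with (h2 | h2) | h2
    · exact (sub_eq_zero.1 h2).symm
    · exact absurd h2 hd
    · exact absurd h2 hj

lemma double_count {K : Type} [Field K] [Fintype K] (Q0 : MvPolynomial (Fin 3) K) (G : Finset (P2 K)) (m : ℕ)
    (hG : ∀ x ∈ G, OnCurve Q0 x ∧ m ≤ Nat.card {L : P2 K // Incid L x ∧
      Nat.card {x : P2 K // OnCurve Q0 x ∧ Incid L x} = 4}) :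
    G.card * m ≤ 4 * Nat.card {L : P2 K // Nat.card {x : P2 K // OnCurve Q0 x ∧ Incid L x} = 4} := by
  classical
  have : Finite (P2 K) := finite_P2 K
  have : Fintype (P2 K) := Fintype.ofFinite _
  let S : Finset (P2 K) := Finset.univ.filter fun L => Nat.card {x : P2 K // OnCurve Q0 x ∧ Incid L x} = 4
  have hS : Nat.card {L : P2 K // Nat.card {x : P2 K // OnCurve Q0 x ∧ Incid L x} = 4} = S.card := by
    rw [Nat.card_eq_fintype_card, Fintype.card_subtype]
  rw [hS]
  have h1 := Finset.sum_card_bipartiteAbove_eq_sum_card_bipartiteBelow (s := G) (t := S) (fun x L => Incid L x)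
  have h2 : G.card * m ≤ ∑ x ∈ G, (Finset.bipartiteAbove (fun x L => Incid L x) S x).card := by
    rw [← smul_eq_mul]
    refine Finset.card_nsmul_le_sum _ _ _ fun x hx => (hG x hx).2.trans (le_of_eq ?_)
    rw [Nat.card_eq_fintype_card, Fintype.card_subtype]
    congr 1
    ext L
    simp [Finset.bipartiteAbove, S, and_comm]
  have h3 : ∑ L ∈ S, (Finset.bipartiteBelow (fun x L => Incid L x) G L).card ≤ S.card * 4 := by
    rw [← smul_eq_mul]
    refine Finset.sum_le_card_nsmul _ _ _ fun L hL => ?_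
    have hL4 := (Finset.mem_filter.1 hL).2
    rw [← hL4, Nat.card_eq_fintype_card, Fintype.card_subtype]
    refine Finset.card_le_card fun x hx => ?_
    rw [Finset.bipartiteBelow, Finset.mem_filter] at hx
    exact Finset.mem_filter.2 ⟨Finset.mem_univ _, (hG x hx.1).1, hx.2⟩
  omega

lemma numer (p C1 C2 B q P N X G S m : ℕ) (hP : P * P ≤ p * q) (hT : 2 * p * (2 * C1 + C2 + 168 + B + 1) ≤ P)
    (hp : 1 ≤ p) (h2 : q ≤ N + C1 * P) (hm : m = (q + 11) / 12)
    (hX : 2 * N ≤ q + C2 * P + 6 * X + 168) : m ≤ X := by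
  have hP1 : 1 ≤ P := by nlinarith
  have h3 : p * (2 * ((2 * C1 + C2 + 168 + B + 1) * P)) ≤ p * q := by
    calc _ = (2 * p * (2 * C1 + C2 + 168 + B + 1)) * P := by ring
      _ ≤ P * P := Nat.mul_le_mul_right _ hT
      _ ≤ _ := hP
  have h4 := Nat.le_of_mul_le_mul_left h3 hp
  have h5 : (2 * C1 + C2 + 168 + B + 1) * P = 2 * (C1 * P) + C2 * P + 168 * P + B * P + P := by ring
  have : 168 ≤ 168 * P := by omega
  omega

lemma numer2 (p C1 C2 B q P N G S m : ℕ) (hP : P * P ≤ p * q) (hT : 2 * p * (2 * C1 + C2 + 168 + B + 1) ≤ P)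
    (hp : 1 ≤ p) (h2 : q ≤ N + C1 * P) (hm : m = (q + 11) / 12)
    (hG : N ≤ G + B) (hS : G * m ≤ 4 * S) : q ^ 2 ≤ 96 * S := by
  have hP1 : 1 ≤ P := by nlinarith
  have h3 : p * (2 * ((2 * C1 + C2 + 168 + B + 1) * P)) ≤ p * q := by
    calc _ = (2 * p * (2 * C1 + C2 + 168 + B + 1)) * P := by ring
      _ ≤ P * P := Nat.mul_le_mul_right _ hT
      _ ≤ _ := hP
  have h4 := Nat.le_of_mul_le_mul_left h3 hp
  have h5 : (2 * C1 + C2 + 168 + B + 1) * P = 2 * (C1 * P) + C2 * P + 168 * P + B * P + P := by ring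
  have h6 : B ≤ B * P := Nat.le_mul_of_pos_right _ hP1
  have h7 : q ≤ 2 * G := by omega
  have h8 : q ≤ 12 * m := by omega
  calc q ^ 2 = q * q := sq q
    _ ≤ (2 * G) * (12 * m) := Nat.mul_le_mul h7 h8
    _ = 24 * (G * m) := by ring
    _ ≤ 24 * (4 * S) := Nat.mul_le_mul_left _ hS
    _ = 96 * S := by ring

theorem main_K (k : Type) [Field k] [IsAlgClosed k] (p : ℕ) [Fact p.Prime] [CharP k p]
    (Q : MvPolynomial (Fin 3) k) (hQ : Irreducible Q) (hh : Q.IsHomogeneous 4) (ht : SimpleTangencyPlane 4 Q) :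
    ∃ C T : ℕ, ∀ (K : Type) [Field K] [Fintype K] (i : K →+* k) (Q0 : MvPolynomial (Fin 3) K) (a b : ℕ),
      Q0.IsHomogeneous 4 → MvPolynomial.map i Q0 = Q →
      Fintype.card K = p ^ a * p ^ b → a ≤ b → b ≤ a + 1 → T ≤ p ^ b →
      Nat.card {x : P2 K // OnCurve Q0 x} ≤ p ^ a * p ^ b + C * p ^ b ∧
      p ^ a * p ^ b ≤ Nat.card {x : P2 K // OnCurve Q0 x} + C * p ^ b ∧
      (p ^ a * p ^ b) ^ 2 ≤ 96 * Nat.card {L : P2 K // Nat.card {x : P2 K // OnCurve Q0 x ∧ Incid L x} = 4} := by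
  classical
  have hp1 : 1 ≤ p := (Fact.out : p.Prime).one_lt.le
  have : Infinite k := IsAlgClosed.instInfinite
  obtain ⟨⟨r0, hr0⟩, p0, j, l, hp0, hp, hd, hg⟩ := tangent_data hQ hh ht
  obtain ⟨C1, hC1⟩ := curve_count k p Q hQ hh r0 hr0
  obtain ⟨C2, hC2⟩ := count_point (k := k) p
  obtain ⟨B, hB⟩ := bad_bound hQ hh p0 _ _ hp0 hp hd hg
  refine ⟨C1, 2 * p * (2 * C1 + C2 + 168 + B + 1), fun K _ _ i Q0 a b hh0 hi hcard hab hba hT => ?_⟩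
  have hle : ∀ x : ℕ, x ≤ 2 * C1 + C2 + 168 + B + 1 → x ≤ p ^ b := by
    intro x hx
    have : 2 * C1 + C2 + 168 + B + 1 ≤ 2 * p * (2 * C1 + C2 + 168 + B + 1) := Nat.le_mul_of_pos_left _ (by omega)
    omega
  obtain ⟨hN1, hN2⟩ := hC1 K i Q0 a b hh0 hi hcard hab hba (hle _ (by omega))
  refine ⟨hN1, hN2, ?_⟩
  have hPP : p ^ b * p ^ b ≤ p * (p ^ a * p ^ b) := by
    have : p ^ b ≤ p ^ (a + 1) := Nat.pow_le_pow_right hp1 hba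
    calc p ^ b * p ^ b ≤ p ^ (a + 1) * p ^ b := Nat.mul_le_mul_right _ this
      _ = _ := by ring
  have : Finite (P2 K) := finite_P2 K
  have : Fintype (P2 K) := Fintype.ofFinite _
  have hs : ∀ j : Fin 3, i ∘ (Pi.single j 1 : Fin 3 → K) = Pi.single j 1 := by
    intro j; funext r; simp only [Function.comp, Pi.single_apply]; split_ifs <;> simp
  let Bd : Set (P2 K) := {x : P2 K | OnCurve Q0 x ∧ ¬ (d3 (i ∘ x.rep) (Pi.single j 1) (Pi.single l 1) ≠ 0 ∧
    Good (LQh (i ∘ x.rep) (Pi.single j 1) (Pi.single l 1) Q))}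
  let Gd : Set (P2 K) := {x : P2 K | OnCurve Q0 x ∧ (d3 (i ∘ x.rep) (Pi.single j 1) (Pi.single l 1) ≠ 0 ∧
    Good (LQh (i ∘ x.rep) (Pi.single j 1) (Pi.single l 1) Q))}
  have hGB : Nat.card {x : P2 K // OnCurve Q0 x} ≤ Gd.toFinset.card + B := by
    have h1 : Nat.card {x : P2 K // OnCurve Q0 x} = {x : P2 K | OnCurve Q0 x}.ncard := rfl
    have h2 : {x : P2 K | OnCurve Q0 x} ⊆ Gd ∪ Bd := by
      intro x hx
      by_cases hx' : (d3 (i ∘ x.rep) (Pi.single j 1) (Pi.single l 1) ≠ 0 ∧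
        Good (LQh (i ∘ x.rep) (Pi.single j 1) (Pi.single l 1) Q))
      · exact Or.inl ⟨hx, hx'⟩
      · exact Or.inr ⟨hx, hx'⟩
    have h3 : Bd.ncard ≤ B := hB K i Q0 hi
    rw [h1, ← Set.ncard_eq_toFinset_card']
    exact (Set.ncard_le_ncard h2 (Set.toFinite _)).trans ((Set.ncard_union_le _ _).trans (by omega))
  refine numer2 p C1 C2 B (p ^ a * p ^ b) (p ^ b) _ _ _ _ hPP hT hp1 hN2 rfl hGB (double_count Q0 Gd.toFinset _ ?_)
  intro x hx
  rw [Set.mem_toFinset] at hx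
  obtain ⟨hx1, hx2, hx3⟩ := hx
  refine ⟨hx1, ?_⟩
  rw [← hs j, ← hs l] at hx2 hx3
  rw [map_d3] at hx2
  have hx2' : d3 x.rep (Pi.single j 1) (Pi.single l 1) ≠ 0 := fun h => hx2 (by rw [h, map_zero])
  subst hi
  have hr := rich_through i hQ hh0 x.rep (Pi.single j 1) (Pi.single l 1) x.rep_nonzero hx1 hx2'
  simp only [Projectivization.mk_rep] at hr
  refine le_trans ?_ hr
  exact numer p C1 C2 B (p ^ a * p ^ b) (p ^ b) _ _ 0 0 _ hPP hT hp1 hN2 rfl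
    (hC2 K i Q0 a b hh0 hQ hcard hab hba (hle _ (by omega)) x.rep _ _ hx1 hx2' hx3)
end rich
end QC

namespace IncidenceProb

/-- Let `C` be an absolutely irreducible plane algebraic curve of
degree `4` over `𝔽_q` with simple tangency.  Then there are constants `c, ε > 0` (and an
`O(√q)`-constant `δ`) such that, after replacing `𝔽_q` by any sufficiently large finite
extension `𝔽_{q^N}`, the set `P = C(𝔽_{q^N})` has `c·q^N + O(√(q^N))` elements, spans at
least `ε·(q^N)²` lines containing exactly `4` points of `P` (`4`-rich lines), and
contains no five collinear points. -/
theorem statement11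
    (F : Type) [Field F] [Fintype F]
    (K : ℕ → Type) [∀ N, Field (K N)] [∀ N, Fintype (K N)] [∀ N, Algebra F (K N)]
    (hcard : ∀ N, 1 ≤ N → Fintype.card (K N) = Fintype.card F ^ N)
    (P : MvPolynomial (Fin 3) F)
    (hP0 : P ≠ 0) (hhom : P.IsHomogeneous 4)
    (hirr : Irreducible (MvPolynomial.map (algebraMap F (AlgebraicClosure F)) P))
    (htan : SimpleTangencyPlane 4
      (MvPolynomial.map (algebraMap F (AlgebraicClosure F)) P)) :
    ∃ c ε δ : ℝ, 0 < c ∧ 0 < ε ∧ ∃ N₀ : ℕ, ∀ N ≥ N₀,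
      -- `C(𝔽_{q^N})` has `c·q^N + O(√(q^N))` points
      |(Nat.card {x : P2 (K N) //
            OnCurve (MvPolynomial.map (algebraMap F (K N)) P) x} : ℝ) -
          c * (Fintype.card F : ℝ) ^ N| ≤ δ * Real.sqrt ((Fintype.card F : ℝ) ^ N) ∧
      -- there are at least `ε·(q^N)²` 4-rich lines
      ε * ((Fintype.card F : ℝ) ^ N) ^ 2 ≤
        (Nat.card {L : P2 (K N) // Nat.card {x : P2 (K N) //
            OnCurve (MvPolynomial.map (algebraMap F (K N)) P) x ∧ Incid L x} = 4} : ℝ) ∧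
      -- no five points of `C(𝔽_{q^N})` are collinear
      ∀ L : P2 (K N), Nat.card {x : P2 (K N) //
          OnCurve (MvPolynomial.map (algebraMap F (K N)) P) x ∧ Incid L x} ≤ 4 := by
  classical
  have hp : CharP F (ringChar F) := ringChar.charP F
  obtain ⟨n, hpp, hcF⟩ := FiniteField.card F (ringChar F)
  generalize ringChar F = p at *
  have : Fact p.Prime := ⟨hpp⟩
  have : CharP (AlgebraicClosure F) p := charP_of_injective_algebraMap (algebraMap F (AlgebraicClosure F)).injective p
  obtain ⟨C, T, hCT⟩ := QC.main_K (AlgebraicClosure F) p _ hirr (hhom.map _) htan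
  refine ⟨1, 1 / 96, C * p, one_pos, by norm_num, 2 * T + 1, fun N hN => ?_⟩
  have halg : Algebra.IsAlgebraic F (K N) := by
    have : Module.Finite F (K N) := Module.Finite.of_finite
    infer_instance
  let ι : K N →ₐ[F] AlgebraicClosure F := IsAlgClosed.lift
  have hmap : MvPolynomial.map (ι : K N →+* AlgebraicClosure F) (MvPolynomial.map (algebraMap F (K N)) P) =
      MvPolynomial.map (algebraMap F (AlgebraicClosure F)) P := by
    rw [MvPolynomial.map_map, AlgHom.comp_algebraMap]
  have hn : 1 ≤ (n : ℕ) := n.2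
  have hNn : N ≤ n * N := Nat.le_mul_of_pos_left _ hn
  have hq : Fintype.card F ^ N = p ^ (n * N / 2) * p ^ ((n * N + 1) / 2) := by
    rw [hcF, ← pow_mul, ← pow_add]; congr 1; omega
  have hT : T ≤ p ^ (((n : ℕ) * N + 1) / 2) := by
    have h1 : ((n : ℕ) * N + 1) / 2 < p ^ (((n : ℕ) * N + 1) / 2) := Nat.lt_pow_self hpp.one_lt
    omega
  obtain ⟨h1, h2, h3⟩ := hCT (K N) (ι : K N →+* AlgebraicClosure F) (MvPolynomial.map (algebraMap F (K N)) P)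
    _ _ (hhom.map _) hmap ((hcard N (by omega)).trans hq) (by omega) (by omega) hT
  have hPP : p ^ (((n : ℕ) * N + 1) / 2) * p ^ (((n : ℕ) * N + 1) / 2) ≤ p ^ 2 * Fintype.card F ^ N := by
    rw [hq, ← pow_add, ← pow_add, ← pow_add]
    exact Nat.pow_le_pow_right hpp.one_lt.le (by omega)
  rw [← hq] at h1 h2 h3
  generalize p ^ (((n : ℕ) * N + 1) / 2) = PP at *
  have hsq : (PP : ℝ) ≤ p * Real.sqrt ((Fintype.card F : ℝ) ^ N) := by
    have h4 : (PP : ℝ) * PP ≤ p ^ 2 * (Fintype.card F : ℝ) ^ N := by exact_mod_cast hPP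
    have h5 : (0 : ℝ) ≤ (Fintype.card F : ℝ) ^ N := by positivity
    refine abs_le_of_sq_le_sq' ?_ (by positivity) |>.2
    rw [mul_pow, Real.sq_sqrt h5, sq]
    exact h4
  refine ⟨?_, ?_, ?_⟩
  · have h1' : (Nat.card {x : P2 (K N) // OnCurve (MvPolynomial.map (algebraMap F (K N)) P) x} : ℝ) ≤
        (Fintype.card F : ℝ) ^ N + C * PP := by exact_mod_cast h1
    have h2' : (Fintype.card F : ℝ) ^ N ≤
        (Nat.card {x : P2 (K N) // OnCurve (MvPolynomial.map (algebraMap F (K N)) P) x} : ℝ) + C * PP := by exact_mod_cast h2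
    have h6 : (C : ℝ) * PP ≤ C * p * Real.sqrt ((Fintype.card F : ℝ) ^ N) := by
      rw [mul_assoc]; exact mul_le_mul_of_nonneg_left hsq (by positivity)
    rw [abs_le]
    constructor <;> linarith
  · have h3' : ((Fintype.card F : ℝ) ^ N) ^ 2 ≤ 96 * (Nat.card {L : P2 (K N) // Nat.card {x : P2 (K N) //
            OnCurve (MvPolynomial.map (algebraMap F (K N)) P) x ∧ Incid L x} = 4} : ℝ) := by exact_mod_cast h3
    linarith
  · intro L
    exact QC.part3 (ι : K N →+* AlgebraicClosure F) (by rw [hmap]; exact hirr) (hhom.map _) L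

end IncidenceProb
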